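/- arXiv:math/0610345 — 3 statements merged into one kernel-verified Lean document; each statement's English description precedes it below -/
import Mathlib

section
/- Let G be a finite connected regular undirected graph and let κ > 0 be a constant such that the maximal hitting time of the simple random walk on G satisfies H(G) ≤ κ|G|. Then there exists a constant c = c(κ), depending only on κ, such that the L² mixing time of the lamplighter random walk on G^◊ satisfies τ₂(G^◊) ≤ c·|G|·(T_rel(G) + log|G|). -/
open Finset
open scoped Classical

namespace Paper

variable {X : Type} [Fintype X] [DecidableEq X]

/-- `P` is a stochastic matrix. -/
def IsStoch (P : Matrix X X ℝ) : Prop :=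
  (∀ x y, 0 ≤ P x y) ∧ ∀ x, ∑ y, P x y = 1

/-- The uniform distribution is stationary for `P` (all columns sum to 1). -/
def UnifStationary (P : Matrix X X ℝ) : Prop := ∀ y, ∑ x, P x y = 1

/-- Irreducibility of the chain. -/
def Irred (P : Matrix X X ℝ) : Prop := ∀ x y, ∃ n, 0 < (P ^ n) x y

/-- Probability of a trajectory `ω 0, ω 1, …, ω n` under initial distribution `μ`. -/
noncomputable def pathProb (P : Matrix X X ℝ) (μ : X → ℝ) {n : ℕ}
    (ω : Fin (n + 1) → X) : ℝ :=
  μ (ω 0) * ∏ i : Fin n, P (ω i.castSucc) (ω i.succ)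

/-- Probability of an event determined by the trajectory up to time `n`. -/
noncomputable def prPath (P : Matrix X X ℝ) (μ : X → ℝ) (n : ℕ)
    (E : (Fin (n + 1) → X) → Prop) : ℝ :=
  ∑ ω : Fin (n + 1) → X, if E ω then pathProb P μ ω else 0

/-- Expectation of a functional of the trajectory up to time `n`. -/
noncomputable def expPath (P : Matrix X X ℝ) (μ : X → ℝ) (n : ℕ)
    (f : (Fin (n + 1) → X) → ℝ) : ℝ :=
  ∑ ω : Fin (n + 1) → X, pathProb P μ ω * f ω

/-- Point mass at `x`. -/
def delta (x : X) : X → ℝ := fun z => if z = x then 1 else 0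

/-- Expected hitting time `E_x[T_y]`, via `E[T] = ∑_{n ≥ 0} Pr(T > n)`. -/
noncomputable def hitExp (P : Matrix X X ℝ) (x y : X) : ℝ :=
  (∑' n : ℕ, ENNReal.ofReal (prPath P (delta x) n (fun ω => ∀ i, ω i ≠ y))).toReal

/-- Maximal expected hitting time `H = max_{x,y} E_x[T_y]`. -/
noncomputable def maxHit (P : Matrix X X ℝ) : ℝ := ⨆ x, ⨆ y, hitExp P x y

/-- Relaxation time: `max 1/(1-|λ|)` over nontrivial eigenvalues `λ` of `P`. -/
noncomputable def Trel (P : Matrix X X ℝ) : ℝ :=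
  sSup ((fun l : ℝ => 1 / (1 - |l|)) '' (spectrum ℝ P \ {1}))

/-- The set of states not visited by the trajectory `ω` (up to its time horizon). -/
noncomputable def unvisited {n : ℕ} (ω : Fin (n + 1) → X) : Finset X :=
  Finset.univ.filter fun x => ∀ i, ω i ≠ x

/-- `Pr_x(T⁺_x ≥ s)`: the chain started at `x` does not return to `x`
at any time `i` with `1 ≤ i < s`. -/
noncomputable def prReturnGE (P : Matrix X X ℝ) (x : X) (s : ℝ) : ℝ :=
  prPath P (delta x) ⌈s⌉₊
    (fun ω => ∀ i : Fin (⌈s⌉₊ + 1), 1 ≤ (i : ℕ) → ((i : ℕ) : ℝ) < s → ω i ≠ x)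

/-- Separation distance at time `n` from state `x`. -/
noncomputable def sep (P : Matrix X X ℝ) (pi : X → ℝ) (x : X) (n : ℕ) : ℝ :=
  ⨆ y, (1 - (P ^ n) x y / pi y)

/-- Relative entropy `D(μ ‖ pi)` (with `0 log 0 = 0`). -/
noncomputable def relEnt (μ pi : X → ℝ) : ℝ := ∑ x, μ x * Real.log (μ x / pi x)

/-- Total variation distance `d_tv(μ, pi) = ∑_{y : μ y < pi y} (pi y - μ y)`. -/
noncomputable def dtv (μ pi : X → ℝ) : ℝ :=
  ∑ y ∈ Finset.univ.filter (fun y => μ y < pi y), (pi y - μ y)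

/-- Entropy decay (mixing) time. -/
noncomputable def tauEnt (P : Matrix X X ℝ) (pi : X → ℝ) (ε : ℝ) : ℕ :=
  sInf {n' | ∀ n ≥ n', ∀ x, relEnt ((P ^ n) x) pi ≤ ε}

/-- Separation mixing time. -/
noncomputable def tauSep (P : Matrix X X ℝ) (pi : X → ℝ) (ε : ℝ) : ℕ :=
  sInf {n' | ∀ n ≥ n', ∀ x, sep P pi x n ≤ ε}

/-- Total variation mixing time. -/
noncomputable def tauTV (P : Matrix X X ℝ) (pi : X → ℝ) (ε : ℝ) : ℕ :=
  sInf {n' | ∀ n ≥ n', ∀ x, dtv ((P ^ n) x) pi ≤ ε}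

/-- `L²(pi)` distance of `Pᵗ(x,·)` from `pi`. -/
noncomputable def chiDist (P : Matrix X X ℝ) (pi : X → ℝ) (t : ℕ) (x : X) : ℝ :=
  Real.sqrt (∑ y, ((P ^ t) x y / pi y - 1) ^ 2 * pi y)

/-- `L²` mixing time. -/
noncomputable def tau2 (P : Matrix X X ℝ) (pi : X → ℝ) : ℕ :=
  sInf {t | ∀ x, chiDist P pi t x ≤ 1 / 4}

/-- Uniform distribution on a finite type. -/
noncomputable def unif (Y : Type) [Fintype Y] : Y → ℝ := fun _ => (Fintype.card Y : ℝ)⁻¹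

/-- The `m`-state lamplighter chain over a base chain `Pb`:
the lamp at the current position is randomized, the lamplighter moves one step
of the base chain, and the lamp at the new position is randomized. -/
noncomputable def lampChain {V : Type} [Fintype V] [DecidableEq V]
    (Pb : Matrix V V ℝ) (m : ℕ) :
    Matrix ((V → Fin m) × V) ((V → Fin m) × V) ℝ :=
  fun p q =>
    if ∀ z, z ≠ p.2 → z ≠ q.2 → q.1 z = p.1 z then
      Pb p.2 q.2 * ((m : ℝ)⁻¹) ^ (({p.2, q.2} : Finset V).card)
    else 0

/-- Simple random walk on a `d`-regular graph. -/
noncomputable def srw {V : Type} [Fintype V] [DecidableEq V]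
    (G : SimpleGraph V) (d : ℕ) : Matrix V V ℝ :=
  fun x y => if G.Adj x y then (d : ℝ)⁻¹ else 0

section Comb
variable {V I : Type} [Fintype V] [DecidableEq V] [Fintype I]

noncomputable def avw (w : I → ℝ) (B : I → Finset V) (S : Finset V) : ℝ :=
  1 / 2 + 1 / 2 * ∑ i, w i * (if Disjoint (B i) S then 1 else 0)

noncomputable def FF (w : I → ℝ) (B : I → Finset V) (j : ℕ) (U : Finset V) : ℝ :=
  ∑ S ∈ U.powerset, avw w B S ^ j

lemma FF_succ (w : I → ℝ) (B : I → Finset V) (j : ℕ) (U : Finset V) :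
    FF w B (j + 1) U = 1 / 2 * FF w B j U + 1 / 2 * ∑ i, w i * FF w B j (U \ B i) := by
  have h : ∀ i, FF w B j (U \ B i) =
      ∑ S ∈ U.powerset, (if Disjoint (B i) S then 1 else 0) * avw w B S ^ j := by
    intro i
    unfold FF
    simp_rw [ite_mul, one_mul, zero_mul]
    rw [← Finset.sum_filter]
    apply Finset.sum_congr _ (fun _ _ => rfl)
    ext S
    simp only [Finset.mem_powerset, Finset.mem_filter, Finset.subset_sdiff]
    rw [disjoint_comm]
  have h2 : ∑ i, w i * FF w B j (U \ B i) = ∑ S ∈ U.powerset,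
      (∑ i, w i * (if Disjoint (B i) S then 1 else 0)) * avw w B S ^ j := by
    simp_rw [h, Finset.mul_sum]
    rw [Finset.sum_comm]
    apply Finset.sum_congr rfl
    intro S _
    rw [Finset.sum_mul]
    apply Finset.sum_congr rfl
    intro i _
    ring
  rw [h2]
  unfold FF
  rw [Finset.mul_sum, Finset.mul_sum, ← Finset.sum_add_distrib]
  apply Finset.sum_congr rfl
  intro S _
  rw [pow_succ']
  conv_lhs => enter [1]; rw [avw]
  ring

lemma exp_conv (x l N : ℝ) (hl : 0 < l) (hN0 : 0 ≤ N) (hN : N ≤ l) :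
    Real.exp (-(x * N)) ≤ 1 - N / l * (1 - Real.exp (-(l * x))) := by
  have ha : 0 ≤ 1 - N / l := by rw [sub_nonneg, div_le_one hl]; exact hN
  have hb : 0 ≤ N / l := by positivity
  have h := convexOn_exp.2 (Set.mem_univ (0:ℝ)) (Set.mem_univ (-(l * x))) ha hb (by ring)
  simp only [smul_eq_mul, mul_zero, zero_add, Real.exp_zero] at h
  have e : N / l * -(l * x) = -(x * N) := by field_simp
  rw [e] at h
  linarith

lemma FF_step (w : I → ℝ) (B : I → Finset V) (hw : ∀ i, 0 ≤ w i) (hs : ∑ i, w i = 1)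
    (l α : ℝ) (hl : 0 < l) (hB : ∀ i, ((B i).card : ℝ) ≤ l)
    (hα : ∀ y, α ≤ ∑ i, w i * (if y ∈ B i then 1 else 0))
    (j : ℕ) (x x' : ℝ) (hx : 0 ≤ x) (hF : ∀ U, FF w B j U ≤ Real.exp (x * U.card))
    (hx' : x - α / (2 * l) * (1 - Real.exp (-(l * x))) ≤ x') (U : Finset V) :
    FF w B (j + 1) U ≤ Real.exp (x' * U.card) := by
  rw [FF_succ]
  have he : 0 ≤ 1 - Real.exp (-(l * x)) := by
    rw [sub_nonneg, Real.exp_le_one_iff]; nlinarith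
  have h1 : ∀ i, FF w B j (U \ B i) ≤ Real.exp (x * U.card) *
      (1 - ((U ∩ B i).card : ℝ) / l * (1 - Real.exp (-(l * x)))) := by
    intro i
    refine (hF _).trans ?_
    have hc : ((U \ B i).card : ℝ) = U.card - (U ∩ B i).card := by
      rw [eq_sub_iff_add_eq]; exact_mod_cast Finset.card_sdiff_add_card_inter U (B i)
    rw [hc, mul_sub, sub_eq_add_neg, Real.exp_add]
    apply mul_le_mul_of_nonneg_left _ (Real.exp_pos _).le
    apply exp_conv _ _ _ hl (by positivity)
    refine le_trans ?_ (hB i)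
    exact_mod_cast Finset.card_le_card Finset.inter_subset_right
  have h2 : α * U.card ≤ ∑ i, w i * ((U ∩ B i).card : ℝ) := by
    have : ∀ i, ((U ∩ B i).card : ℝ) = ∑ y ∈ U, (if y ∈ B i then 1 else 0) := by
      intro i
      rw [Finset.sum_boole]
      congr 2
    simp_rw [this, Finset.mul_sum]
    rw [Finset.sum_comm]
    calc α * U.card = ∑ y ∈ U, α := by simp [mul_comm]
      _ ≤ _ := Finset.sum_le_sum fun y _ => hα y
  have h3 : ∑ i, w i * FF w B j (U \ B i) ≤ Real.exp (x * U.card) *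
      (1 - α * U.card / l * (1 - Real.exp (-(l * x)))) := by
    calc _ ≤ ∑ i, w i * (Real.exp (x * U.card) *
          (1 - ((U ∩ B i).card : ℝ) / l * (1 - Real.exp (-(l * x))))) :=
          Finset.sum_le_sum fun i _ => mul_le_mul_of_nonneg_left (h1 i) (hw i)
      _ = Real.exp (x * U.card) * (∑ i, w i -
          (∑ i, w i * ((U ∩ B i).card : ℝ)) / l * (1 - Real.exp (-(l * x)))) := by
          rw [Finset.sum_div, Finset.sum_mul, ← Finset.sum_sub_distrib, Finset.mul_sum]
          apply Finset.sum_congr rfl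
          intro i _; ring
      _ ≤ _ := by
          rw [hs]
          apply mul_le_mul_of_nonneg_left _ (Real.exp_pos _).le
          gcongr
  calc _ ≤ 1 / 2 * Real.exp (x * U.card) + 1 / 2 * (Real.exp (x * U.card) *
      (1 - α * U.card / l * (1 - Real.exp (-(l * x))))) := by
        have := hF U
        linarith
    _ = Real.exp (x * U.card) * (1 - α / (2 * l) * (1 - Real.exp (-(l * x))) * U.card) := by
        field_simp; ring
    _ ≤ Real.exp (x * U.card) * Real.exp (- (α / (2 * l) * (1 - Real.exp (-(l * x))) * U.card)) := by
        apply mul_le_mul_of_nonneg_left _ (Real.exp_pos _).le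
        have := Real.add_one_le_exp (- (α / (2 * l) * (1 - Real.exp (-(l * x))) * U.card))
        linarith
    _ = Real.exp ((x - α / (2 * l) * (1 - Real.exp (-(l * x)))) * U.card) := by
        rw [← Real.exp_add]; congr 1; ring
    _ ≤ _ := by
        rw [Real.exp_le_exp]; gcongr

lemma one_sub_exp_ge (y : ℝ) (hy : 0 ≤ y) (hy1 : y ≤ 1) : y / 2 ≤ 1 - Real.exp (-y) := by
  have h := exp_conv y 1 1 one_pos zero_le_one le_rfl
  have h1 := exp_conv 1 1 y one_pos hy hy1
  have h2 : Real.exp (-1) < 1 / 2 := by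
    have := Real.exp_neg_one_lt_d9; linarith
  simp only [one_mul, mul_one, div_one] at h1
  nlinarith

lemma FF_phase1 (w : I → ℝ) (B : I → Finset V) (hw : ∀ i, 0 ≤ w i) (hs : ∑ i, w i = 1)
    (l α : ℝ) (hl : 1 ≤ l) (hB : ∀ i, ((B i).card : ℝ) ≤ l) (hα0 : 0 ≤ α)
    (hα : ∀ y, α ≤ ∑ i, w i * (if y ∈ B i then 1 else 0)) (j : ℕ) (U : Finset V) :
    FF w B j U ≤ Real.exp (max (1 / l) (1 - j * (α / (4 * l))) * U.card) := by
  induction j generalizing U with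
  | zero =>
    simp only [FF, pow_zero, Finset.sum_const, Finset.card_powerset, nsmul_eq_mul, mul_one]
    push_cast
    have h2 : (2:ℝ) ≤ Real.exp 1 := by have := Real.exp_one_gt_d9; linarith
    calc (2:ℝ) ^ U.card ≤ Real.exp 1 ^ U.card := by gcongr
      _ = Real.exp (1 * U.card) := by rw [← Real.exp_nat_mul]; ring_nf
      _ ≤ _ := by
        rw [Real.exp_le_exp]; gcongr
        simp
  | succ j ih =>
    have hl0 : 0 < l := by linarith
    apply FF_step w B hw hs l α hl0 hB hα j _ _ _ ih
    · set x := max (1 / l) (1 - j * (α / (4 * l))) with hx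
      have hxl : 1 ≤ l * x := by
        have : 1 / l ≤ x := le_max_left _ _
        rw [div_le_iff₀ hl0] at this; linarith
      have hee : 1 / 2 ≤ 1 - Real.exp (-(l * x)) := by
        have := one_sub_exp_ge 1 zero_le_one le_rfl
        have h3 : Real.exp (-(l * x)) ≤ Real.exp (-1) := by
          rw [Real.exp_le_exp]; linarith
        linarith
      have hd : α / (4 * l) ≤ α / (2 * l) * (1 - Real.exp (-(l * x))) := by
        calc α / (4 * l) = α / (2 * l) * (1 / 2) := by field_simp; norm_num
          _ ≤ _ := by gcongr
      have hp : 0 ≤ α / (4 * l) := by positivity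
      rw [sub_le_iff_le_add, hx]
      apply max_le
      · have := le_max_left (1 / l) (1 - ((j + 1 : ℕ) : ℝ) * (α / (4 * l)))
        linarith
      · have := le_max_right (1 / l) (1 - ((j + 1 : ℕ) : ℝ) * (α / (4 * l)))
        push_cast at this ⊢
        linarith
    · exact le_max_of_le_left (by positivity)

lemma FF_phase2 (w : I → ℝ) (B : I → Finset V) (hw : ∀ i, 0 ≤ w i) (hs : ∑ i, w i = 1)
    (l α : ℝ) (hl : 1 ≤ l) (hB : ∀ i, ((B i).card : ℝ) ≤ l) (hα0 : 0 ≤ α)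
    (hα : ∀ y, α ≤ ∑ i, w i * (if y ∈ B i then 1 else 0)) (J₁ : ℕ)
    (hJ : 4 * l / α ≤ J₁) (hαp : 0 < α) (hα1 : α ≤ 1) (j : ℕ) (U : Finset V) :
    FF w B (J₁ + j) U ≤ Real.exp (1 / l * (1 - α / 4) ^ j * U.card) := by
  have hl0 : 0 < l := by linarith
  induction j generalizing U with
  | zero =>
    have := FF_phase1 w B hw hs l α hl hB hα0 hα J₁ U
    rw [max_eq_left] at this
    · simpa using this
    · have h1 : 1 ≤ J₁ * (α / (4 * l)) := by
        rw [div_le_iff₀ hαp] at hJ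
        rw [mul_div_assoc', le_div_iff₀ (by positivity)]; linarith
      have : 0 ≤ 1 / l := by positivity
      linarith
  | succ j ih =>
    have h4 : 0 ≤ 1 - α / 4 := by linarith
    have hp : (1 - α / 4) ^ j ≤ 1 := pow_le_one₀ h4 (by linarith)
    rw [← add_assoc]
    apply FF_step w B hw hs l α hl0 hB hα _ _ _ (by positivity) ih
    have e : l * (1 / l * (1 - α / 4) ^ j) = (1 - α / 4) ^ j := by field_simp
    rw [e]
    have := one_sub_exp_ge _ (pow_nonneg h4 j) hp
    have h5 : α / (2 * l) * ((1 - α / 4) ^ j / 2) ≤ α / (2 * l) * (1 - Real.exp (-(1 - α / 4) ^ j)) := by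
      gcongr
    have e2 : 1 / l * (1 - α / 4) ^ (j + 1) = 1 / l * (1 - α / 4) ^ j - α / (2 * l) * ((1 - α / 4) ^ j / 2) := by
      rw [pow_succ]; field_simp; ring
    rw [e2]; linarith

/-- The combinatorial conclusion. -/
lemma FF_final (w : I → ℝ) (B : I → Finset V) (hw : ∀ i, 0 ≤ w i) (hs : ∑ i, w i = 1)
    (l α : ℝ) (hl : 1 ≤ l) (hB : ∀ i, ((B i).card : ℝ) ≤ l) (hαp : 0 < α) (hα1 : α ≤ 1)
    (hα : ∀ y, α ≤ ∑ i, w i * (if y ∈ B i then 1 else 0)) (J₁ J₂ : ℕ)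
    (hJ : 4 * l / α ≤ J₁) (n : ℝ) (hn : n = Fintype.card V) (hn2 : 2 ≤ n)
    (hJ2 : 4 / α * (8 * Real.log n) ≤ J₂) :
    n * ∑ S ∈ Finset.univ.filter (fun S : Finset V => S.Nonempty), avw w B S ^ (J₁ + J₂)
      ≤ 1 / 32 := by
  have h := FF_phase2 w B hw hs l α hl hB hαp.le hα J₁ hJ hαp hα1 J₂ Finset.univ
  have h1 : (1 - α / 4) ^ J₂ ≤ 1 / n ^ 8 := by
    have hn0 : 0 < n := by linarith
    calc (1 - α / 4) ^ J₂ ≤ Real.exp (-(α / 4)) ^ J₂ := by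
          have := Real.add_one_le_exp (-(α/4))
          apply pow_le_pow_left₀ <;> linarith
      _ = Real.exp (-(J₂ * (α / 4))) := by rw [← Real.exp_nat_mul]; ring_nf
      _ ≤ Real.exp (-(8 * Real.log n)) := by
          rw [Real.exp_le_exp, neg_le_neg_iff]
          rw [div_mul_eq_mul_div, div_le_iff₀ hαp] at hJ2
          linarith
      _ = 1 / n ^ 8 := by
          rw [Real.exp_neg, one_div]; congr 1
          rw [show (8:ℝ) * Real.log n = ((8:ℕ):ℝ) * Real.log n by norm_num, Real.exp_nat_mul, Real.exp_log hn0]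
  have hn0 : 0 < n := by linarith
  have hsplit : FF w B (J₁ + J₂) Finset.univ = 1 +
      ∑ S ∈ Finset.univ.filter (fun S : Finset V => S.Nonempty), avw w B S ^ (J₁ + J₂) := by
    unfold FF
    rw [Finset.powerset_univ, ← Finset.sum_filter_add_sum_filter_not Finset.univ (fun S : Finset V => S.Nonempty), add_comm]
    congr 1
    have : Finset.univ.filter (fun S : Finset V => ¬ S.Nonempty) = {∅} := by
      ext S; simp
    rw [this, Finset.sum_singleton]
    have : avw w B ∅ = 1 := by
      simp [avw, hs]; norm_num
    rw [this, one_pow]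
  set z := 1 / l * (1 - α / 4) ^ J₂ * ((Finset.univ : Finset V).card : ℝ) with hz
  have hc : ((Finset.univ : Finset V).card : ℝ) = n := by rw [hn]; simp
  have hz0 : 0 ≤ z := by
    have : 0 ≤ 1 - α / 4 := by linarith
    positivity
  have hz1 : z ≤ 1 / n ^ 7 := by
    calc z ≤ 1 * (1 / n ^ 8) * n := by
          rw [hz, hc]
          have : 0 ≤ 1 - α / 4 := by linarith
          gcongr
          rw [div_le_one (by linarith)]; exact hl
      _ = 1 / n ^ 7 := by field_simp
  have hn7 : (128:ℝ) ≤ n ^ 7 := by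
    calc (128:ℝ) = 2 ^ 7 := by norm_num
      _ ≤ _ := by gcongr
  have hn6 : (64:ℝ) ≤ n ^ 6 := by
    calc (64:ℝ) = 2 ^ 6 := by norm_num
      _ ≤ _ := by gcongr
  have hz2 : z ≤ 1 / 128 := hz1.trans (by gcongr)
  have hexp : Real.exp z ≤ 1 + 2 * z := by
    have := Real.abs_exp_sub_one_le (x := z) (by rw [abs_of_nonneg hz0]; linarith)
    rw [abs_of_nonneg hz0] at this
    have := (abs_le.1 this).2
    linarith
  have hsum : ∑ S ∈ Finset.univ.filter (fun S : Finset V => S.Nonempty), avw w B S ^ (J₁ + J₂) ≤ 2 * z := by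
    linarith
  calc _ ≤ n * (2 * (1 / n ^ 7)) := by gcongr; linarith
    _ = 2 / n ^ 6 := by field_simp
    _ ≤ 2 / 64 := by gcongr
    _ = _ := by norm_num
end Comb
section Lamp
variable {V : Type} [Fintype V] [DecidableEq V]

/-- killed matrix -/
noncomputable def kil (P : Matrix V V ℝ) (S : Finset V) : Matrix V V ℝ :=
  fun x y => if x ∈ S ∨ y ∈ S then 0 else P x y

noncomputable def sg (b : Fin 2) : ℝ := if b = 0 then 1 else -1

lemma sg_mul (a b : Fin 2) : sg a * sg b = if a = b then 1 else -1 := by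
  fin_cases a <;> fin_cases b <;> simp [sg]

noncomputable def chr (S : Finset V) (η : V → Fin 2) : ℝ := ∏ z ∈ S, sg (η z)

lemma chr_orth (η ξ : V → Fin 2) :
    ∑ S : Finset V, chr S η * chr S ξ = if η = ξ then 2 ^ Fintype.card V else 0 := by
  have h : ∑ S : Finset V, chr S η * chr S ξ = ∏ z : V, (1 + sg (η z) * sg (ξ z)) := by
    rw [Finset.prod_one_add, Finset.powerset_univ]
    apply Finset.sum_congr rfl
    intro S _
    rw [chr, chr, Finset.prod_mul_distrib]
  rw [h]
  split_ifs with e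
  · subst e
    simp only [sg_mul, if_true]
    norm_num
  · obtain ⟨z, hz⟩ := Function.ne_iff.1 e
    apply Finset.prod_eq_zero (Finset.mem_univ z)
    rw [sg_mul, if_neg hz]; norm_num

lemma parseval (h : (V → Fin 2) → ℝ) :
    ∑ S : Finset V, (∑ η, h η * chr S η) ^ 2 = 2 ^ Fintype.card V * ∑ η, h η ^ 2 := by
  have : ∀ S : Finset V, (∑ η, h η * chr S η) ^ 2 =
      ∑ η, ∑ ξ, h η * h ξ * (chr S η * chr S ξ) := by
    intro S
    rw [sq, Finset.sum_mul_sum]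
    apply Finset.sum_congr rfl; intro η _
    apply Finset.sum_congr rfl; intro ξ _
    ring
  simp_rw [this]
  rw [Finset.sum_comm, Finset.mul_sum]
  apply Finset.sum_congr rfl; intro η _
  rw [Finset.sum_comm]
  simp_rw [← Finset.mul_sum, chr_orth]
  simp only [mul_ite, mul_zero, Finset.sum_ite_eq, Finset.mem_univ, if_true]
  ring

lemma lamp_chr (P : Matrix V V ℝ) (S : Finset V) (η : V → Fin 2) (x y : V) :
    ∑ ξ : V → Fin 2, lampChain P 2 (η, x) (ξ, y) * chr S ξ = chr S η * kil P S x y := by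
  have h1 : ∀ ξ : V → Fin 2, lampChain P 2 (η, x) (ξ, y) * chr S ξ =
      P x y * ∏ z : V, ((if z = x ∨ z = y then (1/2 : ℝ) else if ξ z = η z then 1 else 0) *
        (if z ∈ S then sg (ξ z) else 1)) := by
    intro ξ
    rw [Finset.prod_mul_distrib, ← mul_assoc]
    congr 1
    · unfold lampChain
      simp only
      split_ifs with hc
      · congr 1
        have : ∀ z : V, (if z = x ∨ z = y then (1/2 : ℝ) else if ξ z = η z then 1 else 0) =
            if z ∈ ({x, y} : Finset V) then (1/2 : ℝ) else 1 := by
          intro z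
          by_cases hz : z = x ∨ z = y
          · simp [hz]
          · have := hc z (fun h => hz (Or.inl h)) (fun h => hz (Or.inr h))
            simp [hz, this]
        rw [Finset.prod_congr rfl (fun z _ => this z), Finset.prod_ite_mem, Finset.univ_inter,
          Finset.prod_const]
        norm_num
      · push Not at hc
        obtain ⟨z, hzx, hzy, hz⟩ := hc
        rw [Finset.prod_eq_zero (Finset.mem_univ z), mul_zero]
        simp [hzx, hzy, hz]
    · rw [chr, Finset.prod_ite_mem, Finset.univ_inter]
  simp_rw [h1]
  rw [← Finset.mul_sum]
  have h2 := Finset.prod_univ_sum (ι := V) (κ := fun _ => Fin 2) (fun _ => Finset.univ)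
    (fun z b => ((if z = x ∨ z = y then (1/2 : ℝ) else if b = η z then 1 else 0) *
        (if z ∈ S then sg b else 1)))
  rw [Fintype.piFinset_univ] at h2
  rw [← h2]
  by_cases hS : x ∈ S ∨ y ∈ S
  · have : ∃ z, (z = x ∨ z = y) ∧ z ∈ S := by
      rcases hS with h | h
      · exact ⟨x, Or.inl rfl, h⟩
      · exact ⟨y, Or.inr rfl, h⟩
    obtain ⟨z, hz, hzS⟩ := this
    rw [Finset.prod_eq_zero (Finset.mem_univ z)]
    · simp [kil, hS]
    · simp [hz, hzS, sg]
  · rw [kil, if_neg hS, mul_comm]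
    congr 1
    rw [chr, ← Finset.univ_inter S, ← Finset.prod_ite_mem]
    apply Finset.prod_congr rfl
    intro z _
    by_cases hz : z = x ∨ z = y
    · have : z ∉ S := by
        rcases hz with h | h
        · subst h; exact fun h => hS (Or.inl h)
        · subst h; exact fun h => hS (Or.inr h)
      simp [hz, this]
    · simp [hz]

lemma lamp_pow_chr (P : Matrix V V ℝ) (S : Finset V) (t : ℕ) (η : V → Fin 2) (x y : V) :
    ∑ ξ : V → Fin 2, (lampChain P 2 ^ t) (η, x) (ξ, y) * chr S ξ
      = chr S η * (kil P S ^ t) x y := by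
  induction t generalizing η x with
  | zero =>
    simp only [pow_zero, Matrix.one_apply, Prod.mk.injEq]
    by_cases h : x = y
    · simp [h]
    · simp [h]
  | succ t ih =>
    simp_rw [pow_succ', Matrix.mul_apply, Finset.sum_mul]
    rw [Finset.sum_comm]
    simp_rw [mul_assoc, ← Finset.mul_sum]
    rw [Fintype.sum_prod_type, Finset.sum_comm, Finset.mul_sum]
    apply Finset.sum_congr rfl
    intro z _
    simp_rw [ih]
    simp_rw [← mul_assoc]
    rw [← Finset.sum_mul, lamp_chr]

lemma kil_empty (P : Matrix V V ℝ) : kil P ∅ = P := by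
  ext x y; simp [kil]

lemma chr_sq (S : Finset V) (η : V → Fin 2) : chr S η ^ 2 = 1 := by
  rw [sq, chr, ← Finset.prod_mul_distrib]
  apply Finset.prod_eq_one
  intro z _
  simp [sg_mul]

lemma pow_rowsum (P : Matrix V V ℝ) (h : ∀ x, ∑ y, P x y = 1) (t : ℕ) (x : V) :
    ∑ y, (P ^ t) x y = 1 := by
  induction t generalizing x with
  | zero => simp [Matrix.one_apply]
  | succ t ih =>
    simp_rw [pow_succ', Matrix.mul_apply]
    rw [Finset.sum_comm]
    simp_rw [← Finset.mul_sum, ih, mul_one, h]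

lemma chi_formula [Nonempty V] (P : Matrix V V ℝ) (h : ∀ x, ∑ y, P x y = 1) (t : ℕ)
    (η : V → Fin 2) (x : V) :
    ∑ q, ((lampChain P 2 ^ t) (η, x) q / unif ((V → Fin 2) × V) q - 1) ^ 2 *
        unif ((V → Fin 2) × V) q
      = Fintype.card V * (∑ S : Finset V, ∑ y, ((kil P S ^ t) x y) ^ 2) - 1 := by
  set A := lampChain P 2 ^ t with hA
  have hn : (Fintype.card V : ℝ) ≠ 0 := by exact_mod_cast Fintype.card_ne_zero
  have hN : (Fintype.card ((V → Fin 2) × V) : ℝ) = 2 ^ Fintype.card V * Fintype.card V := by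
    simp
  have hN0 : (Fintype.card ((V → Fin 2) × V) : ℝ) ≠ 0 := by exact_mod_cast Fintype.card_ne_zero
  have hrow : ∑ q, A (η, x) q = 1 := by
    rw [Fintype.sum_prod_type, Finset.sum_comm]
    rw [← pow_rowsum P h t x]
    apply Finset.sum_congr rfl
    intro y _
    have := lamp_pow_chr P ∅ t η x y
    simpa [chr, kil_empty] using this
  have h1 : ∀ q, (A (η, x) q / unif ((V → Fin 2) × V) q - 1) ^ 2 * unif ((V → Fin 2) × V) q
      = (Fintype.card ((V → Fin 2) × V) : ℝ) * A (η, x) q ^ 2 - 2 * A (η, x) q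
        + (Fintype.card ((V → Fin 2) × V) : ℝ)⁻¹ := by
    intro q
    simp only [unif]
    field_simp
    ring
  simp_rw [h1]
  rw [Finset.sum_add_distrib, Finset.sum_sub_distrib, ← Finset.mul_sum, ← Finset.mul_sum, hrow]
  simp only [Finset.sum_const, Finset.card_univ, nsmul_eq_mul]
  rw [mul_inv_cancel₀ hN0, hN, Fintype.sum_prod_type, Finset.sum_comm, mul_comm (2 ^ _), mul_assoc,
    Finset.mul_sum]
  have h2 : ∀ y, (2:ℝ) ^ Fintype.card V * ∑ ξ, A (η, x) (ξ, y) ^ 2 =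
      ∑ S : Finset V, ((kil P S ^ t) x y) ^ 2 := by
    intro y
    rw [← parseval]
    apply Finset.sum_congr rfl
    intro S _
    rw [hA, lamp_pow_chr, mul_pow, chr_sq, one_mul]
  simp_rw [h2]
  rw [Finset.sum_comm]
  ring

end Lamp
section Walk
open scoped Matrix
variable {V : Type} [Fintype V] [DecidableEq V]

/-- `wv P S (n+1) x` is the probability that the walk from `x` avoids `S` at times `0..n`. -/
noncomputable def wv (P : Matrix V V ℝ) (S : Finset V) : ℕ → V → ℝ
  | 0 => fun _ => 1
  | n + 1 => fun x => if x ∈ S then 0 else ∑ y, P x y * wv P S n y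

lemma wv_succ (P : Matrix V V ℝ) (S : Finset V) (n : ℕ) (x : V) :
    wv P S (n + 1) x = if x ∈ S then 0 else ∑ y, P x y * wv P S n y := rfl

lemma prPath_zero (P : Matrix V V ℝ) (μ : V → ℝ) (S : Finset V) :
    prPath P μ 0 (fun ω => ∀ i, ω i ∉ S) = ∑ x, if x ∈ S then 0 else μ x := by
  unfold prPath pathProb
  rw [← (Equiv.funUnique (Fin 1) V).symm.sum_comp]
  apply Finset.sum_congr rfl
  intro x _
  by_cases hx : x ∈ S <;> simp [hx]

lemma prPath_succ (P : Matrix V V ℝ) (μ : V → ℝ) (S : Finset V) (n : ℕ) :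
    prPath P μ (n + 1) (fun ω => ∀ i, ω i ∉ S) =
      ∑ x, if x ∈ S then 0 else μ x * prPath P (P x) n (fun ω => ∀ i, ω i ∉ S) := by
  unfold prPath pathProb
  rw [← (Fin.consEquiv (fun _ : Fin (n + 2) => V)).sum_comp, Fintype.sum_prod_type]
  apply Finset.sum_congr rfl
  intro x _
  by_cases hx : x ∈ S
  · simp only [hx, if_true]
    apply Finset.sum_eq_zero
    intro ω _
    rw [if_neg]
    intro h
    exact h 0 (by simpa [Fin.consEquiv] using hx)
  · simp only [hx, if_false, Finset.mul_sum]
    apply Finset.sum_congr rfl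
    intro ω _
    have e : (∀ i, (Fin.consEquiv (fun _ : Fin (n + 2) => V)) (x, ω) i ∉ S) ↔ ∀ i, ω i ∉ S := by
      rw [Fin.forall_fin_succ]
      simp [Fin.consEquiv, hx]
    by_cases h : ∀ i, ω i ∉ S
    · rw [if_pos (e.2 h), if_pos h, Fin.prod_univ_succ]
      simp [Fin.consEquiv]
    · rw [if_neg (fun h' => h (e.1 h')), if_neg h, mul_zero]

lemma prPath_eq (P : Matrix V V ℝ) (h1 : ∀ x, ∑ y, P x y = 1) (μ : V → ℝ) (S : Finset V) (n : ℕ) :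
    prPath P μ n (fun ω => ∀ i, ω i ∉ S) = ∑ x, μ x * wv P S (n + 1) x := by
  induction n generalizing μ with
  | zero =>
    rw [prPath_zero]
    apply Finset.sum_congr rfl
    intro x _
    simp [wv, h1]
  | succ n ih =>
    rw [prPath_succ]
    apply Finset.sum_congr rfl
    intro x _
    rw [ih, wv_succ P S (n + 1) x]
    split_ifs <;> simp

lemma wv_nonneg (P : Matrix V V ℝ) (h0 : ∀ x y, 0 ≤ P x y) (S : Finset V) (n : ℕ) (x : V) :
    0 ≤ wv P S n x := by
  induction n generalizing x with
  | zero => simp [wv]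
  | succ n ih =>
    rw [wv_succ]; split_ifs
    · exact le_rfl
    · exact Finset.sum_nonneg fun y _ => mul_nonneg (h0 _ _) (ih y)

lemma wv_anti (P : Matrix V V ℝ) (h0 : ∀ x y, 0 ≤ P x y) (h1 : ∀ x, ∑ y, P x y = 1)
    (S : Finset V) (n : ℕ) (x : V) : wv P S (n + 1) x ≤ wv P S n x := by
  induction n generalizing x with
  | zero => simp only [wv]; split_ifs <;> simp [h1]
  | succ n ih =>
    rw [wv_succ P S n x, wv_succ P S (n + 1) x]; split_ifs
    · exact le_rfl
    · exact Finset.sum_le_sum fun y _ => mul_le_mul_of_nonneg_left (ih y) (h0 _ _)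

lemma wv_le_one (P : Matrix V V ℝ) (h0 : ∀ x y, 0 ≤ P x y) (h1 : ∀ x, ∑ y, P x y = 1)
    (S : Finset V) (n : ℕ) (x : V) : wv P S n x ≤ 1 := by
  induction n with
  | zero => simp [wv]
  | succ n ih => exact (wv_anti P h0 h1 S n x).trans ih

lemma kil_wv (P : Matrix V V ℝ) (S : Finset V) (n : ℕ) :
    kil P S *ᵥ wv P S (n + 1) = wv P S (n + 2) := by
  ext x
  rw [wv_succ P S (n + 1) x, Matrix.mulVec, dotProduct]
  by_cases hx : x ∈ S
  · simp [hx, kil]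
  · rw [if_neg hx]
    apply Finset.sum_congr rfl
    intro y _
    by_cases hy : y ∈ S
    · simp [kil, hy, wv]
    · simp [kil, hx, hy]

lemma kil_pow_one (P : Matrix V V ℝ) (h1 : ∀ x, ∑ y, P x y = 1) (S : Finset V) (n : ℕ) :
    (kil P S ^ (n + 1)) *ᵥ (fun _ => 1) = wv P S (n + 2) := by
  induction n with
  | zero =>
    rw [← kil_wv, zero_add, pow_one]
    ext x
    simp only [Matrix.mulVec, dotProduct]
    apply Finset.sum_congr rfl
    intro y _
    by_cases hy : y ∈ S
    · simp [kil, hy]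
    · simp [wv, hy, h1]
  | succ n ih =>
    rw [pow_succ', ← Matrix.mulVec_mulVec, ih, kil_wv]

lemma wv_diff (P : Matrix V V ℝ) (h0 : ∀ x y, 0 ≤ P x y) (h1 : ∀ x, ∑ y, P x y = 1)
    (hs : ∀ y, ∑ x, P x y = 1) (S : Finset V) :
    Antitone (fun n => ∑ x, (wv P S n x - wv P S (n + 1) x)) := by
  apply antitone_nat_of_succ_le
  intro n
  calc ∑ x, (wv P S (n + 1) x - wv P S (n + 1 + 1) x)
      ≤ ∑ x, ∑ y, P x y * (wv P S n y - wv P S (n + 1) y) := by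
        apply Finset.sum_le_sum
        intro x _
        have hnn : 0 ≤ ∑ y, P x y * (wv P S n y - wv P S (n + 1) y) :=
          Finset.sum_nonneg fun y _ => mul_nonneg (h0 _ _) (sub_nonneg.2 (wv_anti P h0 h1 S n y))
        rw [wv_succ P S n x, wv_succ P S (n + 1) x]
        split_ifs
        · simpa using hnn
        · rw [← Finset.sum_sub_distrib]
          apply le_of_eq
          apply Finset.sum_congr rfl
          intro y _; ring
    _ = _ := by
        rw [Finset.sum_comm]
        simp_rw [← Finset.sum_mul, hs, one_mul]

lemma anti_avg (d : ℕ → ℝ) (hd : Antitone d) (a N : ℕ) (h : a ≤ N) :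
    (a : ℝ) * ∑ k ∈ Finset.range N, d k ≤ N * ∑ k ∈ Finset.range a, d k := by
  induction N, h using Nat.le_induction with
  | base => exact le_rfl
  | succ N hN ih =>
    rw [Finset.sum_range_succ, mul_add]
    have : (a : ℝ) * d N ≤ ∑ k ∈ Finset.range a, d k := by
      calc (a : ℝ) * d N = ∑ k ∈ Finset.range a, d N := by simp
        _ ≤ _ := Finset.sum_le_sum fun k hk => hd (by
          have := Finset.mem_range.1 hk; omega)
    push_cast
    linarith

/-- Stationary hitting probability over a short window. -/
lemma hit_window (P : Matrix V V ℝ) (h0 : ∀ x y, 0 ≤ P x y) (h1 : ∀ x, ∑ y, P x y = 1)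
    (hs : ∀ y, ∑ x, P x y = 1) (S : Finset V) (a N : ℕ) (h : a ≤ N)
    (hN : ∀ x, wv P S N x ≤ 1 / 2) :
    (a : ℝ) * Fintype.card V / 2 ≤ N * (Fintype.card V - ∑ x, wv P S a x) := by
  have hsum : ∀ M, ∑ k ∈ Finset.range M, ∑ x, (wv P S k x - wv P S (k + 1) x) =
      Fintype.card V - ∑ x, wv P S M x := by
    intro M
    rw [Finset.sum_comm]
    simp_rw [Finset.sum_range_sub' (fun k => wv P S k _)]
    rw [Finset.sum_sub_distrib]
    simp [wv]
  have := anti_avg _ (wv_diff P h0 h1 hs S) a N h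
  rw [hsum, hsum] at this
  refine le_trans ?_ this
  rw [mul_div_assoc]
  apply mul_le_mul_of_nonneg_left _ (by positivity)
  have : ∑ x, wv P S N x ≤ ∑ x : V, (1/2 : ℝ) := Finset.sum_le_sum fun x _ => hN x
  simp at this
  linarith

lemma kil_nonneg (P : Matrix V V ℝ) (h0 : ∀ x y, 0 ≤ P x y) (S : Finset V) (x y : V) :
    0 ≤ kil P S x y := by
  unfold kil; split_ifs
  · exact le_rfl
  · exact h0 _ _

lemma kil_le (P : Matrix V V ℝ) (h0 : ∀ x y, 0 ≤ P x y) (S : Finset V) (x y : V) :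
    kil P S x y ≤ P x y := by
  unfold kil; split_ifs
  · exact h0 _ _
  · exact le_rfl

lemma kil_symm (P : Matrix V V ℝ) (hs : P.IsSymm) (S : Finset V) : (kil P S).IsSymm := by
  ext x y
  simp only [Matrix.transpose_apply, kil, or_comm, hs.apply]

lemma contr (K : Matrix V V ℝ) (h0 : ∀ x y, 0 ≤ K x y) (h1 : ∀ x, ∑ y, K x y ≤ 1)
    (hs : K.IsSymm) (h : V → ℝ) : ∑ x, (K *ᵥ h) x ^ 2 ≤ ∑ x, h x ^ 2 := by
  have h2 : ∀ x, (K *ᵥ h) x ^ 2 ≤ ∑ y, K x y * h y ^ 2 := by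
    intro x
    have hc := Finset.sum_mul_sq_le_sq_mul_sq Finset.univ (fun y => √(K x y)) (fun y => √(K x y) * h y)
    have e1 : ∀ y, √(K x y) * (√(K x y) * h y) = K x y * h y := by
      intro y; rw [← mul_assoc, Real.mul_self_sqrt (h0 _ _)]
    have e2 : ∀ y, (√(K x y) * h y) ^ 2 = K x y * h y ^ 2 := by
      intro y; rw [mul_pow, Real.sq_sqrt (h0 _ _)]
    simp_rw [e1, e2, Real.sq_sqrt (h0 _ _)] at hc
    refine hc.trans ?_
    have : 0 ≤ ∑ y, K x y * h y ^ 2 := Finset.sum_nonneg fun y _ => mul_nonneg (h0 _ _) (sq_nonneg _)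
    nlinarith [h1 x]
  calc _ ≤ ∑ x, ∑ y, K x y * h y ^ 2 := Finset.sum_le_sum fun x _ => h2 x
    _ = ∑ y, (∑ x, K y x) * h y ^ 2 := by
      rw [Finset.sum_comm]
      simp_rw [Finset.sum_mul]
      apply Finset.sum_congr rfl; intro y _
      apply Finset.sum_congr rfl; intro x _
      rw [hs.apply]
    _ ≤ _ := by
      apply Finset.sum_le_sum
      intro y _
      nlinarith [h1 y, sq_nonneg (h y)]

lemma kil_contr (P : Matrix V V ℝ) (h0 : ∀ x y, 0 ≤ P x y) (h1 : ∀ x, ∑ y, P x y = 1)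
    (hs : P.IsSymm) (S : Finset V) (h : V → ℝ) (n : ℕ) :
    ∑ x, ((kil P S ^ n) *ᵥ h) x ^ 2 ≤ ∑ x, h x ^ 2 := by
  induction n with
  | zero => simp
  | succ n ih =>
    rw [pow_succ', ← Matrix.mulVec_mulVec]
    refine le_trans (contr _ (kil_nonneg P h0 S) (fun x => ?_) (kil_symm P hs S) _) ih
    rw [← h1 x]
    exact Finset.sum_le_sum fun y _ => kil_le P h0 S x y

lemma mulVec_const (P : Matrix V V ℝ) (h1 : ∀ x, ∑ y, P x y = 1) (α : ℝ) :
    P *ᵥ (fun _ => α) = fun _ => α := by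
  ext x
  simp [Matrix.mulVec, dotProduct, ← Finset.sum_mul, h1]

lemma sum_mulVec (P : Matrix V V ℝ) (hs : ∀ y, ∑ x, P x y = 1) (g : V → ℝ) :
    ∑ x, (P *ᵥ g) x = ∑ x, g x := by
  simp only [Matrix.mulVec, dotProduct]
  rw [Finset.sum_comm]
  simp_rw [← Finset.sum_mul, hs, one_mul]

lemma decomp [Nonempty V] (f : V → ℝ) : ∃ (α : ℝ) (g : V → ℝ), f = (fun _ => α) + g ∧ ∑ x, g x = 0 ∧
    ∑ x, f x ^ 2 = α ^ 2 * Fintype.card V + ∑ x, g x ^ 2 := by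
  have hn : (Fintype.card V : ℝ) ≠ 0 := by exact_mod_cast Fintype.card_ne_zero
  refine ⟨(∑ x, f x) / Fintype.card V, fun x => f x - (∑ x, f x) / Fintype.card V, ?_, ?_, ?_⟩
  · ext x; simp
  · rw [Finset.sum_sub_distrib]
    simp only [Finset.sum_const, Finset.card_univ, nsmul_eq_mul]
    field_simp; ring
  · simp_rw [sub_sq, Finset.sum_add_distrib, Finset.sum_sub_distrib]
    simp only [Finset.sum_const, Finset.card_univ, nsmul_eq_mul, ← Finset.sum_mul, ← Finset.mul_sum]
    field_simp; ring

lemma sym_dot (K : Matrix V V ℝ) (hs : K.IsSymm) (f g : V → ℝ) :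
    ∑ x, (K *ᵥ f) x * g x = ∑ x, f x * (K *ᵥ g) x := by
  simp only [Matrix.mulVec, dotProduct, Finset.sum_mul, Finset.mul_sum]
  rw [Finset.sum_comm]
  apply Finset.sum_congr rfl; intro x _
  apply Finset.sum_congr rfl; intro y _
  rw [hs.apply]; ring

lemma pow_symm (K : Matrix V V ℝ) (hs : K.IsSymm) (n : ℕ) : (K ^ n).IsSymm := by
  unfold Matrix.IsSymm
  rw [Matrix.transpose_pow, hs]

/-- The key two-block norm bound. -/
lemma block_norm [Nonempty V] (P : Matrix V V ℝ) (h0 : ∀ x y, 0 ≤ P x y) (h1 : ∀ x, ∑ y, P x y = 1)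
    (hs : P.IsSymm) (m b : ℕ) (e : ℝ) (he : e ≤ 1 / 6)
    (hgap : ∀ g : V → ℝ, ∑ x, g x = 0 → ∑ x, ((P ^ m) *ᵥ g) x ^ 2 ≤ e * ∑ x, g x ^ 2)
    (hb : 1 ≤ b) (S : Finset V) (f : V → ℝ) :
    ∑ x, ((kil P S ^ b * P ^ m) *ᵥ f) x ^ 2 ≤
      (1 / 2 + 1 / 2 * ((∑ x, wv P S (2 * b + 1) x) / Fintype.card V)) * ∑ x, f x ^ 2 := by
  have hn : 0 < (Fintype.card V : ℝ) := by exact_mod_cast Fintype.card_pos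
  obtain ⟨α, g, hf, hg, hfg⟩ := decomp f
  set K := kil P S with hK
  have hKs : K.IsSymm := kil_symm P hs S
  set h := (P ^ m) *ᵥ g with hh
  have hPm := pow_rowsum P h1 m
  have hPc : ∀ y, ∑ x, (P ^ m) x y = 1 := by
    intro y
    rw [← hPm y]
    apply Finset.sum_congr rfl
    intro x _
    rw [(pow_symm P hs m).apply]
  have hhs : ∑ x, h x = 0 := by rw [hh, sum_mulVec _ hPc, hg]
  have hhn : ∑ x, h x ^ 2 ≤ e * ∑ x, g x ^ 2 := hgap g hg
  have hw : (K ^ (2 * b)) *ᵥ (fun _ => 1) = wv P S (2 * b + 1) := by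
    obtain ⟨c, rfl⟩ : ∃ c, b = c + 1 := ⟨b - 1, by omega⟩
    exact kil_pow_one P h1 S (2 * c + 1)
  set w := wv P S (2 * b + 1) with hwd
  have hw0 : ∀ x, 0 ≤ w x := wv_nonneg P h0 S _
  have hw1 : ∀ x, w x ≤ 1 := wv_le_one P h0 h1 S _
  set o : V → ℝ := fun _ => 1 with ho
  have hvec : (K ^ b * P ^ m) *ᵥ f = α • ((K ^ b) *ᵥ o) + (K ^ b) *ᵥ h := by
    rw [← Matrix.mulVec_mulVec, hf, Matrix.mulVec_add, mulVec_const _ hPm, Matrix.mulVec_add,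
      ← Matrix.mulVec_smul]
    congr 2
    ext; simp [ho]
  have hbb : ∀ u : V → ℝ, ∑ x, ((K ^ b) *ᵥ o) x * ((K ^ b) *ᵥ u) x = ∑ x, w x * u x := by
    intro u
    rw [← sym_dot _ (pow_symm K hKs b), Matrix.mulVec_mulVec, ← pow_add, ← two_mul, hw]
  have hexp : ∑ x, ((K ^ b * P ^ m) *ᵥ f) x ^ 2 =
      α ^ 2 * ∑ x, w x + 2 * α * ∑ x, w x * h x + ∑ x, ((K ^ b) *ᵥ h) x ^ 2 := by
    rw [hvec, ← hbb h]
    have := hbb o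
    simp only [ho, mul_one] at this
    rw [← this, Finset.mul_sum, Finset.mul_sum, ← Finset.sum_add_distrib, ← Finset.sum_add_distrib]
    apply Finset.sum_congr rfl; intro x _
    simp only [Pi.add_apply, Pi.smul_apply, smul_eq_mul, ho]
    ring
  have hcross : 2 * α * ∑ x, w x * h x ≤ α ^ 2 / 2 * (Fintype.card V - ∑ x, w x) + 2 * ∑ x, h x ^ 2 := by
    have e1 : 2 * α * ∑ x, w x * h x = ∑ x, (2 * α * (w x - 1) * h x) := by
      calc _ = 2 * α * (∑ x, w x * h x - ∑ x, h x) := by rw [hhs]; ring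
        _ = _ := by
          rw [← Finset.sum_sub_distrib, Finset.mul_sum]
          apply Finset.sum_congr rfl; intro x _; ring
    have e2 : α ^ 2 / 2 * (Fintype.card V - ∑ x, w x) + 2 * ∑ x, h x ^ 2 =
        ∑ x, (α ^ 2 / 2 * (1 - w x) + 2 * h x ^ 2) := by
      rw [Finset.sum_add_distrib, ← Finset.mul_sum, ← Finset.mul_sum, Finset.sum_sub_distrib]
      simp
    rw [e1, e2]
    apply Finset.sum_le_sum
    intro x _
    have h5 : (1 - w x) ^ 2 ≤ 1 - w x := by nlinarith [hw0 x, hw1 x]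
    have h6 : α ^ 2 * (1 - w x) ^ 2 ≤ α ^ 2 * (1 - w x) := by gcongr
    nlinarith [sq_nonneg (α * (1 - w x) + 2 * h x)]
  have hKh : ∑ x, ((K ^ b) *ᵥ h) x ^ 2 ≤ ∑ x, h x ^ 2 := kil_contr P h0 h1 hs S h b
  have hq0 : 0 ≤ ∑ x, w x := Finset.sum_nonneg fun x _ => hw0 x
  have hg0 : 0 ≤ ∑ x, g x ^ 2 := Finset.sum_nonneg fun x _ => sq_nonneg _
  rw [hexp, hfg]
  have hmain : (1 / 2 + 1 / 2 * ((∑ x, w x) / Fintype.card V)) * (α ^ 2 * Fintype.card V + ∑ x, g x ^ 2)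
      = α ^ 2 * (Fintype.card V / 2 + (∑ x, w x) / 2) + 1 / 2 * ∑ x, g x ^ 2
        + 1 / 2 * ((∑ x, w x) / Fintype.card V) * ∑ x, g x ^ 2 := by
    field_simp; ring
  rw [hmain]
  have : 0 ≤ 1 / 2 * ((∑ x, w x) / Fintype.card V) * ∑ x, g x ^ 2 := by positivity
  have : e * ∑ x, g x ^ 2 ≤ 1 / 6 * ∑ x, g x ^ 2 := by gcongr
  linarith

lemma mat_mul_le (A B C D : Matrix V V ℝ) (hA : ∀ x y, 0 ≤ A x y) (hAC : ∀ x y, A x y ≤ C x y)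
    (hB : ∀ x y, 0 ≤ B x y) (hBD : ∀ x y, B x y ≤ D x y) (x y : V) :
    0 ≤ (A * B) x y ∧ (A * B) x y ≤ (C * D) x y := by
  simp only [Matrix.mul_apply]
  constructor
  · exact Finset.sum_nonneg fun z _ => mul_nonneg (hA _ _) (hB _ _)
  · exact Finset.sum_le_sum fun z _ => mul_le_mul (hAC _ _) (hBD _ _) (hB _ _) ((hA _ _).trans (hAC _ _))

lemma mat_pow_le (A C : Matrix V V ℝ) (hA : ∀ x y, 0 ≤ A x y) (hAC : ∀ x y, A x y ≤ C x y)
    (n : ℕ) (x y : V) : 0 ≤ (A ^ n) x y ∧ (A ^ n) x y ≤ (C ^ n) x y := by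
  induction n generalizing x y with
  | zero => 
    simp only [pow_zero, le_refl, and_true, Matrix.one_apply]; split_ifs <;> norm_num
  | succ n ih =>
    rw [pow_succ, pow_succ]
    exact mat_mul_le _ _ _ _ (fun x y => (ih x y).1) (fun x y => (ih x y).2) hA hAC x y

lemma kil_row [Nonempty V] (P : Matrix V V ℝ) (h0 : ∀ x y, 0 ≤ P x y) (h1 : ∀ x, ∑ y, P x y = 1)
    (hs : P.IsSymm) (m b : ℕ) (e : ℝ) (he : e ≤ 1 / 6)
    (hgap : ∀ g : V → ℝ, ∑ x, g x = 0 → ∑ x, ((P ^ m) *ᵥ g) x ^ 2 ≤ e * ∑ x, g x ^ 2)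
    (hb : 1 ≤ b) (S : Finset V) (J : ℕ) (x : V) :
    ∑ y, ((kil P S ^ ((b + m) * J)) x y) ^ 2 ≤
      (1 / 2 + 1 / 2 * ((∑ x, wv P S (2 * b + 1) x) / Fintype.card V)) ^ J := by
  set lam := (1 / 2 + 1 / 2 * ((∑ x, wv P S (2 * b + 1) x) / Fintype.card V)) with hlam
  have hlam0 : 0 ≤ lam := by
    have : 0 ≤ ∑ x, wv P S (2 * b + 1) x := Finset.sum_nonneg fun x _ => wv_nonneg P h0 S _ _
    positivity
  have hiter : ∀ (J : ℕ) (f : V → ℝ), ∑ y, (((kil P S ^ b * P ^ m) ^ J) *ᵥ f) y ^ 2 ≤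
      lam ^ J * ∑ y, f y ^ 2 := by
    intro J f
    induction J with
    | zero => simp
    | succ J ih =>
      rw [pow_succ', ← Matrix.mulVec_mulVec]
      refine (block_norm P h0 h1 hs m b e he hgap hb S _).trans ?_
      rw [← hlam, pow_succ', mul_assoc]
      gcongr
  have hle : ∀ u v, 0 ≤ (kil P S ^ ((b + m) * J)) u v ∧
      (kil P S ^ ((b + m) * J)) u v ≤ ((kil P S ^ b * P ^ m) ^ J) u v := by
    rw [pow_mul, pow_add]
    have h2 := fun u v => mat_pow_le (kil P S) P (kil_nonneg P h0 S) (kil_le P h0 S) m u v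
    have h3 := fun u v => mat_pow_le (kil P S) P (kil_nonneg P h0 S) (kil_le P h0 S) b u v
    have h4 := mat_mul_le (kil P S ^ b) (kil P S ^ m) (kil P S ^ b) (P ^ m)
      (fun u v => (h3 u v).1) (fun u v => le_rfl) (fun u v => (h2 u v).1) (fun u v => (h2 u v).2)
    exact fun u v => mat_pow_le _ _ (fun u v => (h4 u v).1) (fun u v => (h4 u v).2) J u v
  have hfin := hiter J (fun z => if z = x then 1 else 0)
  simp only [ite_pow, one_pow, ne_eq, OfNat.ofNat_ne_zero, not_false_eq_true, zero_pow,
    Finset.sum_ite_eq', Finset.mem_univ, if_true, mul_one] at hfin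
  refine le_trans ?_ hfin
  apply Finset.sum_le_sum
  intro y _
  have : (((kil P S ^ b * P ^ m) ^ J) *ᵥ (fun z => if z = x then 1 else 0)) y =
      ((kil P S ^ b * P ^ m) ^ J) y x := by
    simp [Matrix.mulVec, dotProduct]
  rw [this, ← (pow_symm _ (kil_symm P hs S) ((b + m) * J)).apply x y]
  exact pow_le_pow_left₀ (hle y x).1 (hle y x).2 2

end Walk
section Gap
open scoped Matrix
variable {V : Type} [Fintype V] [DecidableEq V]

lemma pow_eig (P : Matrix V V ℝ) (f : V → ℝ) (l : ℝ) (hf : P *ᵥ f = l • f) (t : ℕ) :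
    (P ^ t) *ᵥ f = l ^ t • f := by
  induction t with
  | zero => simp
  | succ t ih => rw [pow_succ', ← Matrix.mulVec_mulVec, ih, Matrix.mulVec_smul, hf, smul_smul, pow_succ]

lemma sum_sub_inv [Nonempty V] (r : V → ℝ) (hr : ∑ y, r y = 1) :
    (Fintype.card V : ℝ) * ∑ y, r y ^ 2 - 1 =
      Fintype.card V * ∑ y, (r y - (Fintype.card V : ℝ)⁻¹) ^ 2 := by
  have hn : (Fintype.card V : ℝ) ≠ 0 := by exact_mod_cast Fintype.card_ne_zero
  simp_rw [sub_sq, Finset.sum_add_distrib, Finset.sum_sub_distrib]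
  simp only [Finset.sum_const, Finset.card_univ, nsmul_eq_mul, ← Finset.sum_mul, ← Finset.mul_sum, hr]
  field_simp; ring

lemma eig_lt_one [Nonempty V] (P : Matrix V V ℝ) (h1 : ∀ x, ∑ y, P x y = 1) (t : ℕ)
    (hchi : ∀ x, (Fintype.card V : ℝ) * ∑ y, (P ^ t) x y ^ 2 - 1 ≤ 1 / 16)
    (f : V → ℝ) (hf0 : ∑ x, f x = 0) (hf : f ≠ 0) (l : ℝ) (hl : P *ᵥ f = l • f) : |l| < 1 := by
  have hn : 0 < (Fintype.card V : ℝ) := by exact_mod_cast Fintype.card_pos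
  by_contra hcon
  push Not at hcon
  have hpos : 0 < ∑ x, f x ^ 2 := by
    obtain ⟨x, hx⟩ := Function.ne_iff.1 hf
    have hx' : f x ≠ 0 := hx
    exact Finset.sum_pos' (fun _ _ => sq_nonneg _) ⟨x, Finset.mem_univ _, by positivity⟩
  have hx : ∀ x, f x ^ 2 ≤ 1 / 16 / Fintype.card V * ∑ y, f y ^ 2 := by
    intro x
    have e := congrFun (pow_eig P f l hl t) x
    have e2 : ((P ^ t) *ᵥ f) x = ∑ y, ((P ^ t) x y - (Fintype.card V : ℝ)⁻¹) * f y := by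
      simp only [Matrix.mulVec, dotProduct, sub_mul, Finset.sum_sub_distrib, ← Finset.mul_sum, hf0]
      simp
    have hc := Finset.sum_mul_sq_le_sq_mul_sq Finset.univ
      (fun y => (P ^ t) x y - (Fintype.card V : ℝ)⁻¹) f
    rw [← e2, e] at hc
    have h3 := hchi x
    rw [sum_sub_inv _ (pow_rowsum P h1 t x)] at h3
    have h4 : ∑ y, ((P ^ t) x y - (Fintype.card V : ℝ)⁻¹) ^ 2 ≤ 1 / 16 / Fintype.card V := by
      rw [le_div_iff₀ hn]; linarith
    have h5 : 1 ≤ (l ^ t) ^ 2 := by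
      rw [← sq_abs, abs_pow]
      exact one_le_pow₀ (one_le_pow₀ hcon)
    simp only [Pi.smul_apply, smul_eq_mul, mul_pow] at hc
    calc f x ^ 2 ≤ (l ^ t) ^ 2 * f x ^ 2 := by nlinarith [sq_nonneg (f x)]
      _ ≤ _ := hc
      _ ≤ _ := by gcongr
  have := Finset.sum_le_sum (fun x (_ : x ∈ Finset.univ) => hx x)
  simp only [Finset.sum_const, Finset.card_univ, nsmul_eq_mul] at this
  have e : (Fintype.card V : ℝ) * (1 / 16 / Fintype.card V * ∑ y, f y ^ 2) = 1 / 16 * ∑ y, f y ^ 2 := by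
    field_simp
  rw [e] at this
  linarith

lemma gap_lemma [Nonempty V] (P : Matrix V V ℝ) (h1 : ∀ x, ∑ y, P x y = 1) (hs : P.IsSymm) (t : ℕ)
    (hchi : ∀ x, (Fintype.card V : ℝ) * ∑ y, (P ^ t) x y ^ 2 - 1 ≤ 1 / 16)
    (hn2 : 2 ≤ Fintype.card V) :
    1 ≤ Trel P ∧ ∀ g : V → ℝ, ∑ x, g x = 0 →
      ∑ x, (P *ᵥ g) x ^ 2 ≤ ((1 - 1 / Trel P) ^ 2) * ∑ x, g x ^ 2 := by
  have hA : P.IsHermitian := by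
    unfold Matrix.IsHermitian
    rw [Matrix.conjTranspose_eq_transpose_of_trivial]; exact hs
  set v : V → V → ℝ := fun i x => (hA.eigenvectorBasis i) x with hv
  set lam := hA.eigenvalues with hlam
  have hPv : ∀ i, P *ᵥ (v i) = lam i • v i := fun i => hA.mulVec_eigenvectorBasis i
  have hpars : ∀ g : V → ℝ, ∑ i, (∑ x, v i x * g x) ^ 2 = ∑ x, g x ^ 2 := by
    intro g
    have := hA.eigenvectorBasis.sum_sq_inner_right (WithLp.toLp 2 g)
    rw [EuclideanSpace.real_norm_sq_eq] at this
    simp only at this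
    rw [← this]
    apply Finset.sum_congr rfl
    intro i _
    congr 1
    simp [PiLp.inner_apply, hv, mul_comm]
  have hcs : ∀ y, ∑ x, P x y = 1 := by
    intro y
    rw [← h1 y]
    exact Finset.sum_congr rfl fun x _ => hs.apply _ _
  have hv0 : ∀ i, v i ≠ 0 := by
    intro i h
    have := hA.eigenvectorBasis.orthonormal.ne_zero i
    apply this
    ext x
    exact congrFun h x
  have hcase1 : ∀ i, lam i = 1 → ∀ g : V → ℝ, ∑ x, g x = 0 → ∑ x, v i x * g x = 0 := by
    intro i hi g hg
    obtain ⟨α, u, hu, hu0, -⟩ := decomp (v i)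
    have hPu : P *ᵥ u = (1:ℝ) • u := by
      have := hPv i
      rw [hi, hu, Matrix.mulVec_add, mulVec_const P h1, one_smul] at this
      rw [one_smul]
      exact add_left_cancel this
    have hz : u = 0 := by
      by_contra hne
      have := eig_lt_one P h1 t hchi u hu0 hne 1 hPu
      simp at this
    rw [hu, hz]
    simp [← Finset.mul_sum, hg]
  have hcase2 : ∀ i, lam i ≠ 1 → |lam i| < 1 := by
    intro i hi
    apply eig_lt_one P h1 t hchi (v i) _ (hv0 i) _ (hPv i)
    have := sum_mulVec P hcs (v i)
    rw [hPv] at this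
    simp only [Pi.smul_apply, smul_eq_mul, ← Finset.mul_sum] at this
    have h3 : (lam i - 1) * ∑ x, v i x = 0 := by linarith
    exact (mul_eq_zero.1 h3).resolve_left (sub_ne_zero.2 hi)
  have hbdd : BddAbove ((fun l : ℝ => 1 / (1 - |l|)) '' (spectrum ℝ P \ {1})) :=
    ((Matrix.finite_real_spectrum.subset Set.sdiff_subset).image _).bddAbove
  have hT : ∀ i, lam i ≠ 1 → 1 / (1 - |lam i|) ≤ Trel P := fun i hi =>
    le_csSup hbdd ⟨lam i, ⟨hA.eigenvalues_mem_spectrum_real i, hi⟩, rfl⟩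
  have hex : ∃ i, lam i ≠ 1 := by
    by_contra hcon
    push Not at hcon
    obtain ⟨a, b, hab⟩ := Fintype.exists_pair_of_one_lt_card (by omega : 1 < Fintype.card V)
    set g : V → ℝ := fun x => (if x = a then 1 else 0) - (if x = b then 1 else 0) with hg
    have hg0 : ∑ x, g x = 0 := by simp [hg, Finset.sum_sub_distrib]
    have := hpars g
    rw [Finset.sum_eq_zero] at this
    · have h4 : g a ^ 2 ≤ ∑ x, g x ^ 2 :=
        Finset.single_le_sum (f := fun x => g x ^ 2) (fun _ _ => sq_nonneg _) (Finset.mem_univ a)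
      rw [← this] at h4
      simp [hg, hab] at h4
      linarith
    · intro i _
      rw [hcase1 i (hcon i) g hg0]; simp
  have hT1 : 1 ≤ Trel P := by
    obtain ⟨i, hi⟩ := hex
    refine le_trans ?_ (hT i hi)
    have := hcase2 i hi
    rw [le_div_iff₀ (by linarith)]
    have := abs_nonneg (lam i)
    linarith
  refine ⟨hT1, fun g hg => ?_⟩
  rw [← hpars, ← hpars g, Finset.mul_sum]
  apply Finset.sum_le_sum
  intro i _
  rw [← sym_dot P hs, hPv]
  have e : ∑ x, (lam i • v i) x * g x = lam i * ∑ x, v i x * g x := by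
    rw [Finset.mul_sum]
    apply Finset.sum_congr rfl; intro x _
    simp [mul_assoc]
  rw [e]
  by_cases hi : lam i = 1
  · rw [hcase1 i hi g hg]; simp
  · have h2 := hcase2 i hi
    have h3 := hT i hi
    rw [mul_pow]
    apply mul_le_mul_of_nonneg_right _ (sq_nonneg _)
    rw [← sq_abs]
    apply pow_le_pow_left₀ (abs_nonneg _)
    rw [div_le_iff₀ (by linarith)] at h3
    have : 1 / Trel P ≤ 1 - |lam i| := by
      rw [div_le_iff₀ (by linarith)]; linarith
    linarith

lemma gap_pow (P : Matrix V V ℝ) (hcs : ∀ y, ∑ x, P x y = 1) (r : ℝ)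
    (hgap : ∀ g : V → ℝ, ∑ x, g x = 0 → ∑ x, (P *ᵥ g) x ^ 2 ≤ (r ^ 2) * ∑ x, g x ^ 2)
    (m : ℕ) (g : V → ℝ) (hg : ∑ x, g x = 0) :
    ∑ x, ((P ^ m) *ᵥ g) x = 0 ∧ ∑ x, ((P ^ m) *ᵥ g) x ^ 2 ≤ ((r ^ m) ^ 2) * ∑ x, g x ^ 2 := by
  induction m with
  | zero => simp [hg]
  | succ m ih =>
    rw [pow_succ', ← Matrix.mulVec_mulVec]
    refine ⟨by rw [sum_mulVec P hcs]; exact ih.1, (hgap _ ih.1).trans ?_⟩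
    calc _ ≤ r ^ 2 * ((r ^ m) ^ 2 * ∑ x, g x ^ 2) := by gcongr; exact ih.2
      _ = _ := by ring

lemma kil_fix [Nonempty V] (P : Matrix V V ℝ) (h1 : ∀ x, ∑ y, P x y = 1) (hcs : ∀ y, ∑ x, P x y = 1)
    (r : ℝ) (hr : r < 1)
    (hgap : ∀ g : V → ℝ, ∑ x, g x = 0 → ∑ x, (P *ᵥ g) x ^ 2 ≤ r * ∑ x, g x ^ 2)
    (y : V) (f : V → ℝ) (hf : kil P {y} *ᵥ f = f) : f = 0 := by
  have hfy : f y = 0 := by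
    rw [← hf]; simp [Matrix.mulVec, dotProduct, kil]
  have hle : ∀ x, f x ^ 2 ≤ (P *ᵥ f) x ^ 2 := by
    intro x
    by_cases hx : x = y
    · rw [hx, hfy]; simp; positivity
    · have : f x = (P *ᵥ f) x := by
        conv_lhs => rw [← hf]
        simp only [Matrix.mulVec, dotProduct]
        apply Finset.sum_congr rfl
        intro z _
        by_cases hz : z = y
        · rw [hz, hfy]; simp
        · simp [kil, hx, hz]
      rw [this]
  obtain ⟨α, g, hfg, hg, hsq⟩ := decomp f
  have h2 : ∑ x, f x ^ 2 ≤ ∑ x, (P *ᵥ f) x ^ 2 := Finset.sum_le_sum fun x _ => hle x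
  have h3 : ∑ x, (P *ᵥ f) x ^ 2 = α ^ 2 * Fintype.card V + ∑ x, (P *ᵥ g) x ^ 2 := by
    rw [hfg, Matrix.mulVec_add, mulVec_const P h1]
    simp only [Pi.add_apply, add_sq, Finset.sum_add_distrib, ← Finset.mul_sum]
    rw [sum_mulVec P hcs, hg]
    simp [mul_comm]
  have h4 := hgap g hg
  have hg0 : 0 ≤ ∑ x, g x ^ 2 := Finset.sum_nonneg fun x _ => sq_nonneg _
  have h5 : ∑ x, g x ^ 2 = 0 := by nlinarith
  have h6 : ∀ x, g x = 0 := by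
    intro x
    have := (Finset.sum_eq_zero_iff_of_nonneg (fun x _ => sq_nonneg (g x))).1 h5 x (Finset.mem_univ x)
    exact pow_eq_zero_iff (two_ne_zero) |>.1 this
  have h7 : α = 0 := by
    have := congrFun hfg y
    rw [hfy, Pi.add_apply, h6] at this
    linarith
  ext x
  rw [hfg, Pi.add_apply, h6, h7]; simp

lemma wv_summable [Nonempty V] (P : Matrix V V ℝ) (h0 : ∀ x y, 0 ≤ P x y) (h1 : ∀ x, ∑ y, P x y = 1)
    (hcs : ∀ y, ∑ x, P x y = 1) (r : ℝ) (hr : r < 1)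
    (hgap : ∀ g : V → ℝ, ∑ x, g x = 0 → ∑ x, (P *ᵥ g) x ^ 2 ≤ r * ∑ x, g x ^ 2)
    (x y : V) : Summable (fun k => wv P {y} (k + 1) x) := by
  set K := kil P {y} with hK
  have hinj : Function.Injective ((1 - K).mulVec) := by
    intro f g hfg
    have : (1 - K) *ᵥ (f - g) = 0 := by
      rw [Matrix.mulVec_sub]; exact sub_eq_zero.2 hfg
    rw [Matrix.sub_mulVec, Matrix.one_mulVec, sub_eq_zero] at this
    exact sub_eq_zero.1 (kil_fix P h1 hcs r hr hgap y (f - g) this.symm)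
  have hu : IsUnit (1 - K) := Matrix.mulVec_injective_iff_isUnit.1 hinj
  obtain ⟨B, hB⟩ := hu.exists_left_inv
  have hbound : ∀ k z, |((K ^ k) *ᵥ (fun _ => (1:ℝ))) z| ≤ 1 := by
    intro k z
    cases k with
    | zero => simp
    | succ k =>
      rw [hK, kil_pow_one P h1, abs_of_nonneg (wv_nonneg P h0 _ _ _)]
      exact wv_le_one P h0 h1 _ _ _
  have hle : ∀ k, wv P {y} (k + 1) x ≤ ((K ^ k) *ᵥ (fun _ => (1:ℝ))) x := by
    intro k
    cases k with
    | zero => simpa using wv_le_one P h0 h1 _ _ _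
    | succ k => rw [hK, kil_pow_one P h1]
  apply summable_of_sum_range_le (c := ∑ z, |B x z| * 2) (fun k => wv_nonneg P h0 _ _ _)
  intro N
  have hgs : (∑ k ∈ Finset.range N, K ^ k) = B * (1 - K ^ N) := by
    rw [← mul_neg_geom_sum, ← mul_assoc, hB, one_mul]
  calc ∑ k ∈ Finset.range N, wv P {y} (k + 1) x
      ≤ ∑ k ∈ Finset.range N, ((K ^ k) *ᵥ (fun _ => (1:ℝ))) x := Finset.sum_le_sum fun k _ => hle k
    _ = ((∑ k ∈ Finset.range N, K ^ k) *ᵥ (fun _ => (1:ℝ))) x := by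
        rw [Matrix.sum_mulVec, Finset.sum_apply]
    _ = ∑ z, B x z * (1 - ((K ^ N) *ᵥ (fun _ => (1:ℝ))) z) := by
        rw [hgs, ← Matrix.mulVec_mulVec, Matrix.sub_mulVec, Matrix.one_mulVec]
        rfl
    _ ≤ _ := by
        apply Finset.sum_le_sum
        intro z _
        refine (le_abs_self _).trans ?_
        rw [abs_mul]
        gcongr
        have := abs_le.1 (hbound N z)
        rw [abs_le]; constructor <;> linarith

lemma wv_sum_le [Nonempty V] (P : Matrix V V ℝ) (h0 : ∀ x y, 0 ≤ P x y) (h1 : ∀ x, ∑ y, P x y = 1)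
    (hcs : ∀ y, ∑ x, P x y = 1) (r : ℝ) (hr : r < 1)
    (hgap : ∀ g : V → ℝ, ∑ x, g x = 0 → ∑ x, (P *ᵥ g) x ^ 2 ≤ r * ∑ x, g x ^ 2)
    (x y : V) (N : ℕ) : (N : ℝ) * wv P {y} N x ≤ maxHit P := by
  have hsum := wv_summable P h0 h1 hcs r hr hgap x y
  have hit : hitExp P x y = ∑' k, wv P {y} (k + 1) x := by
    unfold hitExp
    have : ∀ k, prPath P (delta x) k (fun ω => ∀ i, ω i ≠ y) = wv P {y} (k + 1) x := by
      intro k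
      have := prPath_eq P h1 (delta x) {y} k
      simp only [Finset.mem_singleton] at this
      rw [show (fun ω : Fin (k + 1) → V => ∀ i, ω i ≠ y) = (fun ω => ∀ i, ¬ ω i = y) from rfl, this]
      simp [delta]
    simp_rw [this]
    rw [← ENNReal.ofReal_tsum_of_nonneg (fun k => wv_nonneg P h0 _ _ _) hsum,
      ENNReal.toReal_ofReal (tsum_nonneg fun k => wv_nonneg P h0 _ _ _)]
  have hmax : hitExp P x y ≤ maxHit P :=
    (le_ciSup (Set.finite_range (fun y => hitExp P x y)).bddAbove y).trans
      (le_ciSup (Set.finite_range (fun x => ⨆ y, hitExp P x y)).bddAbove x)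
  refine le_trans ?_ hmax
  rw [hit]
  refine le_trans ?_ (hsum.sum_le_tsum (Finset.range N) (fun k _ => wv_nonneg P h0 _ _ _))
  have hanti : Antitone (fun k => wv P {y} k x) :=
    antitone_nat_of_succ_le fun k => wv_anti P h0 h1 _ _ _
  calc (N : ℝ) * wv P {y} N x = ∑ k ∈ Finset.range N, wv P {y} N x := by simp
    _ ≤ _ := Finset.sum_le_sum fun k hk => hanti (by have := Finset.mem_range.1 hk; omega)

end Gap
section Final
open scoped Matrix
variable {V : Type} [Fintype V] [DecidableEq V]

lemma wv_empty (P : Matrix V V ℝ) (h1 : ∀ x, ∑ y, P x y = 1) (n : ℕ) (x : V) : wv P ∅ n x = 1 := by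
  induction n generalizing x with
  | zero => rfl
  | succ n ih => rw [wv_succ]; simp [ih, h1]

lemma path_sum (P : Matrix V V ℝ) (h1 : ∀ x, ∑ y, P x y = 1) (n : ℕ) (S : Finset V) :
    ∑ ω : Fin (n + 1) → V, pathProb P (unif V) ω *
      (if Disjoint (Finset.univ.image ω) S then 1 else 0) =
      (∑ x, wv P S (n + 1) x) / Fintype.card V := by
  have := prPath_eq P h1 (unif V) S n
  simp only [unif] at this
  rw [← Finset.mul_sum, mul_comm, ← div_eq_mul_inv] at this
  rw [← this]
  unfold prPath
  apply Finset.sum_congr rfl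
  intro ω _
  have e : Disjoint (Finset.univ.image ω) S ↔ ∀ i, ω i ∉ S := by
    rw [Finset.disjoint_left]; simp
  by_cases h : ∀ i, ω i ∉ S
  · rw [if_pos (e.2 h), if_pos h, mul_one]
  · rw [if_neg (fun h' => h (e.1 h')), if_neg h, mul_zero]

set_option maxHeartbeats 4000000 in
lemma main_bound [Nonempty V] (P : Matrix V V ℝ) (h0 : ∀ x y, 0 ≤ P x y) (h1 : ∀ x, ∑ y, P x y = 1)
    (hs : P.IsSymm) (κ T n : ℝ) (hn : n = Fintype.card V) (hn2 : 2 ≤ n) (hκ : 1 ≤ κ) (hT : 1 ≤ T)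
    (hgap : ∀ g : V → ℝ, ∑ x, g x = 0 → ∑ x, (P *ᵥ g) x ^ 2 ≤ ((1 - 1 / T) ^ 2) * ∑ x, g x ^ 2)
    (hH : maxHit P ≤ κ * n) :
    ∃ t : ℕ, (t : ℝ) ≤ 500 * κ * n * (T + Real.log n) ∧
      ∀ x, n * (∑ S : Finset V, ∑ y, ((kil P S ^ t) x y) ^ 2) - 1 ≤ 1 / 16 := by
  have hcs : ∀ y, ∑ x, P x y = 1 := by
    intro y
    rw [← h1 y]
    exact Finset.sum_congr rfl fun x _ => hs.apply _ _
  have hn0 : 0 < n := by linarith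
  have hT0 : 0 < T := by linarith
  have hr0 : 0 ≤ 1 - 1 / T := by
    rw [sub_nonneg, div_le_one hT0]; exact hT
  have hr1 : 1 - 1 / T < 1 := by
    have : 0 < 1 / T := by positivity
    linarith
  have hrT : ∀ k : ℕ, (1 - 1 / T) ^ k ≤ Real.exp (-(k / T)) := by
    intro k
    calc _ ≤ Real.exp (-(1 / T)) ^ k := by
          apply pow_le_pow_left₀ hr0
          have := Real.add_one_le_exp (-(1 / T))
          linarith
      _ = _ := by rw [← Real.exp_nat_mul]; congr 1; ring
  have hgp := gap_pow P hcs (1 - 1 / T) hgap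
  set m := ⌈T⌉₊ with hm
  have hmT : T ≤ m := Nat.le_ceil T
  have hm2 : (m : ℝ) ≤ 2 * T := by
    have := Nat.ceil_lt_add_one hT0.le
    linarith
  have hm1 : 1 ≤ m := by
    have : (1:ℝ) ≤ m := hT.trans hmT
    exact_mod_cast this
  set c := Fintype.card V with hc
  have hc2 : 2 ≤ c := by rw [hn] at hn2; exact_mod_cast hn2
  set b := min m c with hb
  have hb1 : 1 ≤ b := le_min hm1 (by omega)
  have hbm : b ≤ m := min_le_left _ _
  have hbc : b ≤ c := min_le_right _ _
  -- hitting
  set N := ⌈2 * κ * n⌉₊ + 1 with hN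
  have hN1 : 2 * κ * n + 1 ≤ N := by
    rw [hN]; push_cast
    have := Nat.le_ceil (2 * κ * n)
    linarith
  have hN2 : (N : ℝ) ≤ 3 * κ * n := by
    rw [hN]; push_cast
    have := Nat.ceil_lt_add_one (a := 2 * κ * n) (by positivity)
    nlinarith
  have hNpos : 0 < (N : ℝ) := by rw [hN]; positivity
  have haN : 2 * b + 1 ≤ N := by
    have : ((2 * b + 1 : ℕ) : ℝ) ≤ N := by
      push_cast
      have : (b : ℝ) ≤ n := by rw [hn]; exact_mod_cast hbc
      nlinarith
    exact_mod_cast this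
  have hhalf : ∀ x y, wv P {y} N x ≤ 1 / 2 := by
    intro x y
    have hr2 : (1 - 1 / T) ^ 2 < 1 := by nlinarith
    have h5 := (wv_sum_le P h0 h1 hcs _ hr2 hgap x y N).trans hH
    by_contra hcon
    push Not at hcon
    have : (N : ℝ) * (1 / 2) < N * wv P {y} N x := by gcongr
    linarith
  set l : ℝ := 2 * b + 1 with hl
  have hl1 : 1 ≤ l := by rw [hl]; linarith [Nat.cast_nonneg (α := ℝ) b]
  set α : ℝ := l / (6 * κ * n) with hα
  have hαp : 0 < α := by positivity
  have hlN : l ≤ N := by rw [hl]; exact_mod_cast haN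
  have hα1 : α ≤ 1 := by
    rw [hα, div_le_one (by positivity)]; nlinarith
  have hwin : ∀ y, α ≤ 1 - (∑ x, wv P {y} (2 * b + 1) x) / n := by
    intro y
    have := hit_window P h0 h1 hcs {y} (2 * b + 1) N haN (fun x => hhalf x y)
    rw [← hc, ← hn] at this
    push_cast at this
    rw [← hl] at this
    have h6 : 0 ≤ n - ∑ x, wv P {y} (2 * b + 1) x := by
      by_contra hneg
      push Not at hneg
      have : (N : ℝ) * (n - ∑ x, wv P {y} (2 * b + 1) x) < 0 := mul_neg_of_pos_of_neg hNpos hneg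
      have : 0 ≤ l * n / 2 := by positivity
      linarith
    have h7 : l * n / 2 ≤ 3 * κ * n * (n - ∑ x, wv P {y} (2 * b + 1) x) :=
      this.trans (by gcongr)
    have e : 1 - (∑ x, wv P {y} (2 * b + 1) x) / n = (n - ∑ x, wv P {y} (2 * b + 1) x) / n := by
      field_simp
    rw [e, hα, div_le_div_iff₀ (by positivity) hn0]
    linarith
  set w : (Fin (2 * b + 1) → V) → ℝ := fun ω => pathProb P (unif V) ω with hw
  set B : (Fin (2 * b + 1) → V) → Finset V := fun ω => Finset.univ.image ω with hB
  have hps := path_sum P h1 (2 * b)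
  rw [← hc, ← hn] at hps
  have hw0 : ∀ ω, 0 ≤ w ω := by
    intro ω
    simp only [hw, pathProb, unif]
    exact mul_nonneg (by positivity) (Finset.prod_nonneg fun i _ => h0 _ _)
  have hw1 : ∑ ω, w ω = 1 := by
    have := hps ∅
    simp only [Finset.disjoint_empty_right, if_true, mul_one, wv_empty P h1] at this
    rw [this, Finset.sum_const, Finset.card_univ, nsmul_eq_mul, mul_one, ← hc, ← hn, div_self hn0.ne']
  have hBc : ∀ ω, ((B ω).card : ℝ) ≤ l := by
    intro ω
    have : (B ω).card ≤ 2 * b + 1 := by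
      refine Finset.card_image_le.trans ?_
      simp
    rw [hl]; exact_mod_cast this
  have hav : ∀ S, avw w B S = 1 / 2 + 1 / 2 * ((∑ x, wv P S (2 * b + 1) x) / n) := by
    intro S
    rw [avw, hps S]
  have hαB : ∀ y, α ≤ ∑ ω, w ω * (if y ∈ B ω then 1 else 0) := by
    intro y
    refine (hwin y).trans (le_of_eq ?_)
    rw [← hps {y}, sub_eq_iff_eq_add, ← Finset.sum_add_distrib]
    refine hw1.symm.trans ?_
    apply Finset.sum_congr rfl
    intro ω _
    have hd : Disjoint (Finset.univ.image ω) {y} ↔ y ∉ B ω := Finset.disjoint_singleton_right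
    by_cases hy : y ∈ B ω
    · rw [if_pos hy, if_neg (fun h => hd.1 h hy)]; ring
    · rw [if_neg hy, if_pos (hd.2 hy)]; simp [hw]
  set J₁ := ⌈24 * κ * n⌉₊ with hJ1
  set J₂ := ⌈4 / α * (8 * Real.log n)⌉₊ with hJ2
  have hJ1' : 24 * κ * n ≤ J₁ := Nat.le_ceil _
  have hlog0 : 0 ≤ Real.log n := Real.log_nonneg (by linarith)
  have hcomb := FF_final w B hw0 hw1 l α hl1 hBc hαp hα1 hαB J₁ J₂
    (by
      refine le_trans (le_of_eq ?_) hJ1'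
      rw [hα]; field_simp; norm_num) n hn hn2 (Nat.le_ceil _)
  refine ⟨(b + m) * (J₁ + J₂), ?_, ?_⟩
  · have hJ1u : (J₁ : ℝ) ≤ 25 * κ * n := by
      have := Nat.ceil_lt_add_one (a := 24 * κ * n) (by positivity)
      nlinarith
    have hJ2u : (J₂ : ℝ) ≤ 192 * κ * n * Real.log n / l + 1 := by
      have := Nat.ceil_lt_add_one (a := 4 / α * (8 * Real.log n)) (by positivity)
      have e : 4 / α * (8 * Real.log n) = 192 * κ * n * Real.log n / l := by
        rw [hα]; field_simp; ring
      rw [e] at this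
      rw [hJ2, e]; exact this.le
    have hbmR : (b : ℝ) ≤ m := by exact_mod_cast hbm
    have hrat : ((b : ℝ) + m) ≤ l * (1 + m / n) := by
      rcases min_choice m c with h | h
      · have : (b : ℝ) = m := by rw [hb, h]
        rw [hl, this]
        have : 0 ≤ (m : ℝ) / n := by positivity
        have hm0 : 0 ≤ (m : ℝ) := by positivity
        nlinarith [mul_nonneg hm0 this]
      · have : (b : ℝ) = n := by rw [hb, h, hn]
        rw [hl, this]
        have e : (2 * n + 1) * (1 + m / n) = 2 * n + 1 + 2 * m + m / n := by field_simp; ring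
        rw [e]
        have : 0 ≤ (m : ℝ) / n := by positivity
        have hm0 : 0 ≤ (m : ℝ) := by positivity
        linarith
    have hlogn : Real.log n ≤ n := (Real.log_le_sub_one_of_pos hn0).trans (by linarith)
    push_cast
    have hA : ((b : ℝ) + m) * J₁ ≤ 4 * T * (25 * κ * n) := by
      gcongr; linarith
    have hB2 : ((b : ℝ) + m) * J₂ ≤ 192 * κ * n * Real.log n * (1 + m / n) + 4 * T := by
      calc ((b : ℝ) + m) * J₂ ≤ (b + m) * (192 * κ * n * Real.log n / l + 1) := by gcongr
        _ = (b + m) * (192 * κ * n * Real.log n / l) + (b + m) := by ring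
        _ ≤ l * (1 + m / n) * (192 * κ * n * Real.log n / l) + 4 * T := by
            gcongr; linarith
        _ = _ := by field_simp
    have hB3 : 192 * κ * n * Real.log n * (1 + m / n) ≤ 192 * κ * n * Real.log n + 384 * κ * n * T := by
      have e : 192 * κ * n * Real.log n * (1 + m / n) =
          192 * κ * n * Real.log n + 192 * κ * (Real.log n * m) := by field_simp
      rw [e]
      have : Real.log n * m ≤ n * (2 * T) := by gcongr
      have : 192 * κ * (Real.log n * m) ≤ 192 * κ * (n * (2 * T)) := by gcongr
      linarith
    have h4T : 4 * T ≤ 4 * κ * n * T := by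
      have : 1 ≤ κ * n := by nlinarith
      nlinarith
    have hk1 : 0 ≤ κ * n * T := by positivity
    have hk2 : 0 ≤ κ * n * Real.log n := by positivity
    have e1 : ((b : ℝ) + m) * (J₁ + J₂) = (b + m) * J₁ + (b + m) * J₂ := by ring
    have e2 : 500 * κ * n * (T + Real.log n) = 500 * (κ * n * T) + 500 * (κ * n * Real.log n) := by ring
    rw [e1, e2]
    linarith
  · intro x
    set t := (b + m) * (J₁ + J₂) with ht
    have hem : ((1 - 1 / T) ^ m) ^ 2 ≤ 1 / 6 := by
      have h8 : (1 - 1 / T) ^ m ≤ Real.exp (-1) := by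
        refine (hrT m).trans ?_
        rw [Real.exp_le_exp, neg_le_neg_iff, le_div_iff₀ hT0]; linarith
      have h9 : Real.exp (-1) < 0.3679 := by
        have := Real.exp_neg_one_lt_d9; linarith
      have h10 : 0 ≤ (1 - 1 / T) ^ m := pow_nonneg hr0 _
      nlinarith
    have hrow := fun S => kil_row P h0 h1 hs m b _ hem (fun g hg => (hgp m g hg).2) hb1 S (J₁ + J₂) x
    have hsplit : ∑ S : Finset V, ∑ y, ((kil P S ^ t) x y) ^ 2 =
        ∑ y, ((P ^ t) x y) ^ 2 + ∑ S ∈ Finset.univ.filter (fun S : Finset V => S.Nonempty),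
          ∑ y, ((kil P S ^ t) x y) ^ 2 := by
      rw [← Finset.sum_filter_add_sum_filter_not Finset.univ (fun S : Finset V => S.Nonempty), add_comm]
      congr 1
      have : Finset.univ.filter (fun S : Finset V => ¬ S.Nonempty) = {∅} := by
        ext S; simp
      rw [this, Finset.sum_singleton, kil_empty]
    have hsecond : n * ∑ S ∈ Finset.univ.filter (fun S : Finset V => S.Nonempty),
          ∑ y, ((kil P S ^ t) x y) ^ 2 ≤ 1 / 32 := by
      refine le_trans ?_ hcomb
      gcongr with S _
      rw [hav S, hn]
      exact hrow S
    have hfirst : n * ∑ y, ((P ^ t) x y) ^ 2 - 1 ≤ 1 / 32 := by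
      rw [hn, hc, sum_sub_inv _ (pow_rowsum P h1 t x), ← hc, ← hn]
      set g : V → ℝ := fun z => (if z = x then 1 else 0) - n⁻¹ with hg
      have hg0 : ∑ z, g z = 0 := by
        simp only [hg, Finset.sum_sub_distrib, Finset.sum_const, Finset.card_univ, nsmul_eq_mul]
        rw [← hc, ← hn]
        simp; field_simp; ring
      have hg1 : ∑ z, g z ^ 2 ≤ 1 := by
        simp only [hg, sub_sq, Finset.sum_add_distrib, Finset.sum_sub_distrib, Finset.sum_const,
          Finset.card_univ, nsmul_eq_mul]
        rw [← hc, ← hn]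
        simp [← Finset.sum_mul]
        field_simp
        linarith
      have h11 := (hgp t g hg0).2
      have e : ∀ y, ((P ^ t) *ᵥ g) y = (P ^ t) x y - n⁻¹ := by
        intro y
        have hsy := (pow_symm P hs t).apply x y
        simp only [hg, Matrix.mulVec, dotProduct, mul_sub, Finset.sum_sub_distrib, ← Finset.sum_mul,
          pow_rowsum P h1 t]
        simp [hsy]
      simp_rw [e] at h11
      have hrt : (1 - 1 / T) ^ t ≤ 1 / (24 * n) := by
        refine (hrT t).trans ?_
        have htT : 24 * n ≤ t / T := by
          rw [le_div_iff₀ hT0, ht]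
          push_cast
          have hm0 : (0:ℝ) ≤ m := by positivity
          have hb0 : (0:ℝ) ≤ b := by positivity
          have hJ20 : (0:ℝ) ≤ J₂ := by positivity
          have hJn : 24 * n ≤ J₁ := by nlinarith
          calc 24 * n * T ≤ J₁ * m := by gcongr
            _ ≤ _ := by nlinarith [mul_nonneg hb0 hJ20, mul_nonneg hm0 hJ20,
                mul_nonneg hb0 (Nat.cast_nonneg (α := ℝ) J₁)]
        rw [Real.exp_neg, ← one_div]
        apply one_div_le_one_div_of_le (by positivity)
        have := Real.add_one_le_exp ((t : ℝ) / T)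
        linarith
      have hrt0 : 0 ≤ (1 - 1 / T) ^ t := pow_nonneg hr0 _
      calc n * ∑ y, ((P ^ t) x y - n⁻¹) ^ 2 ≤ n * (((1 - 1 / T) ^ t) ^ 2 * ∑ z, g z ^ 2) := by gcongr
        _ ≤ n * ((1 / (24 * n)) ^ 2 * 1) := by gcongr
        _ = 1 / (576 * n) := by field_simp; norm_num
        _ ≤ 1 / 32 := by
          apply one_div_le_one_div_of_le (by norm_num); linarith
    rw [hsplit, mul_add]
    linarith

end Final

/-- If `G` is a finite connected regular graph whose maximal hitting
time satisfies `H(G) ≤ κ|G|`, then there is `c = c(κ)` with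
`τ₂(G^◊) ≤ c |G| (T_rel(G) + log |G|)` for the lamplighter walk on `G^◊`. -/
theorem lamplighter_L2_mixing (κ : ℝ) (hκ : 0 < κ) :
    ∃ c : ℝ, 0 < c ∧
      ∀ (V : Type) [Fintype V] [DecidableEq V] [Nonempty V]
        (G : SimpleGraph V) (d : ℕ),
        G.Connected → G.IsRegularOfDegree d → 0 < d →
        maxHit (srw G d) ≤ κ * (Fintype.card V : ℝ) →
        (tau2 (lampChain (srw G d) 2) (unif ((V → Fin 2) × V)) : ℝ) ≤
          c * (Fintype.card V : ℝ) *
            (Trel (srw G d) + Real.log (Fintype.card V)) := by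
  refine ⟨500 * max κ 1, by positivity, ?_⟩
  intro V _ _ _ G d hconn hreg hd hH
  set P := srw G d with hP
  set n : ℝ := (Fintype.card V : ℝ) with hn
  have hκ1 : (1:ℝ) ≤ max κ 1 := le_max_right _ _
  have hd0 : (d : ℝ) ≠ 0 := by exact_mod_cast hd.ne'
  have h0 : ∀ x y, 0 ≤ P x y := by
    intro x y
    simp only [hP, srw]; split_ifs <;> positivity
  have h1 : ∀ x, ∑ y, P x y = 1 := by
    intro x
    simp only [hP, srw]
    rw [← Finset.sum_filter, Finset.sum_const, nsmul_eq_mul]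
    have : (Finset.univ.filter (fun y => G.Adj x y)).card = d := by
      rw [← hreg.degree_eq x, ← SimpleGraph.card_neighborFinset_eq_degree]
      congr 1
      ext y; simp
    rw [this, mul_inv_cancel₀ hd0]
  have hs : P.IsSymm := by
    ext x y
    simp only [Matrix.transpose_apply, hP, srw, G.adj_comm]
  have hcard : 2 ≤ Fintype.card V := by
    obtain ⟨x⟩ := (inferInstance : Nonempty V)
    have hdeg := hreg.degree_eq x
    have : 0 < G.degree x := by rw [hdeg]; exact hd
    obtain ⟨y, hy⟩ := (G.degree_pos_iff_exists_adj x).1 this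
    exact Fintype.one_lt_card_iff.2 ⟨x, y, hy.ne⟩
  have hn2 : (2:ℝ) ≤ n := by rw [hn]; exact_mod_cast hcard
  have hlog : 0 ≤ Real.log n := Real.log_nonneg (by linarith)
  have hchi : ∀ t, (∀ x, chiDist (lampChain P 2) (unif ((V → Fin 2) × V)) t x ≤ 1 / 4) ↔
      ∀ x, n * (∑ S : Finset V, ∑ y, ((kil P S ^ t) x y) ^ 2) - 1 ≤ 1 / 16 := by
    intro t
    have key : ∀ (η : V → Fin 2) (x : V), chiDist (lampChain P 2) (unif ((V → Fin 2) × V)) t (η, x) ≤ 1 / 4 ↔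
      n * (∑ S : Finset V, ∑ y, ((kil P S ^ t) x y) ^ 2) - 1 ≤ 1 / 16 := by
      intro η x
      rw [chiDist, chi_formula P h1 t η x, Real.sqrt_le_left (by norm_num)]
      norm_num
      rfl
    constructor
    · intro h x
      exact (key (fun _ => 0) x).1 (h _)
    · rintro h ⟨η, x⟩
      exact (key η x).2 (h x)
  by_cases hex : ∃ t, ∀ x, chiDist (lampChain P 2) (unif ((V → Fin 2) × V)) t x ≤ 1 / 4
  · obtain ⟨t₀, ht₀⟩ := hex
    rw [hchi] at ht₀
    have hbase : ∀ x, (Fintype.card V : ℝ) * ∑ y, (P ^ t₀) x y ^ 2 - 1 ≤ 1 / 16 := by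
      intro x
      refine le_trans ?_ (ht₀ x)
      have : ∑ y, ((kil P ∅ ^ t₀) x y) ^ 2 ≤ ∑ S : Finset V, ∑ y, ((kil P S ^ t₀) x y) ^ 2 :=
        Finset.single_le_sum (f := fun S : Finset V => ∑ y, ((kil P S ^ t₀) x y) ^ 2)
          (fun S _ => Finset.sum_nonneg fun y _ => sq_nonneg _) (Finset.mem_univ ∅)
      rw [kil_empty] at this
      rw [← hn]
      have hn0 : 0 ≤ n := by linarith
      gcongr
    obtain ⟨hT, hgap⟩ := gap_lemma P h1 hs t₀ hbase hcard
    have hH' : maxHit P ≤ max κ 1 * n := hH.trans (by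
      have hn0 : 0 ≤ n := by linarith
      gcongr
      exact le_max_left _ _)
    obtain ⟨t, ht, htx⟩ := main_bound P h0 h1 hs (max κ 1) (Trel P) n hn hn2 hκ1 hT hgap hH'
    refine le_trans ?_ ht
    have : tau2 (lampChain P 2) (unif ((V → Fin 2) × V)) ≤ t :=
      Nat.sInf_le ((hchi t).2 htx)
    exact_mod_cast this
  · have h2 : tau2 (lampChain P 2) (unif ((V → Fin 2) × V)) = 0 := by
      unfold tau2
      rw [Nat.sInf_eq_zero]
      right
      rw [Set.eq_empty_iff_forall_notMem]
      intro t ht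
      exact hex ⟨t, ht⟩
    rw [h2]
    have hTr : 0 ≤ Trel P := by
      apply Real.sSup_nonneg
      rintro _ ⟨l, ⟨hl, hl1⟩, rfl⟩
      have hle : |l| ≤ 1 := by
        have hA : P.IsHermitian := by
          unfold Matrix.IsHermitian
          rw [Matrix.conjTranspose_eq_transpose_of_trivial]; exact hs
        rw [hA.spectrum_real_eq_range_eigenvalues] at hl
        obtain ⟨i, rfl⟩ := hl
        set v : V → ℝ := fun x => (hA.eigenvectorBasis i) x with hv
        have hPv : P.mulVec v = hA.eigenvalues i • v := hA.mulVec_eigenvectorBasis i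
        have hv0 : v ≠ 0 := by
          intro h
          apply hA.eigenvectorBasis.orthonormal.ne_zero i
          ext x
          exact congrFun h x
        have hpos : 0 < ∑ x, v x ^ 2 := by
          obtain ⟨x, hx⟩ := Function.ne_iff.1 hv0
          have hx' : v x ≠ 0 := hx
          exact Finset.sum_pos' (fun _ _ => sq_nonneg _) ⟨x, Finset.mem_univ _, by positivity⟩
        have hc := contr P h0 (fun x => (h1 x).le) hs v
        rw [hPv] at hc
        simp only [Pi.smul_apply, smul_eq_mul, mul_pow, ← Finset.mul_sum] at hc
        have : hA.eigenvalues i ^ 2 ≤ 1 := by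
          by_contra hcon
          push Not at hcon
          nlinarith
        exact abs_le_one_iff_mul_self_le_one.2 (by rw [← sq]; exact this)
      exact div_nonneg zero_le_one (by linarith)
    have hn0 : 0 ≤ n := by linarith
    simp only [Nat.cast_zero]
    positivity

end Paper
end

section
/- There exists a universal constant c with the following property. Let P be a reversible Markov chain on a finite state space X with uniform stationary distribution π, started from an initial distribution μ satisfying μ(x) ≥ π(x)/2 for all x, and suppose the maximal hitting time satisfies H ≤ c₁|X| for a constant c₁ ≥ 1. Let θ ≥ 2 and let S_t denote the set of states not visited by the chain up to time t. Then for all a, b > 0 and all t ≥ t′ = C₁|X|·T_rel·log θ + C₂|X|·log|X|, where C₁ = 2c·c₁²·(1+a) and C₂ = c·c₁²·(1+b), one has E[θ^{|S_t|}] ≤ 1 + δ + δ² + δ⁹, where δ = θ^{−(1+2a)T_rel}·|X|^{−b}. In particular, when a = b = 1, E[θ^{|S_t|}] < 1.21. -/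
open Finset
open scoped Classical

namespace Paper

variable {X : Type} [Fintype X] [DecidableEq X]

set_option linter.unusedSectionVars false

/-! ### Dirichlet form -/

/-- Dirichlet form. -/
noncomputable def Df (P : Matrix X X ℝ) (f g : X → ℝ) : ℝ :=
  ∑ x, f x * (g x - ∑ y, P x y * g y)

lemma sum_P_sq_left {P : Matrix X X ℝ} (hP : IsStoch P) (u : X → ℝ) :
    ∑ x, ∑ y, P x y * u x = ∑ x, u x := by
  refine Finset.sum_congr rfl fun x _ => ?_
  rw [← Finset.sum_mul, hP.2 x, one_mul]

lemma sum_P_sq_right {P : Matrix X X ℝ} (hP : IsStoch P) (hs : ∀ x y, P x y = P y x) (u : X → ℝ) :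
    ∑ x, ∑ y, P x y * u y = ∑ x, u x := by
  rw [Finset.sum_comm, ← sum_P_sq_left hP u]
  refine Finset.sum_congr rfl fun x _ => Finset.sum_congr rfl fun y _ => ?_
  rw [hs]

lemma Df_eq {P : Matrix X X ℝ} (f g : X → ℝ) :
    Df P f g = ∑ x, f x * g x - ∑ x, ∑ y, P x y * (f x * g y) := by
  unfold Df
  rw [← Finset.sum_sub_distrib]
  refine Finset.sum_congr rfl fun x _ => ?_
  rw [mul_sub, Finset.mul_sum]
  congr 1
  refine Finset.sum_congr rfl fun y _ => by ring

lemma Df_self {P : Matrix X X ℝ} (hP : IsStoch P) (hs : ∀ x y, P x y = P y x) (f : X → ℝ) :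
    2 * Df P f f = ∑ x, ∑ y, P x y * (f x - f y) ^ 2 := by
  have h1 := sum_P_sq_left hP (fun x => f x ^ 2)
  have h2 := sum_P_sq_right hP hs (fun x => f x ^ 2)
  have : ∑ x, ∑ y, P x y * (f x - f y) ^ 2 = ∑ x, ∑ y, P x y * f x ^ 2
      + ∑ x, ∑ y, P x y * f y ^ 2 - 2 * ∑ x, ∑ y, P x y * (f x * f y) := by
    simp only [Finset.mul_sum, ← Finset.sum_add_distrib, ← Finset.sum_sub_distrib]
    refine Finset.sum_congr rfl fun x _ => Finset.sum_congr rfl fun y _ => by ring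
  rw [this, h1, h2, Df_eq]
  have : ∑ x, f x * f x = ∑ x, f x ^ 2 := Finset.sum_congr rfl fun x _ => by ring
  rw [this]; ring

lemma Df_self_add {P : Matrix X X ℝ} (hP : IsStoch P) (hs : ∀ x y, P x y = P y x) (f : X → ℝ) :
    4 * (∑ x, f x ^ 2) - 2 * Df P f f = ∑ x, ∑ y, P x y * (f x + f y) ^ 2 := by
  have h1 := sum_P_sq_left hP (fun x => f x ^ 2)
  have h2 := sum_P_sq_right hP hs (fun x => f x ^ 2)
  have : ∑ x, ∑ y, P x y * (f x + f y) ^ 2 = ∑ x, ∑ y, P x y * f x ^ 2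
      + ∑ x, ∑ y, P x y * f y ^ 2 + 2 * ∑ x, ∑ y, P x y * (f x * f y) := by
    simp only [Finset.mul_sum, ← Finset.sum_add_distrib]
    refine Finset.sum_congr rfl fun x _ => Finset.sum_congr rfl fun y _ => by ring
  rw [this, h1, h2, Df_eq]
  have : ∑ x, f x * f x = ∑ x, f x ^ 2 := Finset.sum_congr rfl fun x _ => by ring
  rw [this]; ring

lemma Df_nonneg {P : Matrix X X ℝ} (hP : IsStoch P) (hs : ∀ x y, P x y = P y x) (f : X → ℝ) :
    0 ≤ Df P f f := by
  have := Df_self hP hs f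
  have h : 0 ≤ ∑ x, ∑ y, P x y * (f x - f y) ^ 2 :=
    Finset.sum_nonneg fun x _ => Finset.sum_nonneg fun y _ => mul_nonneg (hP.1 x y) (sq_nonneg _)
  linarith

lemma Df_symm {P : Matrix X X ℝ} (hs : ∀ x y, P x y = P y x) (f g : X → ℝ) :
    Df P f g = Df P g f := by
  rw [Df_eq, Df_eq]
  congr 1
  · exact Finset.sum_congr rfl fun x _ => mul_comm _ _
  · rw [Finset.sum_comm]
    refine Finset.sum_congr rfl fun x _ => Finset.sum_congr rfl fun y _ => ?_
    rw [hs y x]; ring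

lemma Df_comb {P : Matrix X X ℝ} (hs : ∀ x y, P x y = P y x) (f g : X → ℝ) (r : ℝ) :
    Df P (fun x => f x + r * g x) (fun x => f x + r * g x) =
      Df P g g * (r * r) + (2 * Df P f g) * r + Df P f f := by
  have h := Df_symm hs f g
  have key : Df P (fun x => f x + r * g x) (fun x => f x + r * g x) =
      Df P f f + r * Df P f g + r * Df P g f + r * r * Df P g g := by
    simp only [Df_eq, Finset.mul_sum, mul_sub]
    have : ∀ a b c d e f' g' h' : ℝ, a - b + (c - d) + (e - f') + (g' - h')
      = (a + c + e + g') - (b + d + f' + h') := by intros; ring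
    rw [this]
    simp only [← Finset.sum_add_distrib]
    congr 1
    · exact Finset.sum_congr rfl fun x _ => by ring
    · exact Finset.sum_congr rfl fun x _ => Finset.sum_congr rfl fun y _ => by ring
  rw [key, ← h]; ring

lemma Df_cs {P : Matrix X X ℝ} (hP : IsStoch P) (hs : ∀ x y, P x y = P y x) (f g : X → ℝ) :
    (Df P f g) ^ 2 ≤ Df P f f * Df P g g := by
  have := discrim_le_zero (a := Df P g g) (b := 2 * Df P f g) (c := Df P f f) (fun r => by
    rw [← Df_comb hs]; exact Df_nonneg hP hs _)
  unfold discrim at this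
  nlinarith

lemma const_of_Df_zero {P : Matrix X X ℝ} (hP : IsStoch P) (hs : ∀ x y, P x y = P y x)
    (hI : Irred P) (f : X → ℝ) (h0 : Df P f f = 0) : ∀ x y, f x = f y := by
  have h1 : ∀ x y, 0 < P x y → f x = f y := by
    intro x y hxy
    have h := Df_self hP hs f
    rw [h0, mul_zero, eq_comm, Finset.sum_eq_zero_iff_of_nonneg (fun x _ =>
      Finset.sum_nonneg fun y _ => mul_nonneg (hP.1 x y) (sq_nonneg _))] at h
    have h := h x (Finset.mem_univ _)
    rw [Finset.sum_eq_zero_iff_of_nonneg (fun y _ => mul_nonneg (hP.1 x y) (sq_nonneg _))] at h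
    have h := h y (Finset.mem_univ _)
    rcases mul_eq_zero.1 h with h | h
    · linarith
    · have := pow_eq_zero_iff (two_ne_zero) |>.1 h
      linarith
  have h2 : ∀ n : ℕ, (∀ x y, 0 ≤ (P ^ n) x y) ∧ ∀ x y, 0 < (P ^ n) x y → f x = f y := by
    intro n
    induction n with
    | zero =>
      refine ⟨fun x y => ?_, fun x y h => ?_⟩
      · simp only [pow_zero, Matrix.one_apply]; split_ifs <;> norm_num
      · simp only [pow_zero, Matrix.one_apply] at h
        split_ifs at h with hxy
        · rw [hxy]
        · exact absurd h (lt_irrefl _)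
    | succ n ih =>
      refine ⟨fun x y => ?_, fun x y h => ?_⟩
      · rw [pow_succ, Matrix.mul_apply]
        exact Finset.sum_nonneg fun z _ => mul_nonneg (ih.1 _ _) (hP.1 _ _)
      · rw [pow_succ, Matrix.mul_apply] at h
        obtain ⟨z, -, hz⟩ := Finset.exists_ne_zero_of_sum_ne_zero h.ne'
        have ha : (P ^ n) x z ≠ 0 := left_ne_zero_of_mul hz
        have hb : P z y ≠ 0 := right_ne_zero_of_mul hz
        rw [ih.2 x z (lt_of_le_of_ne (ih.1 _ _) ha.symm),
          h1 z y (lt_of_le_of_ne (hP.1 _ _) hb.symm)]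
  intro x y
  obtain ⟨n, hn⟩ := hI x y
  exact (h2 n).2 x y hn

/-! ### Survival probabilities -/

/-- Probability of avoiding `B` up to time `n`. -/
noncomputable def surv (P : Matrix X X ℝ) (B : Finset X) : ℕ → X → ℝ
  | 0, x => if x ∈ B then 0 else 1
  | n + 1, x => if x ∈ B then 0 else ∑ y, P x y * surv P B n y

lemma prPath_avoid (P : Matrix X X ℝ) (B : Finset X) (n : ℕ) : ∀ (μ : X → ℝ),
    prPath P μ n (fun ω => ∀ i, ω i ∉ B) = ∑ x, μ x * surv P B n x := by
  induction n with
  | zero =>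
    intro μ
    unfold prPath
    rw [← (Equiv.funUnique (Fin 1) X).symm.sum_comp]
    refine Finset.sum_congr rfl fun x _ => ?_
    simp [pathProb, surv]
  | succ n ih =>
    intro μ
    unfold prPath
    rw [← (Fin.consEquiv (fun _ : Fin (n + 2) => X)).sum_comp, Fintype.sum_prod_type]
    refine Finset.sum_congr rfl fun x _ => ?_
    by_cases hx : x ∈ B
    · simp [surv, hx, Fin.forall_fin_succ, Fin.consEquiv]
    · have := ih (fun y => μ x * P x y)
      simp only [surv, hx, if_false, Finset.mul_sum]
      simp only [mul_assoc] at this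
      rw [← this]
      unfold prPath
      refine Finset.sum_congr rfl fun ω _ => ?_
      have e1 : (∀ i, (Fin.consEquiv (fun _ : Fin (n + 2) => X)) (x, ω) i ∉ B) ↔ ∀ i, ω i ∉ B := by
        rw [Fin.forall_fin_succ]
        simp [Fin.consEquiv, hx]
      simp only [e1]
      split_ifs
      · simp only [pathProb, Fin.consEquiv]
        rw [Fin.prod_univ_succ]
        simp [Fin.cons_succ, mul_assoc]
      · rfl

lemma surv_nonneg {P : Matrix X X ℝ} (hP : IsStoch P) (B : Finset X) (n : ℕ) :
    ∀ x, 0 ≤ surv P B n x := by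
  induction n with
  | zero => intro x; simp only [surv]; split_ifs <;> norm_num
  | succ n ih =>
    intro x; simp only [surv]; split_ifs
    · exact le_rfl
    · exact Finset.sum_nonneg fun y _ => mul_nonneg (hP.1 _ _) (ih y)

lemma surv_mem (P : Matrix X X ℝ) (B : Finset X) (n : ℕ) {x : X} (hx : x ∈ B) :
    surv P B n x = 0 := by
  cases n <;> simp [surv, hx]

/-- Spectral decay of the survival probability. -/
lemma surv_sq_le {P : Matrix X X ℝ} (hP : IsStoch P) (hs : ∀ x y, P x y = P y x)
    (B : Finset X) (lam : ℝ)
    (hlam : ∀ f : X → ℝ, (∀ x ∈ B, f x = 0) → lam * ∑ x, f x ^ 2 ≤ Df P f f) (n : ℕ) :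
    ∑ x, surv P B n x ^ 2 ≤ Fintype.card X * (Real.exp (-lam) ^ n) ^ 2 := by
  set ρ := Real.exp (-lam) with hρ
  have hρ0 : 0 < ρ := Real.exp_pos _
  have hρ1 : 1 - lam ≤ ρ := by have := Real.add_one_le_exp (-lam); linarith
  have hN : ∀ f : X → ℝ, 0 ≤ ∑ x, f x ^ 2 := fun f => Finset.sum_nonneg fun x _ => sq_nonneg _
  -- quadratic form bound
  have hq : ∀ f : X → ℝ, (∀ x ∈ B, f x = 0) →
      ∑ x, ∑ y, P x y * (f x * f y) ≤ ρ * ∑ x, f x ^ 2 := by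
    intro f hf
    have h1 := hlam f hf
    rw [Df_eq] at h1
    have : ∑ x, f x * f x = ∑ x, f x ^ 2 := Finset.sum_congr rfl fun x _ => by ring
    rw [this] at h1
    nlinarith [hN f]
  have hq' : ∀ f : X → ℝ, (∀ x ∈ B, f x = 0) →
      |∑ x, ∑ y, P x y * (f x * f y)| ≤ ρ * ∑ x, f x ^ 2 := by
    intro f hf
    have h1 := hq (fun x => |f x|) (fun x hx => by simp [hf x hx])
    simp only [sq_abs] at h1
    refine le_trans ?_ h1
    refine (Finset.abs_sum_le_sum_abs _ _).trans (Finset.sum_le_sum fun x _ => ?_)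
    refine (Finset.abs_sum_le_sum_abs _ _).trans (Finset.sum_le_sum fun y _ => ?_)
    rw [abs_mul, abs_mul, abs_of_nonneg (hP.1 x y)]
  have hbil : ∀ f g : X → ℝ, (∀ x ∈ B, f x = 0) → (∀ x ∈ B, g x = 0) →
      2 * ∑ x, ∑ y, P x y * (f x * g y) ≤ ρ * (∑ x, f x ^ 2 + ∑ x, g x ^ 2) := by
    intro f g hf hg
    have h1 := (abs_le.1 (hq' (fun x => f x + g x) (fun x hx => by simp [hf x hx, hg x hx]))).2
    have h2 := (abs_le.1 (hq' (fun x => f x - g x) (fun x hx => by simp [hf x hx, hg x hx]))).1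
    have hsym : ∑ x, ∑ y, P x y * (f x * g y) = ∑ x, ∑ y, P x y * (g x * f y) := by
      rw [Finset.sum_comm]
      refine Finset.sum_congr rfl fun x _ => Finset.sum_congr rfl fun y _ => ?_
      rw [hs y x]; ring
    have e1 : ∑ x, ∑ y, P x y * ((f x + g x) * (f y + g y)) -
        ∑ x, ∑ y, P x y * ((f x - g x) * (f y - g y)) = 2 * ∑ x, ∑ y, P x y * (f x * g y)
        + 2 * ∑ x, ∑ y, P x y * (g x * f y) := by
      simp only [Finset.mul_sum, ← Finset.sum_add_distrib, ← Finset.sum_sub_distrib]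
      exact Finset.sum_congr rfl fun x _ => Finset.sum_congr rfl fun y _ => by ring
    have e2 : ∑ x, (f x + g x) ^ 2 + ∑ x, (f x - g x) ^ 2 =
        2 * (∑ x, f x ^ 2 + ∑ x, g x ^ 2) := by
      simp only [Finset.mul_sum, ← Finset.sum_add_distrib]
      exact Finset.sum_congr rfl fun x _ => by ring
    have e3 : ρ * ∑ x, (f x + g x) ^ 2 + ρ * ∑ x, (f x - g x) ^ 2 =
        2 * (ρ * (∑ x, f x ^ 2 + ∑ x, g x ^ 2)) := by
      rw [← mul_add, e2]; ring
    rw [← hsym] at e1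
    linarith
  induction n with
  | zero =>
    simp only [pow_zero, one_pow, mul_one]
    calc ∑ x, surv P B 0 x ^ 2 ≤ ∑ x : X, (1 : ℝ) := by
          refine Finset.sum_le_sum fun x _ => ?_
          simp only [surv]; split_ifs <;> norm_num
      _ = _ := by simp
  | succ n ih =>
    have h := hbil (fun x => ρ⁻¹ * surv P B (n + 1) x) (surv P B n)
      (fun x hx => by simp [surv_mem P B _ hx]) (fun x hx => surv_mem P B _ hx)
    have e1 : ∑ x, ∑ y, P x y * (ρ⁻¹ * surv P B (n + 1) x * surv P B n y) =
        ρ⁻¹ * ∑ x, surv P B (n + 1) x ^ 2 := by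
      rw [Finset.mul_sum]
      refine Finset.sum_congr rfl fun x _ => ?_
      by_cases hx : x ∈ B
      · simp [surv_mem P B _ hx]
      · have : surv P B (n + 1) x = ∑ y, P x y * surv P B n y := by simp [surv, hx]
        rw [pow_two]
        nth_rewrite 3 [this]
        rw [← mul_assoc, Finset.mul_sum]
        exact Finset.sum_congr rfl fun y _ => by ring
    have e2 : ∑ x, (ρ⁻¹ * surv P B (n + 1) x) ^ 2 = ρ⁻¹ ^ 2 * ∑ x, surv P B (n + 1) x ^ 2 := by
      rw [Finset.mul_sum]
      exact Finset.sum_congr rfl fun x _ => by ring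
    rw [e1, e2] at h
    set a := ∑ x, surv P B (n + 1) x ^ 2
    set b := ∑ x, surv P B n x ^ 2
    have h3 : a ≤ ρ ^ 2 * b := by
      have h4 : ρ * (2 * (ρ⁻¹ * a)) ≤ ρ * (ρ * (ρ⁻¹ ^ 2 * a + b)) :=
        mul_le_mul_of_nonneg_left h hρ0.le
      have e5 : ρ * (2 * (ρ⁻¹ * a)) = 2 * a := by field_simp
      have e6 : ρ * (ρ * (ρ⁻¹ ^ 2 * a + b)) = a + ρ ^ 2 * b := by field_simp
      rw [e5, e6] at h4
      linarith
    calc a ≤ ρ ^ 2 * b := h3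
      _ ≤ ρ ^ 2 * (Fintype.card X * (ρ ^ n) ^ 2) := mul_le_mul_of_nonneg_left ih (by positivity)
      _ = _ := by ring

lemma surv_le {P : Matrix X X ℝ} (hP : IsStoch P) (hs : ∀ x y, P x y = P y x)
    (B : Finset X) (lam : ℝ)
    (hlam : ∀ f : X → ℝ, (∀ x ∈ B, f x = 0) → lam * ∑ x, f x ^ 2 ≤ Df P f f) (n : ℕ) (x : X) :
    surv P B n x ≤ Fintype.card X * Real.exp (-(n * lam)) := by
  have h1 := surv_sq_le hP hs B lam hlam n
  have h2 : surv P B n x ^ 2 ≤ ∑ x, surv P B n x ^ 2 :=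
    Finset.single_le_sum (f := fun x => surv P B n x ^ 2) (fun x _ => sq_nonneg _)
      (Finset.mem_univ x)
  have e : Real.exp (-(n * lam)) = Real.exp (-lam) ^ n := by
    rw [← Real.exp_nat_mul]; congr 1; ring
  rw [e]
  have hn : (1 : ℝ) ≤ Fintype.card X := by
    exact_mod_cast Fintype.card_pos_iff.2 ⟨x⟩
  refine abs_le_of_sq_le_sq' (a := surv P B n x) ?_ (by positivity) |>.2
  rw [mul_pow]
  refine (h2.trans h1).trans ?_
  apply mul_le_mul_of_nonneg_right _ (by positivity)
  nlinarith

/-! ### Hitting times -/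

lemma exists_hit {P : Matrix X X ℝ} (hP : IsStoch P) (hs : ∀ x y, P x y = P y x)
    (hI : Irred P) (z : X) :
    ∃ h : X → ℝ, h z = 0 ∧ ∀ x, x ≠ z → h x = 1 + ∑ y, P x y * h y := by
  let L : (X → ℝ) →ₗ[ℝ] (X → ℝ) :=
    { toFun := fun f x => f x - if x = z then 0 else ∑ y, P x y * f y
      map_add' := by
        intro f g; funext x
        by_cases hx : x = z
        · simp [hx]
        · simp only [hx, if_false, Pi.add_apply, mul_add, Finset.sum_add_distrib]; ring
      map_smul' := by
        intro r f; funext x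
        by_cases hx : x = z
        · simp [hx]
        · simp only [hx, if_false, Pi.smul_apply, smul_eq_mul, RingHom.id_apply, mul_sub,
            Finset.mul_sum]
          congr 1
          exact Finset.sum_congr rfl fun y _ => by ring }
  have hL : ∀ f x, L f x = f x - if x = z then 0 else ∑ y, P x y * f y := fun f x => rfl
  have hinj : Function.Injective L := by
    rw [← LinearMap.ker_eq_bot, LinearMap.ker_eq_bot']
    intro f hf
    have hz : f z = 0 := by
      have := hL f z
      rw [hf] at this
      simpa using this.symm
    have h0 : Df P f f = 0 := by
      unfold Df
      refine Finset.sum_eq_zero fun x _ => ?_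
      by_cases hx : x = z
      · rw [hx, hz, zero_mul]
      · have := hL f x
        rw [hf] at this
        simp only [hx, if_false, Pi.zero_apply] at this
        rw [← this, mul_zero]
    funext x
    rw [const_of_Df_zero hP hs hI f h0 x z, hz]; rfl
  have hsur := LinearMap.injective_iff_surjective.1 hinj
  obtain ⟨h, hh⟩ := hsur (fun x => if x = z then 0 else 1)
  refine ⟨h, ?_, fun x hx => ?_⟩
  · have := hL h z
    rw [hh] at this
    simpa using this.symm
  · have := hL h x
    rw [hh] at this
    simp only [hx, if_false] at this
    linarith

lemma summable_surv {P : Matrix X X ℝ} (hP : IsStoch P) (hs : ∀ x y, P x y = P y x)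
    (hI : Irred P) (z x : X) : Summable (fun n => surv P {z} n x) := by
  obtain ⟨h, hz, hh⟩ := exists_hit hP hs hI z
  have hM : ∀ x, |h x| ≤ ∑ y, |h y| := fun x =>
    Finset.single_le_sum (f := fun y => |h y|) (fun y _ => abs_nonneg _) (Finset.mem_univ x)
  set M := ∑ y, |h y|
  have key : ∀ N : ℕ, ∀ x, |h x - ∑ m ∈ Finset.range N, surv P {z} m x| ≤ M := by
    intro N
    induction N with
    | zero => intro x; simpa using hM x
    | succ N ih =>
      intro x
      by_cases hx : x = z
      · have : ∀ m, surv P {z} m x = 0 := fun m => surv_mem P _ m (by simp [hx])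
        simp only [this, Finset.sum_const_zero, sub_zero]
        exact hM x
      · have e : h x - ∑ m ∈ Finset.range (N + 1), surv P {z} m x =
            ∑ y, P x y * (h y - ∑ m ∈ Finset.range N, surv P {z} m y) := by
          rw [Finset.sum_range_succ', hh x hx]
          simp only [surv, Finset.mem_singleton, hx, if_false, mul_sub, Finset.sum_sub_distrib]
          rw [Finset.sum_comm]
          simp only [Finset.mul_sum]
          ring
        rw [e]
        calc |∑ y, P x y * (h y - ∑ m ∈ Finset.range N, surv P {z} m y)|
            ≤ ∑ y, P x y * M := by
              refine (Finset.abs_sum_le_sum_abs _ _).trans (Finset.sum_le_sum fun y _ => ?_)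
              rw [abs_mul, abs_of_nonneg (hP.1 x y)]
              exact mul_le_mul_of_nonneg_left (ih y) (hP.1 x y)
          _ = M := by rw [← Finset.sum_mul, hP.2 x, one_mul]
  refine summable_of_sum_range_le (c := 2 * M) (fun n => surv_nonneg hP _ n x) fun N => ?_
  have h1 := (abs_le.1 (key N x)).1
  have h2 := (abs_le.1 (hM x)).2
  linarith

lemma hitExp_eq {P : Matrix X X ℝ} (hP : IsStoch P) (hs : ∀ x y, P x y = P y x)
    (hI : Irred P) (x z : X) : hitExp P x z = ∑' n, surv P {z} n x := by
  unfold hitExp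
  have e : ∀ n, prPath P (delta x) n (fun ω => ∀ i, ω i ≠ z) = surv P {z} n x := by
    intro n
    have := prPath_avoid P {z} n (delta x)
    simp only [Finset.mem_singleton] at this
    rw [show prPath P (delta x) n (fun ω => ∀ i, ω i ≠ z) = _ from this]
    simp [delta]
  simp only [e]
  rw [← ENNReal.ofReal_tsum_of_nonneg (fun n => surv_nonneg hP _ n x)
    (summable_surv hP hs hI z x), ENNReal.toReal_ofReal
    (tsum_nonneg fun n => surv_nonneg hP _ n x)]

lemma hitExp_nonneg (P : Matrix X X ℝ) (x z : X) : 0 ≤ hitExp P x z := ENNReal.toReal_nonneg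

lemma hitExp_le (P : Matrix X X ℝ) (x z : X) : hitExp P x z ≤ maxHit P := by
  unfold maxHit
  refine le_trans ?_ (le_ciSup (f := fun x => ⨆ y, hitExp P x y) (Set.finite_range _).bddAbove x)
  exact le_ciSup (f := fun y => hitExp P x y) (Set.finite_range _).bddAbove z

lemma hitExp_self {P : Matrix X X ℝ} (hP : IsStoch P) (hs : ∀ x y, P x y = P y x)
    (hI : Irred P) (z : X) : hitExp P z z = 0 := by
  rw [hitExp_eq hP hs hI]
  have : ∀ n, surv P {z} n z = 0 := fun n => surv_mem P _ n (by simp)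
  simp [this]

lemma hitExp_step {P : Matrix X X ℝ} (hP : IsStoch P) (hs : ∀ x y, P x y = P y x)
    (hI : Irred P) {x z : X} (hx : x ≠ z) :
    hitExp P x z = 1 + ∑ y, P x y * hitExp P y z := by
  simp only [hitExp_eq hP hs hI]
  rw [(summable_surv hP hs hI z x).tsum_eq_zero_add]
  have h0 : surv P {z} 0 x = 1 := by simp [surv, hx]
  rw [h0]
  congr 1
  have h1 : ∀ n, surv P {z} (n + 1) x = ∑ y, P x y * surv P {z} n y := by
    intro n; simp [surv, hx]
  simp only [h1]
  rw [Summable.tsum_finsetSum (fun y _ => (summable_surv hP hs hI z y).mul_left _)]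
  exact Finset.sum_congr rfl fun y _ => tsum_mul_left

lemma hitExp_lap {P : Matrix X X ℝ} (hP : IsStoch P) (hs : ∀ x y, P x y = P y x)
    (hI : Irred P) (x z : X) :
    hitExp P x z - ∑ y, P x y * hitExp P y z = 1 - Fintype.card X * (if x = z then 1 else 0) := by
  by_cases hx : x = z
  · subst hx
    have hsum : ∑ w, (hitExp P w x - ∑ y, P w y * hitExp P y x) = 0 := by
      rw [Finset.sum_sub_distrib, sum_P_sq_right hP hs, sub_self]
    rw [← Finset.add_sum_erase _ _ (Finset.mem_univ x)] at hsum
    have h2 : ∑ w ∈ Finset.univ.erase x, (hitExp P w x - ∑ y, P w y * hitExp P y x)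
        = (Fintype.card X : ℝ) - 1 := by
      rw [Finset.sum_congr rfl (g := fun _ => (1 : ℝ))]
      · rw [Finset.sum_const, Finset.card_erase_of_mem (Finset.mem_univ x), Finset.card_univ,
          nsmul_eq_mul, mul_one, Nat.cast_sub (Fintype.card_pos_iff.2 ⟨x⟩)]
        simp
      · intro w hw
        rw [hitExp_step hP hs hI (Finset.ne_of_mem_erase hw)]; ring
    rw [h2] at hsum
    simp only [if_true, mul_one]
    linarith
  · rw [hitExp_step hP hs hI hx]; simp [hx]

/-- Barta type bound for a single point. -/
lemma point_bound {P : Matrix X X ℝ} (hP : IsStoch P) (hs : ∀ x y, P x y = P y x)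
    (hI : Irred P) (z : X) (R : ℝ) (hR : ∀ x, hitExp P x z + 1 ≤ R) (f : X → ℝ) (hf : f z = 0) :
    ∑ x, f x ^ 2 ≤ R * Df P f f := by
  set h : X → ℝ := fun x => hitExp P x z + 1 with hh
  have hpos : ∀ x, 0 < h x := fun x => by have := hitExp_nonneg P x z; simp only [hh]; linarith
  have hR0 : 0 < R := (hpos z).trans_le (hR z)
  have hPh : ∀ x, x ≠ z → ∑ y, P x y * h y = h x - 1 := by
    intro x hx
    simp only [hh, mul_add, Finset.sum_add_distrib, mul_one, hP.2 x]
    rw [hitExp_step hP hs hI hx]; ring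
  have h1 : 2 * ∑ x, ∑ y, P x y * (f x * f y) ≤
      ∑ x, ∑ y, P x y * (f x ^ 2 * h y / h x) + ∑ x, ∑ y, P x y * (f y ^ 2 * h x / h y) := by
    simp only [Finset.mul_sum, ← Finset.sum_add_distrib]
    refine Finset.sum_le_sum fun x _ => Finset.sum_le_sum fun y _ => ?_
    have : 2 * (f x * f y) ≤ f x ^ 2 * h y / h x + f y ^ 2 * h x / h y := by
      have := hpos x; have := hpos y
      rw [div_add_div _ _ (hpos x).ne' (hpos y).ne', le_div_iff₀ (by positivity)]
      nlinarith [sq_nonneg (f x * h y - f y * h x)]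
    have := mul_le_mul_of_nonneg_left this (hP.1 x y)
    linarith
  have h2 : ∑ x, ∑ y, P x y * (f y ^ 2 * h x / h y) = ∑ x, ∑ y, P x y * (f x ^ 2 * h y / h x) := by
    rw [Finset.sum_comm]
    refine Finset.sum_congr rfl fun x _ => Finset.sum_congr rfl fun y _ => ?_
    rw [hs]
  have h3 : ∑ x, ∑ y, P x y * (f x ^ 2 * h y / h x) ≤ ∑ x, (f x ^ 2 - f x ^ 2 / R) := by
    refine Finset.sum_le_sum fun x _ => ?_
    by_cases hx : x = z
    · simp [hx, hf]
    · have : ∑ y, P x y * (f x ^ 2 * h y / h x) = f x ^ 2 / h x * ∑ y, P x y * h y := by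
        rw [Finset.mul_sum]
        exact Finset.sum_congr rfl fun y _ => by ring
      rw [this, hPh x hx]
      have e : f x ^ 2 / h x * (h x - 1) = f x ^ 2 - f x ^ 2 / h x := by
        have := (hpos x).ne'; field_simp
      rw [e]
      have : f x ^ 2 / R ≤ f x ^ 2 / h x :=
        div_le_div_of_nonneg_left (sq_nonneg _) (hpos x) (hR x)
      linarith
  rw [Finset.sum_sub_distrib, ← Finset.sum_div] at h3
  have h4 : Df P f f = ∑ x, f x ^ 2 - ∑ x, ∑ y, P x y * (f x * f y) := by
    rw [Df_eq]; congr 1; exact Finset.sum_congr rfl fun x _ => by ring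
  have h5 : (∑ x, f x ^ 2) / R ≤ Df P f f := by linarith
  rw [div_le_iff₀ hR0] at h5
  linarith

/-! ### Weighted sources -/

/-- Green kernel (times `n`). -/
noncomputable def Gk (P : Matrix X X ℝ) (y z : X) : ℝ :=
  (∑ x, hitExp P x z) / Fintype.card X - hitExp P y z

/-- Energy of a weight. -/
noncomputable def Qe (P : Matrix X X ℝ) (w : X → ℝ) : ℝ := ∑ y, ∑ z, w y * w z * Gk P y z

/-- Potential of a weight. -/
noncomputable def Uw (P : Matrix X X ℝ) (w : X → ℝ) (x : X) : ℝ := - ∑ z, w z * hitExp P x z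

lemma Uw_lap {P : Matrix X X ℝ} (hP : IsStoch P) (hs : ∀ x y, P x y = P y x)
    (hI : Irred P) (w : X → ℝ) (hw : ∑ x, w x = 1) (x : X) :
    Uw P w x - ∑ y, P x y * Uw P w y = Fintype.card X * w x - 1 := by
  have e : Uw P w x - ∑ y, P x y * Uw P w y =
      - ∑ z, w z * (hitExp P x z - ∑ y, P x y * hitExp P y z) := by
    simp only [Uw, mul_neg, Finset.sum_neg_distrib, mul_sub, Finset.sum_sub_distrib,
      Finset.mul_sum]
    rw [Finset.sum_comm]
    have : ∀ z y, P x y * (w z * hitExp P y z) = w z * (P x y * hitExp P y z) := by intros; ring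
    simp only [this]
    ring
  rw [e]
  simp only [hitExp_lap hP hs hI, mul_sub, Finset.sum_sub_distrib, mul_one, hw]
  have : ∑ z, w z * ((Fintype.card X : ℝ) * if x = z then 1 else 0) = Fintype.card X * w x := by
    simp [mul_comm]
  rw [this]; ring

lemma Df_Uw {P : Matrix X X ℝ} (hP : IsStoch P) (hs : ∀ x y, P x y = P y x)
    (hI : Irred P) (w : X → ℝ) (hw : ∑ x, w x = 1) (f : X → ℝ) :
    Df P f (Uw P w) = Fintype.card X * (∑ x, f x * w x) - ∑ x, f x := by
  unfold Df
  simp only [Uw_lap hP hs hI w hw, mul_sub, Finset.sum_sub_distrib, mul_one, Finset.mul_sum]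
  congr 1
  exact Finset.sum_congr rfl fun x _ => by ring

lemma Df_Uw_self [Nonempty X] {P : Matrix X X ℝ} (hP : IsStoch P) (hs : ∀ x y, P x y = P y x)
    (hI : Irred P) (w : X → ℝ) (hw : ∑ x, w x = 1) :
    Df P (Uw P w) (Uw P w) = Fintype.card X * Qe P w := by
  rw [Df_Uw hP hs hI w hw]
  have hn : (Fintype.card X : ℝ) ≠ 0 := by exact_mod_cast Fintype.card_ne_zero
  have e1 : ∑ x, Uw P w x = - ∑ z, w z * ∑ x, hitExp P x z := by
    simp only [Uw, Finset.sum_neg_distrib, Finset.mul_sum]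
    rw [Finset.sum_comm]
  have e2 : ∑ x, Uw P w x * w x = - ∑ x, ∑ z, w x * w z * hitExp P x z := by
    simp only [Uw, neg_mul, Finset.sum_neg_distrib, Finset.sum_mul]
    congr 1
    exact Finset.sum_congr rfl fun x _ => Finset.sum_congr rfl fun y _ => by ring
  have e3 : Qe P w = (∑ z, w z * ∑ x, hitExp P x z) / Fintype.card X
      - ∑ x, ∑ z, w x * w z * hitExp P x z := by
    unfold Qe Gk
    simp only [mul_sub, Finset.sum_sub_distrib]
    congr 1
    have : ∀ y z, w y * w z * ((∑ x, hitExp P x z) / Fintype.card X) =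
        w y * ((w z * ∑ x, hitExp P x z) / Fintype.card X) := by intros; ring
    simp only [this, ← Finset.mul_sum]
    rw [← Finset.sum_mul, hw, one_mul, Finset.sum_div]
  rw [e1, e2, e3]
  field_simp
  ring

lemma Df_shift {P : Matrix X X ℝ} (hP : IsStoch P) (hs : ∀ x y, P x y = P y x) (f : X → ℝ)
    (m : ℝ) : Df P (fun x => f x - m) (fun x => f x - m) = Df P f f := by
  have h1 := Df_self hP hs f
  have h2 := Df_self hP hs (fun x => f x - m)
  simp only [sub_sub_sub_cancel_right] at h2
  linarith

lemma sum_shift [Nonempty X] (f : X → ℝ) :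
    ∑ x, (f x - (∑ y, f y) / Fintype.card X) = 0 ∧
    ∑ x, f x ^ 2 = ∑ x, (f x - (∑ y, f y) / Fintype.card X) ^ 2
      + (∑ y, f y) ^ 2 / Fintype.card X := by
  have hn : (Fintype.card X : ℝ) ≠ 0 := by exact_mod_cast Fintype.card_ne_zero
  constructor
  · rw [Finset.sum_sub_distrib, Finset.sum_const, Finset.card_univ, nsmul_eq_mul]
    field_simp; ring
  · simp only [sub_sq, Finset.sum_add_distrib, Finset.sum_sub_distrib, Finset.sum_const,
      Finset.card_univ, nsmul_eq_mul, ← Finset.sum_mul, ← Finset.mul_sum]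
    field_simp; ring

lemma weight_bound [Nonempty X] {P : Matrix X X ℝ} (hP : IsStoch P) (hs : ∀ x y, P x y = P y x)
    (hI : Irred P) (T : ℝ) (hT : ∀ f : X → ℝ, ∑ x, f x = 0 → ∑ x, f x ^ 2 ≤ T * Df P f f)
    (w : X → ℝ) (hw : ∑ x, w x = 1) (f : X → ℝ) (hf : ∀ x, f x * w x = 0) :
    ∑ x, f x ^ 2 ≤ (T + Qe P w) * Df P f f := by
  have hn : (0 : ℝ) < Fintype.card X := by exact_mod_cast Fintype.card_pos
  have h1 := Df_cs hP hs f (Uw P w)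
  rw [Df_Uw hP hs hI w hw, Df_Uw_self hP hs hI w hw] at h1
  simp only [hf, Finset.sum_const_zero, mul_zero, zero_sub, neg_sq] at h1
  obtain ⟨h2, h3⟩ := sum_shift f
  have h4 := hT _ h2
  rw [Df_shift hP hs] at h4
  rw [h3]
  have h5 : (∑ y, f y) ^ 2 / Fintype.card X ≤ Qe P w * Df P f f := by
    rw [div_le_iff₀ hn]; linarith
  linarith

lemma unif_energy [Nonempty X] {P : Matrix X X ℝ} (hP : IsStoch P) (hs : ∀ x y, P x y = P y x)
    (hI : Irred P) (T : ℝ) (hT0 : 0 ≤ T)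
    (hT : ∀ f : X → ℝ, ∑ x, f x = 0 → ∑ x, f x ^ 2 ≤ T * Df P f f)
    (A : Finset X) (hA : A.Nonempty) :
    Qe P (fun x => if x ∈ A then (A.card : ℝ)⁻¹ else 0) ≤ T * Fintype.card X / A.card := by
  have hn : (0 : ℝ) < Fintype.card X := by exact_mod_cast Fintype.card_pos
  have hsA : (0 : ℝ) < A.card := by exact_mod_cast hA.card_pos
  set w : X → ℝ := fun x => if x ∈ A then (A.card : ℝ)⁻¹ else 0 with hwdef
  have hw : ∑ x, w x = 1 := by
    simp only [hwdef, Finset.sum_ite_mem, Finset.univ_inter, Finset.sum_const, nsmul_eq_mul]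
    field_simp
  have hw2 : ∑ x, w x ^ 2 = (A.card : ℝ)⁻¹ := by
    simp only [hwdef, ite_pow, ne_eq, OfNat.ofNat_ne_zero, not_false_eq_true, zero_pow,
      Finset.sum_ite_mem, Finset.univ_inter, Finset.sum_const, nsmul_eq_mul]
    field_simp
  set u := Uw P w
  have hD := Df_Uw hP hs hI w hw u
  obtain ⟨h2, h3⟩ := sum_shift u
  set m := (∑ y, u y) / (Fintype.card X : ℝ) with hm
  have h4 := hT _ h2
  rw [Df_shift hP hs] at h4
  have h5 : Df P u u = ∑ x, (u x - m) * (Fintype.card X * w x - 1) := by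
    rw [hD]
    have : ∀ x, (u x - m) * (Fintype.card X * w x - 1) =
      Fintype.card X * (u x * w x) - u x - (m * (Fintype.card X * w x) - m) := by intro x; ring
    simp only [this, Finset.sum_sub_distrib, ← Finset.mul_sum, hw, Finset.sum_const,
      Finset.card_univ, nsmul_eq_mul]
    ring
  have h6 := Finset.sum_mul_sq_le_sq_mul_sq Finset.univ (fun x => u x - m)
    (fun x => Fintype.card X * w x - 1)
  rw [← h5] at h6
  have h7 : ∑ x, ((Fintype.card X : ℝ) * w x - 1) ^ 2 ≤ (Fintype.card X : ℝ) ^ 2 / A.card := by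
    have : ∀ x, ((Fintype.card X : ℝ) * w x - 1) ^ 2 =
      (Fintype.card X : ℝ) ^ 2 * w x ^ 2 - 2 * Fintype.card X * w x + 1 := by intro x; ring
    simp only [this, Finset.sum_add_distrib, Finset.sum_sub_distrib, ← Finset.mul_sum, hw, hw2,
      Finset.sum_const, Finset.card_univ, nsmul_eq_mul]
    rw [div_eq_mul_inv]
    linarith
  have h8 := Df_nonneg hP hs u
  have h9 : (Df P u u) ^ 2 ≤ (T * Df P u u) * ((Fintype.card X : ℝ) ^ 2 / A.card) :=
    h6.trans (mul_le_mul h4 h7 (Finset.sum_nonneg fun x _ => sq_nonneg _) (by positivity))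
  have h10 : Df P u u ≤ T * ((Fintype.card X : ℝ) ^ 2 / A.card) := by
    rcases h8.eq_or_lt with h | h
    · have : 0 ≤ T * ((Fintype.card X : ℝ) ^ 2 / A.card) := mul_nonneg hT0 (div_nonneg (sq_nonneg _) hsA.le)
      linarith
    · by_contra hc
      push Not at hc
      nlinarith [mul_lt_mul_of_pos_right hc h]
  have h11 : Df P u u = Fintype.card X * Qe P w := Df_Uw_self hP hs hI w hw
  rw [h11] at h10
  have : (Fintype.card X : ℝ) * Qe P w ≤ Fintype.card X * (T * Fintype.card X / A.card) := by
    calc _ ≤ _ := h10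
      _ = _ := by ring
  exact le_of_mul_le_mul_left this hn

/-! ### Averaging over tuples -/

lemma sum_tuple_one {α : Type} [Fintype α] (F : α → ℝ) (k : ℕ) :
    (Fintype.card α : ℝ) * ∑ b : Fin k → α, ∑ i, F (b i) =
      k * (Fintype.card α : ℝ) ^ k * ∑ a, F a := by
  induction k with
  | zero => simp
  | succ k ih =>
    rw [← (Fin.consEquiv (fun _ : Fin (k + 1) => α)).sum_comp, Fintype.sum_prod_type]
    simp only [Fin.consEquiv, Equiv.coe_fn_mk, Fin.sum_univ_succ, Fin.cons_zero, Fin.cons_succ,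
      Finset.sum_add_distrib, Finset.sum_const, Finset.card_univ, nsmul_eq_mul, Fintype.card_fun,
      Fintype.card_fin, ← Finset.mul_sum]
    rw [mul_add, ih]
    push_cast
    ring

lemma sum_tuple_two {α : Type} [Fintype α] (G : α → α → ℝ) (k : ℕ) :
    (Fintype.card α : ℝ) ^ 2 * ∑ b : Fin k → α, ∑ i, ∑ j, G (b i) (b j) =
      (Fintype.card α : ℝ) ^ k * (k * Fintype.card α * ∑ a, G a a +
        k * (k - 1) * ∑ a, ∑ b, G a b) := by
  induction k with
  | zero => simp
  | succ k ih =>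
    rw [← (Fin.consEquiv (fun _ : Fin (k + 1) => α)).sum_comp, Fintype.sum_prod_type]
    simp only [Fin.consEquiv, Equiv.coe_fn_mk, Fin.sum_univ_succ, Fin.cons_zero, Fin.cons_succ,
      Finset.sum_add_distrib, Finset.sum_const, Finset.card_univ, nsmul_eq_mul, Fintype.card_fun,
      Fintype.card_fin, ← Finset.mul_sum]
    have h1 : ∑ a, ∑ b : Fin k → α, ∑ j, G a (b j) = ∑ b : Fin k → α, ∑ j, (∑ a, G a (b j)) := by
      rw [Finset.sum_comm]
      exact Finset.sum_congr rfl fun b _ => Finset.sum_comm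
    have h2 : ∑ a, ∑ b : Fin k → α, ∑ j, G (b j) a = ∑ b : Fin k → α, ∑ j, (∑ a, G (b j) a) := by
      rw [Finset.sum_comm]
      exact Finset.sum_congr rfl fun b _ => Finset.sum_comm
    have h3 := sum_tuple_one (fun x => ∑ a, G a x) k
    have h4 := sum_tuple_one (fun x => ∑ a, G x a) k
    have h5 : ∑ x, ∑ a, G a x = ∑ x, ∑ a, G x a := Finset.sum_comm
    rw [h1, h2]
    rw [h5] at h3
    push_cast
    linear_combination (Fintype.card α : ℝ) * ih + (Fintype.card α : ℝ) * h3
      + (Fintype.card α : ℝ) * h4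

lemma exists_tuple {α : Type} [Fintype α] [Nonempty α] (G : α → α → ℝ) (k : ℕ) (d e : ℝ)
    (hd : ∀ a, G a a ≤ d) (he : ∑ a, ∑ b, G a b ≤ (Fintype.card α : ℝ) ^ 2 * e) (hk : 1 ≤ k) :
    ∃ b : Fin k → α, ∑ i, ∑ j, G (b i) (b j) ≤ k * d + k * (k - 1) * e := by
  by_contra hc
  push Not at hc
  have hn : (0 : ℝ) < Fintype.card α := by exact_mod_cast Fintype.card_pos
  have hk' : (1 : ℝ) ≤ k := by exact_mod_cast hk
  have h1 : ∑ b : Fin k → α, (k * d + k * (k - 1) * e) <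
      ∑ b : Fin k → α, ∑ i, ∑ j, G (b i) (b j) :=
    Finset.sum_lt_sum_of_nonempty Finset.univ_nonempty fun b _ => hc b
  rw [Finset.sum_const, Finset.card_univ, Fintype.card_fun, Fintype.card_fin, nsmul_eq_mul] at h1
  have h2 := sum_tuple_two G k
  have h3 : ∑ a, G a a ≤ Fintype.card α * d := by
    refine (Finset.sum_le_sum fun a _ => hd a).trans ?_
    simp
  have h4 := mul_lt_mul_of_pos_left h1 (pow_pos hn 2)
  rw [h2] at h4
  push_cast at h4
  have h5 : k * (Fintype.card α : ℝ) * ∑ a, G a a + k * (k - 1) * ∑ a, ∑ b, G a b ≤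
     k * (Fintype.card α : ℝ) * (Fintype.card α * d)
      + k * (k - 1) * ((Fintype.card α : ℝ) ^ 2 * e) := by
    apply add_le_add
    · exact mul_le_mul_of_nonneg_left h3 (by positivity)
    · exact mul_le_mul_of_nonneg_left he (mul_nonneg (by linarith) (by linarith))
  have h6 := mul_le_mul_of_nonneg_left h5 (pow_pos hn k).le
  linarith

/-! ### Selection of a well separated tuple -/

lemma Qe_tuple (P : Matrix X X ℝ) {k : ℕ} (b : Fin k → X) :
    Qe P (fun x => ∑ i, if b i = x then (k : ℝ)⁻¹ else 0) =
      (k : ℝ)⁻¹ ^ 2 * ∑ i, ∑ j, Gk P (b i) (b j) := by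
  unfold Qe
  have h1 : ∀ y z, (∑ i, if b i = y then (k : ℝ)⁻¹ else 0) * (∑ i, if b i = z then (k : ℝ)⁻¹ else 0)
      * Gk P y z = ∑ i, ∑ j, (if b i = y then (k : ℝ)⁻¹ else 0) *
        ((if b j = z then (k : ℝ)⁻¹ else 0) * Gk P y z) := by
    intro y z
    rw [Finset.sum_mul_sum, Finset.sum_mul]
    refine Finset.sum_congr rfl fun i _ => ?_
    rw [Finset.sum_mul]
    exact Finset.sum_congr rfl fun j _ => by ring
  simp only [h1]
  have h2 : ∀ y, ∑ z, ∑ i, ∑ j, (if b i = y then (k : ℝ)⁻¹ else 0) *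
        ((if b j = z then (k : ℝ)⁻¹ else 0) * Gk P y z) =
      ∑ i, ∑ j, (if b i = y then (k : ℝ)⁻¹ else 0) * ((k : ℝ)⁻¹ * Gk P y (b j)) := by
    intro y
    rw [Finset.sum_comm]
    refine Finset.sum_congr rfl fun i _ => ?_
    rw [Finset.sum_comm]
    refine Finset.sum_congr rfl fun j _ => ?_
    rw [← Finset.mul_sum]
    congr 1
    simp [ite_mul]
  simp only [h2]
  rw [Finset.sum_comm, Finset.mul_sum]
  refine Finset.sum_congr rfl fun i _ => ?_
  rw [Finset.sum_comm, Finset.mul_sum]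
  refine Finset.sum_congr rfl fun j _ => ?_
  simp only [ite_mul, zero_mul, Finset.sum_ite_eq, Finset.mem_univ, if_true]
  ring

lemma Qe_unif (P : Matrix X X ℝ) (A : Finset X) :
    Qe P (fun x => if x ∈ A then (A.card : ℝ)⁻¹ else 0) =
      (A.card : ℝ)⁻¹ ^ 2 * ∑ a : A, ∑ b : A, Gk P a b := by
  unfold Qe
  have h1 : ∀ y z, (if y ∈ A then (A.card : ℝ)⁻¹ else 0) * (if z ∈ A then (A.card : ℝ)⁻¹ else 0)
      * Gk P y z = if y ∈ A then (if z ∈ A then (A.card : ℝ)⁻¹ ^ 2 * Gk P y z else 0) else 0 := by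
    intro y z
    split_ifs <;> ring
  simp only [h1, Finset.mul_sum]
  rw [Finset.sum_coe_sort A (fun a => ∑ b : A, (A.card : ℝ)⁻¹ ^ 2 * Gk P a b)]
  rw [← Finset.univ_inter A, ← Finset.sum_ite_mem, Finset.univ_inter]
  refine Finset.sum_congr rfl fun y _ => ?_
  split_ifs
  · rw [Finset.sum_coe_sort A (fun b => (A.card : ℝ)⁻¹ ^ 2 * Gk P y b), Finset.sum_ite_mem,
      Finset.univ_inter]
  · simp

lemma select [Nonempty X] {P : Matrix X X ℝ} (hP : IsStoch P) (hs : ∀ x y, P x y = P y x)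
    (hI : Irred P) (T c₁ : ℝ) (hT1 : 1 ≤ T)
    (hT : ∀ f : X → ℝ, ∑ x, f x = 0 → ∑ x, f x ^ 2 ≤ T * Df P f f)
    (hc : 1 ≤ c₁) (hH : maxHit P ≤ c₁ * Fintype.card X)
    (A : Finset X) (hA : A.Nonempty) (k : ℕ) (hk : k = ⌊(A.card : ℝ) / T⌋₊ + 1) :
    ∃ b : Fin k → X, (∀ i, b i ∈ A) ∧ ∀ f : X → ℝ, (∀ i, f (b i) = 0) →
      ∑ x, f x ^ 2 ≤ (5 * c₁ * Fintype.card X / k) * Df P f f := by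
  have hn : (1 : ℝ) ≤ Fintype.card X := by exact_mod_cast Fintype.card_pos
  have hsA : (1 : ℝ) ≤ A.card := by exact_mod_cast hA.card_pos
  have hsn : (A.card : ℝ) ≤ Fintype.card X := by exact_mod_cast Finset.card_le_univ A
  have hT0 : 0 < T := by linarith
  have hk1 : 1 ≤ k := by omega
  have hk1' : (1 : ℝ) ≤ k := by exact_mod_cast hk1
  by_cases hlt : (A.card : ℝ) < T
  · have hk' : k = 1 := by
      rw [hk, Nat.floor_eq_zero.2]
      rw [div_lt_one hT0]; exact hlt
    subst hk'
    obtain ⟨z, hz⟩ := hA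
    refine ⟨fun _ => z, fun _ => hz, fun f hf => ?_⟩
    have := point_bound hP hs hI z (2 * c₁ * Fintype.card X) (fun x => by
      have := hitExp_le P x z
      nlinarith) f (hf 0)
    refine this.trans (mul_le_mul_of_nonneg_right ?_ (Df_nonneg hP hs f))
    push_cast
    rw [div_one]
    nlinarith
  · push Not at hlt
    have hAne : Nonempty A := hA.coe_sort
    have hcA : (Fintype.card A : ℝ) = A.card := by simp
    obtain ⟨b, hb⟩ := exists_tuple (α := A) (fun y z => Gk P y z) k (c₁ * Fintype.card X)
      (T * Fintype.card X / A.card)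
      (by
        intro a
        simp only [Gk, hitExp_self hP hs hI, sub_zero]
        rw [div_le_iff₀ (by linarith)]
        calc ∑ x, hitExp P x a ≤ ∑ x : X, c₁ * Fintype.card X :=
              Finset.sum_le_sum fun x _ => (hitExp_le P x a).trans hH
          _ = _ := by rw [Finset.sum_const, Finset.card_univ, nsmul_eq_mul]; ring)
      (by
        have h := unif_energy hP hs hI T hT0.le hT A hA
        rw [Qe_unif] at h
        rw [hcA]
        have h2 := mul_le_mul_of_nonneg_left h (sq_nonneg (A.card : ℝ))
        rw [← mul_assoc, ← mul_pow, mul_inv_cancel₀ (by linarith), one_pow, one_mul] at h2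
        exact h2) hk1
    refine ⟨fun i => b i, fun i => (b i).2, fun f hf => ?_⟩
    have hw := weight_bound hP hs hI T hT
      (fun x => ∑ i, if ((b i : X)) = x then (k : ℝ)⁻¹ else 0)
      (by
        rw [Finset.sum_comm]
        simp only [Finset.sum_ite_eq, Finset.mem_univ, if_true, Finset.sum_const, Finset.card_univ,
          Fintype.card_fin, nsmul_eq_mul]
        exact mul_inv_cancel₀ (by linarith)) f
      (by
        intro x
        rw [Finset.mul_sum]
        refine Finset.sum_eq_zero fun i _ => ?_
        split_ifs with h
        · rw [← h, hf i, zero_mul]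
        · rw [mul_zero])
    refine hw.trans (mul_le_mul_of_nonneg_right ?_ (Df_nonneg hP hs f))
    rw [Qe_tuple P (fun i => (b i : X))]
    have h1 : (k : ℝ)⁻¹ ^ 2 * ∑ i, ∑ j, Gk P (b i) (b j) ≤ (k : ℝ)⁻¹ ^ 2 *
      (k * (c₁ * Fintype.card X) + k * (k - 1) * (T * Fintype.card X / A.card)) :=
      mul_le_mul_of_nonneg_left hb (by positivity)
    have h2 : (k : ℝ)⁻¹ ^ 2 *
      (k * (c₁ * Fintype.card X) + k * (k - 1) * (T * Fintype.card X / A.card)) =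
      (c₁ * Fintype.card X + (k - 1) * (T * Fintype.card X / A.card)) / k := by
      field_simp
    rw [h2] at h1
    have hkm : ((k : ℝ) - 1) * T ≤ A.card := by
      have : (k : ℝ) - 1 = (⌊(A.card : ℝ) / T⌋₊ : ℝ) := by rw [hk]; push_cast; ring
      rw [this]
      have := Nat.floor_le (a := (A.card : ℝ) / T) (by positivity)
      rwa [le_div_iff₀ hT0] at this
    have h3 : ((k : ℝ) - 1) * (T * Fintype.card X / A.card) ≤ Fintype.card X := by
      rw [← mul_div_assoc, div_le_iff₀ (by linarith), ← mul_assoc]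
      nlinarith
    have h4 : T ≤ 2 * Fintype.card X / k := by
      rw [le_div_iff₀ (by linarith)]
      nlinarith
    have h5 : (c₁ * Fintype.card X + (k - 1) * (T * Fintype.card X / A.card)) / k ≤
        (2 * c₁ * Fintype.card X) / k := by
      apply div_le_div_of_nonneg_right _ (by linarith)
      nlinarith
    have h6 : 2 * (Fintype.card X : ℝ) / k + (2 * c₁ * Fintype.card X) / k ≤
        5 * c₁ * Fintype.card X / k := by
      rw [← add_div]
      apply div_le_div_of_nonneg_right _ (by linarith)
      nlinarith
    linarith

/-! ### Spectral part -/

lemma isHerm {P : Matrix X X ℝ} (hs : ∀ x y, P x y = P y x) : P.IsHermitian := by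
  ext x y; simp [Matrix.conjTranspose_apply, hs x y]

lemma spec_expand {P : Matrix X X ℝ} (hs : ∀ x y, P x y = P y x) (f : X → ℝ) :
    let e : X → X → ℝ := fun i x => (isHerm hs).eigenvectorBasis i x
    let c : X → ℝ := fun i => ∑ x, f x * e i x
    (∑ x, f x ^ 2 = ∑ i, c i ^ 2) ∧
    (∑ x, f x * (∑ y, P x y * f y) = ∑ i, (isHerm hs).eigenvalues i * c i ^ 2) ∧
    (∑ x, (∑ y, P x y * f y) ^ 2 = ∑ i, ((isHerm hs).eigenvalues i) ^ 2 * c i ^ 2) := by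
  intro e c
  have hpars : ∀ g h : X → ℝ, ∑ x, g x * h x =
      ∑ i, (∑ x, g x * e i x) * (∑ x, h x * e i x) := by
    intro g h
    have := (isHerm hs).eigenvectorBasis.sum_inner_mul_inner (WithLp.toLp 2 g) (WithLp.toLp 2 h)
    simp only [PiLp.inner_apply, RCLike.inner_apply, conj_trivial] at this
    rw [show ∑ x, g x * h x = ∑ x, h x * g x from Finset.sum_congr rfl fun x _ => mul_comm _ _,
      ← this]
    refine Finset.sum_congr rfl fun i _ => ?_
    congr 1
    exact Finset.sum_congr rfl fun x _ => mul_comm _ _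
  have heig : ∀ i x, ∑ y, P x y * e i y = (isHerm hs).eigenvalues i * e i x := by
    intro i x
    have := congrFun ((isHerm hs).mulVec_eigenvectorBasis i) x
    simpa [Matrix.mulVec, dotProduct] using this
  have hPc : ∀ i, ∑ x, (∑ y, P x y * f y) * e i x = (isHerm hs).eigenvalues i * c i := by
    intro i
    have h1 : ∑ x, (∑ y, P x y * f y) * e i x = ∑ y, f y * ∑ x, P y x * e i x := by
      simp only [Finset.sum_mul, Finset.mul_sum]
      rw [Finset.sum_comm]
      refine Finset.sum_congr rfl fun y _ => Finset.sum_congr rfl fun x _ => ?_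
      rw [hs y x]; ring
    rw [h1]
    simp only [heig, c, Finset.mul_sum]
    exact Finset.sum_congr rfl fun y _ => by ring
  refine ⟨?_, ?_, ?_⟩
  · have := hpars f f
    simp only [← pow_two] at this
    exact this
  · rw [hpars]
    refine Finset.sum_congr rfl fun i _ => ?_
    rw [hPc]
    simp only [c]; ring
  · have := hpars (fun x => ∑ y, P x y * f y) (fun x => ∑ y, P x y * f y)
    simp only [← pow_two] at this
    rw [this]
    refine Finset.sum_congr rfl fun i _ => ?_
    rw [hPc, mul_pow]

lemma eig_fun {P : Matrix X X ℝ} (hs : ∀ x y, P x y = P y x) (i : X) :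
    let e : X → ℝ := fun x => (isHerm hs).eigenvectorBasis i x
    (∑ x, e x ^ 2 = 1) ∧ Df P e e = 1 - (isHerm hs).eigenvalues i := by
  intro e
  have heig : ∀ x, ∑ y, P x y * e y = (isHerm hs).eigenvalues i * e x := by
    intro x
    have := congrFun ((isHerm hs).mulVec_eigenvectorBasis i) x
    simpa [Matrix.mulVec, dotProduct] using this
  have h1 : ∑ x, e x ^ 2 = 1 := by
    have := (isHerm hs).eigenvectorBasis.orthonormal.1 i
    rw [EuclideanSpace.norm_eq, Real.sqrt_eq_one] at this
    simpa using this
  refine ⟨h1, ?_⟩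
  unfold Df
  simp only [heig]
  have : ∀ x, e x * (e x - (isHerm hs).eigenvalues i * e x) =
    (1 - (isHerm hs).eigenvalues i) * e x ^ 2 := by intro x; ring
  simp only [this, ← Finset.mul_sum, h1, mul_one]

lemma eig_le {P : Matrix X X ℝ} (hP : IsStoch P) (hs : ∀ x y, P x y = P y x) (i : X) :
    |(isHerm hs).eigenvalues i| ≤ 1 := by
  obtain ⟨h1, h2⟩ := eig_fun hs i
  have h3 := Df_nonneg hP hs (fun x => (isHerm hs).eigenvectorBasis i x)
  have h4 := Df_self_add hP hs (fun x => (isHerm hs).eigenvectorBasis i x)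
  have h5 : 0 ≤ ∑ x, ∑ y, P x y * ((isHerm hs).eigenvectorBasis i x +
      (isHerm hs).eigenvectorBasis i y) ^ 2 :=
    Finset.sum_nonneg fun x _ => Finset.sum_nonneg fun y _ => mul_nonneg (hP.1 x y) (sq_nonneg _)
  rw [← h4, h1, h2] at h5
  rw [h2] at h3
  rw [abs_le]
  constructor <;> linarith

lemma mem_spec {P : Matrix X X ℝ} (hs : ∀ x y, P x y = P y x) (l : ℝ) :
    l ∈ spectrum ℝ P ↔ ∃ i, (isHerm hs).eigenvalues i = l := by
  rw [(isHerm hs).spectrum_real_eq_range_eigenvalues]; rfl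

lemma le_Trel {P : Matrix X X ℝ} (hs : ∀ x y, P x y = P y x) (i : X)
    (hi : (isHerm hs).eigenvalues i ≠ 1) : 1 / (1 - |(isHerm hs).eigenvalues i|) ≤ Trel P := by
  unfold Trel
  apply le_csSup
  · apply Set.Finite.bddAbove
    apply Set.Finite.image
    apply Set.Finite.subset (s := Set.range (isHerm hs).eigenvalues) (Set.finite_range _)
    rw [(isHerm hs).spectrum_real_eq_range_eigenvalues]
    exact Set.sdiff_subset
  · exact ⟨_, ⟨(mem_spec hs _).2 ⟨i, rfl⟩, hi⟩, rfl⟩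

lemma poincare {P : Matrix X X ℝ} (hP : IsStoch P) (hs : ∀ x y, P x y = P y x)
    (hI : Irred P) (T : ℝ)
    (hT : ∀ i, (isHerm hs).eigenvalues i ≠ 1 → 1 ≤ T * (1 - (isHerm hs).eigenvalues i))
    (f : X → ℝ) (hf : ∑ x, f x = 0) : ∑ x, f x ^ 2 ≤ T * Df P f f := by
  obtain ⟨h1, h2, -⟩ := spec_expand hs f
  beta_reduce at h1 h2
  have h3 : Df P f f = ∑ x, f x ^ 2 - ∑ x, f x * (∑ y, P x y * f y) := by
    unfold Df
    rw [← Finset.sum_sub_distrib]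
    exact Finset.sum_congr rfl fun x _ => by ring
  rw [h3, h2, h1, ← Finset.sum_sub_distrib, Finset.mul_sum]
  refine Finset.sum_le_sum fun i _ => ?_
  by_cases hi : (isHerm hs).eigenvalues i = 1
  · have hc : ∑ x, f x * (isHerm hs).eigenvectorBasis i x = 0 := by
      have h0 := (eig_fun hs i).2
      rw [hi, sub_self] at h0
      have hconst := const_of_Df_zero hP hs hI _ h0
      have : ∀ x, f x * (isHerm hs).eigenvectorBasis i x
        = f x * (isHerm hs).eigenvectorBasis i i := fun x => by rw [hconst x i]
      simp only [this, ← Finset.sum_mul, hf, zero_mul]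
    rw [hc]; simp
  · have := mul_le_mul_of_nonneg_right (hT i hi)
      (sq_nonneg (∑ x, f x * (isHerm hs).eigenvectorBasis i x))
    linarith

/-- Dichotomy: either `T_rel` controls the one-sided gap, or `P² = 1`. -/
lemma dichotomy {P : Matrix X X ℝ} (hP : IsStoch P) (hs : ∀ x y, P x y = P y x) (hI : Irred P) :
    (1 ≤ Trel P ∧ ∀ f : X → ℝ, ∑ x, f x = 0 → ∑ x, f x ^ 2 ≤ Trel P * Df P f f) ∨
      P * P = 1 := by
  by_cases h : ∀ i, (isHerm hs).eigenvalues i ^ 2 = 1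
  · right
    have h1 : ∀ x, (P * P) x x = 1 := by
      intro x
      obtain ⟨h1, -, h3⟩ := spec_expand hs (fun y => if y = x then 1 else 0)
      simp only [h, one_mul] at h3
      rw [← h1] at h3
      simp only [mul_ite, mul_one, mul_zero, Finset.sum_ite_eq', Finset.mem_univ, if_true, ite_pow,
        one_pow, ne_eq, OfNat.ofNat_ne_zero, not_false_eq_true, zero_pow] at h3
      rw [Matrix.mul_apply, ← h3]
      refine Finset.sum_congr rfl fun y _ => ?_
      rw [hs x y, pow_two]
    have hnn : ∀ x y, 0 ≤ (P * P) x y := fun x y => by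
      rw [Matrix.mul_apply]; exact Finset.sum_nonneg fun z _ => mul_nonneg (hP.1 _ _) (hP.1 _ _)
    have hrow : ∀ x, ∑ y, (P * P) x y = 1 := by
      intro x
      simp only [Matrix.mul_apply]
      rw [Finset.sum_comm]
      simp only [← Finset.mul_sum, hP.2, mul_one]
    ext x y
    by_cases hxy : x = y
    · subst hxy; rw [h1]; simp
    · rw [Matrix.one_apply_ne hxy]
      have h2 := hrow x
      rw [← Finset.add_sum_erase _ _ (Finset.mem_univ x), h1] at h2
      have h3 : ∑ z ∈ Finset.univ.erase x, (P * P) x z = 0 := by linarith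
      rw [Finset.sum_eq_zero_iff_of_nonneg (fun z _ => hnn x z)] at h3
      exact h3 y (Finset.mem_erase.2 ⟨fun h => hxy h.symm, Finset.mem_univ _⟩)
  · left
    push Not at h
    obtain ⟨i, hi⟩ := h
    have hlt : ∀ j, (isHerm hs).eigenvalues j ^ 2 ≠ 1 → |(isHerm hs).eigenvalues j| < 1 := by
      intro j hj
      refine lt_of_le_of_ne (eig_le hP hs j) fun h => hj ?_
      rw [← sq_abs, h, one_pow]
    have hT1 : 1 ≤ Trel P := by
      refine le_trans ?_ (le_Trel hs i (fun h => hi (by rw [h, one_pow])))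
      rw [le_div_iff₀ (by linarith [hlt i hi])]
      linarith [abs_nonneg ((isHerm hs).eigenvalues i)]
    refine ⟨hT1, poincare hP hs hI _ fun j hj => ?_⟩
    by_cases hj2 : (isHerm hs).eigenvalues j ^ 2 = 1
    · have : (isHerm hs).eigenvalues j = -1 := by
        rcases (by simpa using hj2 : (isHerm hs).eigenvalues j = 1 ∨ (isHerm hs).eigenvalues j = -1) with h | h
        · exact absurd h hj
        · exact h
      rw [this]; linarith
    · have h1 := le_Trel hs j hj
      have h2 := hlt j hj2
      rw [div_le_iff₀ (by linarith)] at h1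
      have h3 := le_abs_self ((isHerm hs).eigenvalues j)
      nlinarith

/-! ### Final assembly -/

lemma Trel_nonneg {P : Matrix X X ℝ} (hP : IsStoch P) (hs : ∀ x y, P x y = P y x) :
    0 ≤ Trel P := by
  unfold Trel
  apply Real.sSup_nonneg
  rintro _ ⟨l, ⟨hl, -⟩, rfl⟩
  obtain ⟨i, rfl⟩ := (mem_spec hs l).1 hl
  have := eig_le hP hs i
  apply div_nonneg zero_le_one
  linarith

lemma pathProb_nonneg {P : Matrix X X ℝ} (hP : IsStoch P) {μ : X → ℝ} (hμ : ∀ x, 0 ≤ μ x)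
    {n : ℕ} (ω : Fin (n + 1) → X) : 0 ≤ pathProb P μ ω :=
  mul_nonneg (hμ _) (Finset.prod_nonneg fun _ _ => hP.1 _ _)

lemma pathProb_sum {P : Matrix X X ℝ} (hP : IsStoch P) {μ : X → ℝ} (hμ : ∑ x, μ x = 1)
    (n : ℕ) : ∑ ω : Fin (n + 1) → X, pathProb P μ ω = 1 := by
  have h := prPath_avoid P ∅ n μ
  have h1 : ∀ n x, surv P ∅ n x = 1 := by
    intro n
    induction n with
    | zero => intro x; simp [surv]
    | succ n ih => intro x; simp [surv, ih, hP.2]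
  simpa [prPath, h1, hμ] using h

/-- The degenerate case `P² = 1`. -/
lemma degenerate [Nonempty X] {P : Matrix X X ℝ} (hP : IsStoch P) (hI : Irred P)
    (hs : ∀ x y, P x y = P y x)
    (hPP : P * P = 1) {μ : X → ℝ} (hμ : ∑ x, μ x = 1) (θ : ℝ) (t : ℕ)
    (ht : Fintype.card X = 1 ∨ 1 ≤ t) :
    expPath P μ t (fun ω => θ ^ (unvisited ω).card) = 1 := by
  have hpow : ∀ m : ℕ, P ^ m = 1 ∨ P ^ m = P := by
    intro m
    induction m with
    | zero => left; simp
    | succ m ih =>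
      rcases ih with h | h
      · right; rw [pow_succ, h, one_mul]
      · left; rw [pow_succ, h, hPP]
  have key : ∀ ω : Fin (t + 1) → X, pathProb P μ ω ≠ 0 → unvisited ω = ∅ := by
    intro ω hω
    rw [Finset.eq_empty_iff_forall_notMem]
    intro x hx
    simp only [unvisited, Finset.mem_filter, Finset.mem_univ, true_and] at hx
    rcases ht with h1 | h1
    · exact hx 0 (Fintype.card_le_one_iff.1 h1.le _ _)
    · obtain ⟨t, rfl⟩ : ∃ t', t = t' + 1 := ⟨t - 1, by omega⟩
      have h2 : P (ω 0) (ω 1) ≠ 0 := by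
        have h3 := right_ne_zero_of_mul hω
        rw [Finset.prod_ne_zero_iff] at h3
        simpa using h3 0 (Finset.mem_univ _)
      have h3 : 0 < P x (ω 0) := by
        obtain ⟨m, hm⟩ := hI x (ω 0)
        rcases hpow m with h | h
        · rw [h, Matrix.one_apply_ne (fun h => hx 0 h.symm)] at hm
          exact absurd hm (lt_irrefl _)
        · rwa [h] at hm
      have h4 : 0 < P (ω 0) (ω 1) := lt_of_le_of_ne (hP.1 _ _) h2.symm
      have h5 : 0 < (P * P) x (ω 1) := by
        rw [Matrix.mul_apply]
        exact Finset.sum_pos' (fun z _ => mul_nonneg (hP.1 _ _) (hP.1 _ _))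
          ⟨ω 0, Finset.mem_univ _, mul_pos h3 h4⟩
      rw [hPP, Matrix.one_apply_ne (fun h => hx 1 h.symm)] at h5
      exact lt_irrefl _ h5
  unfold expPath
  rw [← pathProb_sum hP hμ t]
  refine Finset.sum_congr rfl fun ω _ => ?_
  by_cases h : pathProb P μ ω = 0
  · rw [h, zero_mul]
  · beta_reduce; rw [key ω h]; simp

lemma exp_bound [Nonempty X] {P : Matrix X X ℝ} (hP : IsStoch P) (hs : ∀ x y, P x y = P y x)
    (hI : Irred P) {μ : X → ℝ} (hμ0 : ∀ x, 0 ≤ μ x) (hμ : ∑ x, μ x = 1)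
    (T c₁ θ : ℝ) (hT1 : 1 ≤ T)
    (hT : ∀ f : X → ℝ, ∑ x, f x = 0 → ∑ x, f x ^ 2 ≤ T * Df P f f)
    (hc : 1 ≤ c₁) (hH : maxHit P ≤ c₁ * Fintype.card X) (hθ : 2 ≤ θ) (t : ℕ) :
    expPath P μ t (fun ω => θ ^ (unvisited ω).card) ≤
      1 + ∑ s ∈ Finset.Icc 1 (Fintype.card X), θ ^ s *
        ((Fintype.card X : ℝ) ^ (⌊(s : ℝ) / T⌋₊ + 1) * (Fintype.card X *
          Real.exp (-(t * ((⌊(s : ℝ) / T⌋₊ + 1 : ℕ) / (5 * c₁ * Fintype.card X)))))) := by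
  have hn : (1 : ℝ) ≤ Fintype.card X := by exact_mod_cast Fintype.card_pos
  let k : ℕ → ℕ := fun s => ⌊(s : ℝ) / T⌋₊ + 1
  let Good : (s : ℕ) → Finset (Fin (k s) → X) := fun s => Finset.univ.filter fun b =>
    ∀ f : X → ℝ, (∀ i, f (b i) = 0) →
      ∑ x, f x ^ 2 ≤ (5 * c₁ * Fintype.card X / (k s : ℕ)) * Df P f f
  have hpt : ∀ ω : Fin (t + 1) → X, θ ^ (unvisited ω).card ≤ 1 +
      ∑ s ∈ Finset.Icc 1 (Fintype.card X), θ ^ s * ∑ b ∈ Good s,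
        if (∀ i, ω i ∉ Finset.univ.image b) then (1 : ℝ) else 0 := by
    intro ω
    have hnn : ∀ s ∈ Finset.Icc 1 (Fintype.card X), 0 ≤ θ ^ s * ∑ b ∈ Good s,
        if (∀ i, ω i ∉ Finset.univ.image b) then (1 : ℝ) else 0 := fun s _ =>
      mul_nonneg (by positivity) (Finset.sum_nonneg fun b _ => by split_ifs <;> norm_num)
    rcases (unvisited ω).eq_empty_or_nonempty with h | h
    · rw [h]; simp only [Finset.card_empty, pow_zero]
      linarith [Finset.sum_nonneg hnn]
    · obtain ⟨b, hb1, hb2⟩ := select hP hs hI T c₁ hT1 hT hc hH (unvisited ω) h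
        (k (unvisited ω).card) rfl
      have h1 := Finset.single_le_sum hnn (Finset.mem_Icc.2 ⟨h.card_pos, Finset.card_le_univ _⟩)
      have h2 : (1 : ℝ) ≤ ∑ b ∈ Good (unvisited ω).card,
          if (∀ i, ω i ∉ Finset.univ.image b) then (1 : ℝ) else 0 := by
        have h3 := Finset.single_le_sum (s := Good (unvisited ω).card)
          (f := fun b => if (∀ i, ω i ∉ Finset.univ.image b) then (1 : ℝ) else 0)
          (fun b _ => by split_ifs <;> norm_num) (a := b)
          (Finset.mem_filter.2 ⟨Finset.mem_univ _, hb2⟩)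
        refine le_trans ?_ h3
        have : ∀ i, ω i ∉ Finset.univ.image b := by
          intro i hi
          obtain ⟨j, -, hj⟩ := Finset.mem_image.1 hi
          have := hb1 j
          simp only [unvisited, Finset.mem_filter, Finset.mem_univ, true_and] at this
          exact this i hj.symm
        simp only [this]
        simp
      have h3 : θ ^ (unvisited ω).card * 1 ≤ θ ^ (unvisited ω).card * ∑ b ∈ Good (unvisited ω).card,
          if (∀ i, ω i ∉ Finset.univ.image b) then (1 : ℝ) else 0 :=
        mul_le_mul_of_nonneg_left h2 (by positivity)
      linarith
  have hpr : ∀ s, ∀ b ∈ Good s, ∑ ω : Fin (t + 1) → X, pathProb P μ ω *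
      (if (∀ i, ω i ∉ Finset.univ.image b) then (1 : ℝ) else 0) ≤
      Fintype.card X * Real.exp (-(t * ((k s : ℕ) / (5 * c₁ * Fintype.card X)))) := by
    intro s b hb
    have hb := (Finset.mem_filter.1 hb).2
    have hk : (0 : ℝ) < (k s : ℕ) := by simp only [k]; positivity
    have h1 : ∑ ω : Fin (t + 1) → X, pathProb P μ ω *
      (if (∀ i, ω i ∉ Finset.univ.image b) then (1 : ℝ) else 0) =
        prPath P μ t (fun ω => ∀ i, ω i ∉ Finset.univ.image b) := by
      unfold prPath
      refine Finset.sum_congr rfl fun ω _ => ?_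
      split_ifs <;> simp
    rw [h1, prPath_avoid]
    have h2 := surv_le hP hs (Finset.univ.image b) ((k s : ℕ) / (5 * c₁ * Fintype.card X))
      (by
        intro f hf
        have := hb f (fun i => hf _ (Finset.mem_image_of_mem _ (Finset.mem_univ i)))
        have h5 : (0 : ℝ) < 5 * c₁ * Fintype.card X := by positivity
        rw [div_mul_eq_mul_div, le_div_iff₀ hk] at this
        rw [div_mul_eq_mul_div, div_le_iff₀ h5]
        linarith) t
    calc _ ≤ ∑ x, μ x * (Fintype.card X *
          Real.exp (-(t * ((k s : ℕ) / (5 * c₁ * Fintype.card X))))) :=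
          Finset.sum_le_sum fun x _ => mul_le_mul_of_nonneg_left (h2 x) (hμ0 x)
      _ = _ := by rw [← Finset.sum_mul, hμ, one_mul]
  have hcard : ∀ s, ((Good s).card : ℝ) ≤ (Fintype.card X : ℝ) ^ (k s) := by
    intro s
    have := Finset.card_le_univ (Good s)
    rw [Fintype.card_fun, Fintype.card_fin] at this
    exact_mod_cast this
  unfold expPath
  calc ∑ ω : Fin (t + 1) → X, pathProb P μ ω * θ ^ (unvisited ω).card
      ≤ ∑ ω : Fin (t + 1) → X, pathProb P μ ω * (1 +
      ∑ s ∈ Finset.Icc 1 (Fintype.card X), θ ^ s * ∑ b ∈ Good s,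
        if (∀ i, ω i ∉ Finset.univ.image b) then (1 : ℝ) else 0) :=
        Finset.sum_le_sum fun ω _ => mul_le_mul_of_nonneg_left (hpt ω) (pathProb_nonneg hP hμ0 ω)
    _ = 1 + ∑ s ∈ Finset.Icc 1 (Fintype.card X), θ ^ s * ∑ b ∈ Good s,
        ∑ ω : Fin (t + 1) → X, pathProb P μ ω *
          (if (∀ i, ω i ∉ Finset.univ.image b) then (1 : ℝ) else 0) := by
        simp only [mul_add, mul_one, Finset.sum_add_distrib]
        rw [pathProb_sum hP hμ]
        congr 1
        simp only [Finset.mul_sum]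
        rw [Finset.sum_comm]
        refine Finset.sum_congr rfl fun s _ => ?_
        rw [Finset.sum_comm]
        refine Finset.sum_congr rfl fun b _ => Finset.sum_congr rfl fun ω _ => by ring
    _ ≤ _ := by
        refine add_le_add le_rfl (Finset.sum_le_sum fun s _ => ?_)
        refine mul_le_mul_of_nonneg_left ?_ (by positivity)
        refine (Finset.sum_le_sum (hpr s)).trans ?_
        rw [Finset.sum_const, nsmul_eq_mul]
        exact mul_le_mul_of_nonneg_right (hcard s) (by positivity)

lemma term_bound (n T c₁ θ a b t : ℝ) (s k : ℕ) (hn : 1 ≤ n) (hT : 1 ≤ T) (hc : 1 ≤ c₁)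
    (hθ : 2 ≤ θ) (ha : 0 < a) (hb : 0 < b) (hk : 1 ≤ k) (hks : (s : ℝ) ≤ k * T)
    (ht : 2 * 20 * c₁ ^ 2 * (1 + a) * n * T * Real.log θ +
              20 * c₁ ^ 2 * (1 + b) * n * Real.log n ≤ t) :
    θ ^ s * (n ^ k * (n * Real.exp (-(t * (k / (5 * c₁ * n)))))) ≤
      (1 / 8) ^ s * (θ ^ (-(1 + 2 * a) * T) * n ^ (-b)) := by
  have hθ0 : 0 < θ := by linarith
  have hn0 : 0 < n := by linarith
  have hL : 0 ≤ Real.log θ := Real.log_nonneg (by linarith)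
  have hN : 0 ≤ Real.log n := Real.log_nonneg hn
  have hk' : (1 : ℝ) ≤ k := by exact_mod_cast hk
  set L := Real.log θ
  set N := Real.log n
  have e1 : θ ^ s = Real.exp (s * L) := by
    rw [Real.exp_nat_mul, Real.exp_log hθ0]
  have e2 : n ^ k = Real.exp (k * N) := by
    rw [Real.exp_nat_mul, Real.exp_log hn0]
  have e3 : n * Real.exp (-(t * (k / (5 * c₁ * n)))) =
      Real.exp (N + -(t * (k / (5 * c₁ * n)))) := by
    rw [Real.exp_add, Real.exp_log hn0]
  have e4 : θ ^ (-(1 + 2 * a) * T) = Real.exp (L * (-(1 + 2 * a) * T)) :=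
    Real.rpow_def_of_pos hθ0 _
  have e5 : n ^ (-b) = Real.exp (N * (-b)) := Real.rpow_def_of_pos hn0 _
  have e6 : Real.exp (-(3 * s * L)) ≤ (1 / 8 : ℝ) ^ s := by
    have : Real.exp (-(3 * s * L)) = (1 / θ ^ 3) ^ s := by
      rw [show -(3 * s * L) = s * (-(3 * L)) by ring, Real.exp_nat_mul, Real.exp_neg,
        show (3 : ℝ) * L = (3 : ℕ) * L by norm_num, Real.exp_nat_mul, Real.exp_log hθ0, one_div]
    rw [this]
    apply pow_le_pow_left₀ (by positivity)
    apply one_div_le_one_div_of_le (by norm_num)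
    have := pow_le_pow_left₀ (by norm_num : (0 : ℝ) ≤ 2) hθ 3
    norm_num at this ⊢
    exact this
  refine le_trans ?_ (mul_le_mul_of_nonneg_right e6 (by positivity))
  rw [e1, e2, e3, e4, e5, ← Real.exp_add, ← Real.exp_add, ← Real.exp_add, ← Real.exp_add]
  apply Real.exp_le_exp.2
  have h1 : 4 * k * (2 * (1 + a) * T * L + (1 + b) * N) ≤ t * (k / (5 * c₁ * n)) := by
    rw [← mul_div_assoc, le_div_iff₀ (by positivity)]
    have h2 : 20 * c₁ * n * (2 * (1 + a) * T * L + (1 + b) * N) ≤ t := by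
      refine le_trans ?_ ht
      have : 0 ≤ n * (2 * (1 + a) * T * L + (1 + b) * N) := by positivity
      nlinarith [mul_le_mul_of_nonneg_right hc (mul_nonneg (by linarith : 0 ≤ 20 * c₁) this)]
    nlinarith
  have h3 : N ≤ k * N := by nlinarith
  have h4 : s * L ≤ k * T * L := mul_le_mul_of_nonneg_right hks hL
  have h5 : T * L ≤ k * T * L := by nlinarith [mul_nonneg (by linarith : 0 ≤ T) hL]
  have h6 : 0 ≤ a * (k * T * L - T * L) := mul_nonneg ha.le (by linarith)
  have h7 : 0 ≤ b * (k * N - N) := mul_nonneg hb.le (by linarith)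
  have h8 : 0 ≤ a * (T * L) := by positivity
  have h9 : 0 ≤ T * L := by positivity
  have h10 : 0 ≤ b * N := by positivity
  have h11 : 0 ≤ a * (k * T * L) := by positivity
  nlinarith

lemma geom_bound (n : ℕ) : ∑ s ∈ Finset.Icc 1 n, (1 / 8 : ℝ) ^ s ≤ 1 / 7 := by
  have : ∑ s ∈ Finset.Icc 1 n, (1 / 8 : ℝ) ^ s = 1 / 7 - (1 / 8) ^ n / 7 := by
    induction n with
    | zero => simp
    | succ n ih => rw [Finset.sum_Icc_succ_top (by omega), ih]; ring
  rw [this]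
  have : (0 : ℝ) ≤ (1 / 8) ^ n / 7 := by positivity
  linarith

lemma core [Nonempty X] {P : Matrix X X ℝ} (hP : IsStoch P) (hs : ∀ x y, P x y = P y x)
    (hI : Irred P) {μ : X → ℝ} (hμ0 : ∀ x, 0 ≤ μ x) (hμ : ∑ x, μ x = 1)
    (c₁ θ : ℝ) (hc : 1 ≤ c₁) (hH : maxHit P ≤ c₁ * Fintype.card X) (hθ : 2 ≤ θ)
    (a b : ℝ) (ha : 0 < a) (hb : 0 < b) (t : ℕ)
    (ht : 2 * 20 * c₁ ^ 2 * (1 + a) * (Fintype.card X : ℝ) * Trel P * Real.log θ +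
      20 * c₁ ^ 2 * (1 + b) * (Fintype.card X : ℝ) * Real.log (Fintype.card X) ≤ (t : ℝ)) :
    expPath P μ t (fun ω => θ ^ (unvisited ω).card) = 1 ∨
    expPath P μ t (fun ω => θ ^ (unvisited ω).card) ≤
      1 + 1 / 7 * (θ ^ (-(1 + 2 * a) * Trel P) * (Fintype.card X : ℝ) ^ (-b)) := by
  have hn : (1 : ℝ) ≤ Fintype.card X := by exact_mod_cast Fintype.card_pos
  by_cases hn1 : Fintype.card X = 1
  · left
    have hsub : Subsingleton X := Fintype.card_le_one_iff_subsingleton.1 hn1.le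
    refine degenerate hP hI hs ?_ hμ θ t (Or.inl hn1)
    ext x y
    have h1 : ∀ x, P x x = 1 := by
      intro x
      have := hP.2 x
      rwa [Fintype.sum_subsingleton _ x] at this
    rw [Subsingleton.elim y x, Matrix.mul_apply, Fintype.sum_subsingleton _ x, h1]
    simp
  rcases dichotomy hP hs hI with ⟨hT1, hT⟩ | hPP
  · right
    refine (exp_bound hP hs hI hμ0 hμ (Trel P) c₁ θ hT1 hT hc hH hθ t).trans ?_
    have hδ : 0 ≤ θ ^ (-(1 + 2 * a) * Trel P) * (Fintype.card X : ℝ) ^ (-b) := by positivity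
    refine add_le_add le_rfl ?_
    refine le_trans (Finset.sum_le_sum fun s _ => ?_)
      (le_trans (Finset.sum_mul _ _ _).ge (mul_le_mul_of_nonneg_right (geom_bound _) hδ))
    refine term_bound _ _ _ _ _ _ _ _ _ hn hT1 hc hθ ha hb (by omega) ?_ ht
    have := Nat.lt_floor_add_one ((s : ℝ) / Trel P)
    rw [div_lt_iff₀ (by linarith)] at this
    push_cast
    exact this.le
  · left
    refine degenerate hP hI hs hPP hμ θ t (Or.inr ?_)
    have h0 := Trel_nonneg hP hs
    have hn2 : (2 : ℝ) ≤ Fintype.card X := by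
      have := Fintype.card_pos (α := X)
      exact_mod_cast (by omega : 2 ≤ Fintype.card X)
    have hL : 0 ≤ Real.log θ := Real.log_nonneg (by linarith)
    have hN : 0 < Real.log (Fintype.card X) := Real.log_pos (by linarith)
    have h1 : 0 ≤ 2 * 20 * c₁ ^ 2 * (1 + a) * (Fintype.card X : ℝ) * Trel P * Real.log θ := by
      positivity
    have h2 : 0 < 20 * c₁ ^ 2 * (1 + b) * (Fintype.card X : ℝ) * Real.log (Fintype.card X) := by
      positivity
    have h3 : (0 : ℝ) < t := by linarith
    exact_mod_cast h3

/-- The key theorem: bound on `E[θ^{|S_t|}]` for a reversible chain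
with uniform stationary distribution, initial distribution `μ ≥ π/2`, and maximal
hitting time `H ≤ c₁ |X|`. -/
theorem key_theorem :
    ∃ c : ℝ, 0 < c ∧
      ∀ (X : Type) [Fintype X] [DecidableEq X] [Nonempty X]
        (P : Matrix X X ℝ) (μ : X → ℝ) (c₁ θ : ℝ),
        IsStoch P → (∀ x y, P x y = P y x) → Irred P →
        (∀ x, 0 ≤ μ x) → (∑ x, μ x) = 1 →
        (∀ x, (Fintype.card X : ℝ)⁻¹ / 2 ≤ μ x) →
        1 ≤ c₁ → maxHit P ≤ c₁ * (Fintype.card X : ℝ) →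
        2 ≤ θ →
        (∀ a b : ℝ, 0 < a → 0 < b → ∀ t : ℕ,
            2 * c * c₁ ^ 2 * (1 + a) * (Fintype.card X : ℝ) * Trel P * Real.log θ +
              c * c₁ ^ 2 * (1 + b) * (Fintype.card X : ℝ) * Real.log (Fintype.card X)
                ≤ (t : ℝ) →
            expPath P μ t (fun ω => θ ^ (unvisited ω).card) ≤
              1 + (θ ^ (-(1 + 2 * a) * Trel P) * (Fintype.card X : ℝ) ^ (-b)) +
                (θ ^ (-(1 + 2 * a) * Trel P) * (Fintype.card X : ℝ) ^ (-b)) ^ 2 +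
                (θ ^ (-(1 + 2 * a) * Trel P) * (Fintype.card X : ℝ) ^ (-b)) ^ 9) ∧
        (∀ t : ℕ,
            2 * c * c₁ ^ 2 * (1 + 1) * (Fintype.card X : ℝ) * Trel P * Real.log θ +
              c * c₁ ^ 2 * (1 + 1) * (Fintype.card X : ℝ) * Real.log (Fintype.card X)
                ≤ (t : ℝ) →
            expPath P μ t (fun ω => θ ^ (unvisited ω).card) < 1.21) := by
  refine ⟨20, by norm_num, ?_⟩
  intro X _ _ _ P μ c₁ θ hP hs hI hμ0 hμ _ hc hH hθ
  have hn : (1 : ℝ) ≤ Fintype.card X := by exact_mod_cast Fintype.card_pos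
  have hθ0 : 0 < θ := by linarith
  refine ⟨fun a b ha hb t ht => ?_, fun t ht => ?_⟩
  · have hδ : 0 ≤ θ ^ (-(1 + 2 * a) * Trel P) * (Fintype.card X : ℝ) ^ (-b) := by positivity
    have h2 := pow_nonneg hδ 2
    have h9 := pow_nonneg hδ 9
    rcases core hP hs hI hμ0 hμ c₁ θ hc hH hθ a b ha hb t ht with h | h
    · rw [h]; linarith
    · linarith
  · rcases core hP hs hI hμ0 hμ c₁ θ hc hH hθ 1 1 one_pos one_pos t ht with h | h
    · rw [h]; norm_num
    · have h1 : θ ^ (-(1 + 2 * 1) * Trel P) ≤ 1 := by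
        apply Real.rpow_le_one_of_one_le_of_nonpos (by linarith)
        have := Trel_nonneg hP hs
        linarith
      have h2 : (Fintype.card X : ℝ) ^ (-1 : ℝ) ≤ 1 := by
        apply Real.rpow_le_one_of_one_le_of_nonpos hn (by norm_num)
      have h3 : θ ^ (-(1 + 2 * 1) * Trel P) * (Fintype.card X : ℝ) ^ (-1 : ℝ) ≤ 1 * 1 :=
        mul_le_mul h1 h2 (by positivity) zero_le_one
      norm_num at h h3 ⊢
      linarith

end Paper
end

section
/- Let P be a Markov chain on a finite state space X with uniform stationary distribution and maximal hitting time H. Then min_{x∈X} Pr_x{ T⁺_x ≥ |X|/2 } ≥ |X|/(2H), where T⁺_x is the first return time to x. -/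
open Finset
open scoped Classical

namespace Paper

variable {X : Type} [Fintype X] [DecidableEq X]

lemma pp_zero (P : Matrix X X ℝ) (z : X) (A : ℕ → X → Prop) :
    prPath P (delta z) 0 (fun ω => ∀ i : Fin (0+1), A i (ω i)) = if A 0 z then 1 else 0 := by
  unfold prPath pathProb delta
  rw [← (Equiv.funUnique (Fin 1) X).symm.sum_comp]
  rw [Finset.sum_eq_single z]
  · simp
  · intro b _ hb
    simp [hb]
  · simp

lemma pp_succ (P : Matrix X X ℝ) (z : X) (n : ℕ) (A : ℕ → X → Prop) :
    prPath P (delta z) (n+1) (fun ω => ∀ i : Fin (n+1+1), A i (ω i)) =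
      if A 0 z then ∑ y, P z y * prPath P (delta y) n (fun ω => ∀ i : Fin (n+1), A (i+1) (ω i))
      else 0 := by
  have h1 : ∀ ω : Fin (n+1) → X, ∑ y, P z y * pathProb P (delta y) ω =
      P z (ω 0) * ∏ i : Fin n, P (ω i.castSucc) (ω i.succ) := by
    intro ω
    unfold pathProb delta
    rw [Finset.sum_eq_single (ω 0)]
    · simp
    · intro b _ hb
      simp [Ne.symm hb]
    · simp
  unfold prPath
  rw [← (Fin.consEquiv (fun _ : Fin (n+1+1) => X)).sum_comp, Fintype.sum_prod_type,
    Finset.sum_eq_single z]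
  · simp only [Fin.consEquiv, Equiv.coe_fn_mk, Fin.forall_fin_succ (n := n+1), Fin.cons_zero,
      Fin.cons_succ, Fin.val_zero, Fin.val_succ]
    by_cases h0 : A 0 z
    · simp only [h0, true_and, if_true, Finset.mul_sum]
      rw [Finset.sum_comm]
      refine Finset.sum_congr rfl fun ω _ => ?_
      by_cases hE : ∀ i : Fin (n+1), A (i+1) (ω i)
      · simp only [if_pos hE]
        rw [h1]
        unfold pathProb delta
        rw [Fin.prod_univ_succ]
        simp
      · simp only [if_neg hE]
        simp
    · simp [h0]
  · intro b _ hb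
    apply Finset.sum_eq_zero
    intro ω _
    simp [Fin.consEquiv, pathProb, delta, hb]
  · simp

/-- probability of avoiding `x` at times `0..j-1`. -/
noncomputable def vv (P : Matrix X X ℝ) (x : X) : ℕ → X → ℝ
  | 0, _ => 1
  | j+1, z => if z = x then 0 else ∑ y, P z y * vv P x j y

lemma pp_true (P : Matrix X X ℝ) (hP : IsStoch P) (n : ℕ) : ∀ (z : X) (A : ℕ → X → Prop),
    (∀ i w, A i w) → prPath P (delta z) n (fun ω => ∀ i : Fin (n+1), A i (ω i)) = 1 := by
  induction n with
  | zero => intro z A hA; rw [pp_zero]; simp [hA]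
  | succ n ih =>
    intro z A hA
    rw [pp_succ, if_pos (hA _ _), ← hP.2 z]
    refine Finset.sum_congr rfl fun y _ => ?_
    rw [ih y (fun i w => A (i+1) w) (fun i w => hA _ _), mul_one]

lemma pp_vv (P : Matrix X X ℝ) (hP : IsStoch P) (x : X) (j : ℕ) : ∀ (n : ℕ) (z : X)
    (A : ℕ → X → Prop), (∀ i w, A i w ↔ (i < j → w ≠ x)) → j ≤ n + 1 →
    prPath P (delta z) n (fun ω => ∀ i : Fin (n+1), A i (ω i)) = vv P x j z := by
  induction j with
  | zero =>
    intro n z A hA _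
    rw [pp_true P hP n z A (fun i w => by simp [hA]), vv]
  | succ j ih =>
    intro n z A hA hn
    rcases n with _ | n
    · have : j = 0 := by omega
      subst this
      rw [pp_zero]
      have hs := hP.2 z
      simp only [hA, vv]
      by_cases h : z = x <;> simp [h]
      simp [hs]
    · rw [pp_succ, vv]
      by_cases h : z = x
      · rw [if_neg, if_pos h]
        simp [hA, h]
      · rw [if_pos, if_neg h]
        · refine Finset.sum_congr rfl fun y _ => ?_
          rw [ih n y (fun i w => A (i+1) w) (fun i w => by rw [hA]; simp) (by omega)]
        · simp [hA, h]

lemma hit_eq (P : Matrix X X ℝ) (hP : IsStoch P) (z x : X) :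
    hitExp P z x = (∑' n : ℕ, ENNReal.ofReal (vv P x (n+1) z)).toReal := by
  unfold hitExp
  congr 2
  ext n
  congr 1
  convert pp_vv P hP x (n+1) n z (fun i w => i < n+1 → w ≠ x) (fun i w => Iff.rfl) le_rfl using 2
  ext ω
  exact ⟨fun h i _ => h i, fun h i => h i i.2⟩

lemma ret_eq (P : Matrix X X ℝ) (hP : IsStoch P) (x : X) (s : ℝ) (hs : 0 < s) :
    prReturnGE P x s = ∑ y, P x y * vv P x (⌈s⌉₊ - 1) y := by
  unfold prReturnGE
  obtain ⟨m, hm⟩ : ∃ m, ⌈s⌉₊ = m + 1 := ⟨⌈s⌉₊ - 1, by have := Nat.ceil_pos.2 hs; omega⟩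
  rw [hm]
  rw [pp_succ P x m (fun i w => 1 ≤ i → (i:ℝ) < s → w ≠ x), if_pos (by simp)]
  refine Finset.sum_congr rfl fun y _ => ?_
  rw [Nat.add_sub_cancel]
  rw [pp_vv P hP x m m y (fun i w => 1 ≤ i+1 → ((i+1:ℕ):ℝ) < s → w ≠ x) ?_ (by omega)]
  intro i w
  rw [← Nat.lt_ceil, hm]
  simp

lemma vv_nonneg (P : Matrix X X ℝ) (hP : IsStoch P) (x : X) (j : ℕ) : ∀ z, 0 ≤ vv P x j z := by
  induction j with
  | zero => intro z; simp [vv]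
  | succ j ih =>
    intro z; rw [vv]; split_ifs
    · exact le_rfl
    · exact Finset.sum_nonneg fun y _ => mul_nonneg (hP.1 _ _) (ih y)

lemma vv_anti_step (P : Matrix X X ℝ) (hP : IsStoch P) (x : X) (j : ℕ) :
    ∀ z, vv P x (j+1) z ≤ vv P x j z := by
  induction j with
  | zero =>
    intro z; rw [vv]; simp only [vv]; split_ifs
    · simp
    · simp [hP.2 z]
  | succ j ih =>
    intro z; rw [vv, vv]; split_ifs
    · exact le_rfl
    · exact Finset.sum_le_sum fun y _ => mul_le_mul_of_nonneg_left (ih y) (hP.1 _ _)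

lemma vv_anti (P : Matrix X X ℝ) (hP : IsStoch P) (x z : X) : Antitone (fun j => vv P x j z) :=
  antitone_nat_of_succ_le fun j => vv_anti_step P hP x j z

lemma vv_le_one (P : Matrix X X ℝ) (hP : IsStoch P) (x z : X) (j : ℕ) : vv P x j z ≤ 1 :=
  vv_anti P hP x z (Nat.zero_le j)

lemma vv_lt (P : Matrix X X ℝ) (hP : IsStoch P) (hirr : Irred P) (x z : X) :
    ∃ n, vv P x n z < 1 := by
  by_contra! hcon
  have key : ∀ n z, (∀ j, 1 ≤ vv P x j z) → ¬ 0 < (P ^ n) z x := by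
    intro n
    induction n with
    | zero =>
      intro z hz h
      have hzx : z = x := by
        by_contra hne
        simp [hne] at h
      have := hz 1
      simp [vv, hzx] at this
      linarith
    | succ n ih =>
      intro z hz h
      rw [pow_succ', Matrix.mul_apply] at h
      obtain ⟨y, -, hy⟩ := Finset.exists_lt_of_sum_lt (s := Finset.univ) (f := fun _ : X => (0:ℝ))
        (by simpa using h)
      have hPy : 0 < P z y := by
        rcases (hP.1 z y).lt_or_eq with h' | h'
        · exact h'
        · simp [← h'] at hy
      have hny : 0 < (P ^ n) y x := by
        by_contra h'
        push Not at h'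
        exact absurd hy (not_lt.2 (mul_nonpos_of_nonneg_of_nonpos hPy.le h'))
      refine ih y (fun j => ?_) hny
      by_contra! hlt
      have h1 := hz (j+1)
      rw [vv] at h1
      split_ifs at h1
      · linarith
      · have : ∑ y, P z y * vv P x j y < ∑ y, P z y :=
          Finset.sum_lt_sum (fun w _ => mul_le_of_le_one_right (hP.1 _ _) (vv_le_one P hP x w j))
            ⟨y, Finset.mem_univ _, mul_lt_of_lt_one_right hPy hlt⟩
        rw [hP.2 z] at this
        linarith
  obtain ⟨n, hn⟩ := hirr z x
  exact key n z hcon hn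

lemma vv_summable (P : Matrix X X ℝ) (hP : IsStoch P) (hirr : Irred P) (x z : X) :
    Summable (fun k => vv P x k z) := by
  haveI : Nonempty X := ⟨x⟩
  choose n hn using vv_lt P hP hirr x
  set M := Finset.univ.sup n
  have hM : ∀ w, vv P x M w < 1 := fun w =>
    (vv_anti P hP x w (Finset.le_sup (Finset.mem_univ w))).trans_lt (hn w)
  obtain ⟨w0, hw0⟩ := Finite.exists_max (vv P x M)
  set c := vv P x M w0
  have hc1 : c < 1 := hM w0
  have hstep : ∀ k w, vv P x (k + M) w ≤ c * vv P x k w := by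
    intro k
    induction k with
    | zero => intro w; simpa [vv] using hw0 w
    | succ k ih =>
      intro w
      rw [show k + 1 + M = (k + M) + 1 by ring, vv, vv]
      split_ifs
      · simp
      · rw [Finset.mul_sum]
        refine Finset.sum_le_sum fun y _ => ?_
        have := mul_le_mul_of_nonneg_left (ih y) (hP.1 w y)
        linarith
  refine summable_of_sum_range_le (c := M / (1 - c)) (fun k => vv_nonneg P hP x k z) fun K => ?_
  rw [le_div_iff₀ (by linarith)]
  have h1 : ∑ k ∈ range K, vv P x k z ≤ ∑ k ∈ range (M + K), vv P x k z :=
    Finset.sum_le_sum_of_subset_of_nonneg (Finset.range_subset_range.2 (by omega))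
      fun k _ _ => vv_nonneg P hP x k z
  rw [Finset.sum_range_add] at h1
  have h2 : ∑ k ∈ range M, vv P x k z ≤ M := by
    have := Finset.sum_le_card_nsmul (range M) (fun k => vv P x k z) 1
      fun k _ => vv_le_one P hP x z k
    simpa using this
  have h3 : ∑ k ∈ range K, vv P x (M + k) z ≤ c * ∑ k ∈ range K, vv P x k z := by
    rw [Finset.mul_sum]
    refine Finset.sum_le_sum fun k _ => ?_
    rw [add_comm M k]
    exact hstep k z
  linarith

lemma hit_tsum (P : Matrix X X ℝ) (hP : IsStoch P) (hirr : Irred P) (x z : X) (K : ℕ) :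
    ∑ k ∈ range K, vv P x (k+1) z ≤ hitExp P z x := by
  have hs : Summable (fun k => vv P x (k+1) z) :=
    (summable_nat_add_iff 1).2 (vv_summable P hP hirr x z)
  rw [hit_eq P hP, ← ENNReal.ofReal_tsum_of_nonneg (fun k => vv_nonneg P hP x _ z) hs,
    ENNReal.toReal_ofReal (tsum_nonneg fun k => vv_nonneg P hP x _ z)]
  exact hs.sum_le_tsum _ fun k _ => vv_nonneg P hP x _ z

lemma hit_le_max (P : Matrix X X ℝ) (z x : X) : hitExp P z x ≤ maxHit P := by
  unfold maxHit
  exact (le_ciSup (f := fun y => hitExp P z y) (Set.finite_range _).bddAbove x).trans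
    (le_ciSup (f := fun z => ⨆ y, hitExp P z y) (Set.finite_range _).bddAbove z)

lemma tail_bound (P : Matrix X X ℝ) (hP : IsStoch P) (hirr : Irred P) (x : X) (K j : ℕ) :
    ∀ z, ∑ k ∈ range K, vv P x (k + (j+1)) z ≤ maxHit P * vv P x (j+1) z := by
  induction j with
  | zero =>
    intro z
    by_cases h : z = x
    · simp [vv, h]
    · have : vv P x (0+1) z = 1 := by simp [vv, h, hP.2 z]
      rw [this, mul_one]
      exact (hit_tsum P hP hirr x z K).trans (hit_le_max P z x)
  | succ j ih =>
    intro z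
    by_cases h : z = x
    · simp [vv, h, ← add_assoc]
    · have e : ∀ i, vv P x (i+1) z = ∑ y, P z y * vv P x i y := fun i => by rw [vv, if_neg h]
      simp only [← add_assoc, e] at ih ⊢
      rw [Finset.sum_comm, Finset.mul_sum]
      refine Finset.sum_le_sum fun y _ => ?_
      rw [← Finset.mul_sum]
      have := mul_le_mul_of_nonneg_left (ih y) (hP.1 z y)
      linarith

lemma kac (P : Matrix X X ℝ) (hu : UnifStationary P) (x : X) (K : ℕ) :
    (Fintype.card X : ℝ) = ∑ y, vv P x K y + ∑ m ∈ range K, ∑ y, P x y * vv P x m y := by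
  induction K with
  | zero => simp [vv]
  | succ K ih =>
    rw [ih, Finset.sum_range_succ]
    have h1 : ∑ y, vv P x K y = ∑ z, ∑ y, P z y * vv P x K y := by
      rw [Finset.sum_comm]
      refine Finset.sum_congr rfl fun y _ => ?_
      rw [← Finset.sum_mul, hu y, one_mul]
    have h2 : ∑ z, ∑ y, P z y * vv P x K y
        = ∑ z, vv P x (K+1) z + ∑ y, P x y * vv P x K y := by
      rw [← Finset.add_sum_erase _ _ (Finset.mem_univ x),
        ← Finset.add_sum_erase _ (fun z => vv P x (K+1) z) (Finset.mem_univ x)]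
      have h3 : vv P x (K+1) x = 0 := by simp [vv]
      have h4 : ∑ z ∈ univ.erase x, vv P x (K+1) z
          = ∑ z ∈ univ.erase x, ∑ y, P z y * vv P x K y := by
        refine Finset.sum_congr rfl fun z hz => ?_
        rw [vv, if_neg (Finset.ne_of_mem_erase hz)]
      rw [h3, h4]; ring
    rw [h1, h2]; ring

lemma main_bound_s4 (P : Matrix X X ℝ) (hP : IsStoch P) (hu : UnifStationary P) (hirr : Irred P)
    (x : X) (j : ℕ) :
    (Fintype.card X : ℝ) ≤ (j + 1 : ℕ) + maxHit P * ∑ y, P x y * vv P x (j+1) y := by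
  have hlim : Filter.Tendsto (fun K => ∑ y, vv P x (j+1+K) y) Filter.atTop (nhds 0) := by
    have : Filter.Tendsto (fun K => ∑ y, vv P x K y) Filter.atTop (nhds (∑ y : X, (0:ℝ))) :=
      tendsto_finsetSum _ fun y _ => (vv_summable P hP hirr x y).tendsto_atTop_zero
    rw [Finset.sum_const_zero] at this
    refine this.comp ?_
    exact Filter.tendsto_atTop_mono (fun K => Nat.le_add_left K (j+1)) Filter.tendsto_id
  have hle : ∀ K, (Fintype.card X : ℝ) - ((j + 1 : ℕ) + maxHit P * ∑ y, P x y * vv P x (j+1) y)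
      ≤ ∑ y, vv P x (j+1+K) y := by
    intro K
    rw [kac P hu x (j+1+K), Finset.sum_range_add]
    have h1 : ∑ m ∈ range (j+1), ∑ y, P x y * vv P x m y ≤ (j+1 : ℕ) := by
      have := Finset.sum_le_card_nsmul (range (j+1)) (fun m => ∑ y, P x y * vv P x m y) 1
        fun m _ => by
          rw [← hP.2 x]
          exact Finset.sum_le_sum fun y _ =>
            mul_le_of_le_one_right (hP.1 _ _) (vv_le_one P hP x y m)
      simpa using this
    have h2 : ∑ m ∈ range K, ∑ y, P x y * vv P x (j+1+m) y
        ≤ maxHit P * ∑ y, P x y * vv P x (j+1) y := by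
      rw [Finset.sum_comm, Finset.mul_sum]
      refine Finset.sum_le_sum fun y _ => ?_
      rw [← Finset.mul_sum]
      have := mul_le_mul_of_nonneg_left (tail_bound P hP hirr x K j y) (hP.1 x y)
      simp only [add_comm _ (j+1)] at this
      linarith
    linarith
  have := ge_of_tendsto' hlim hle
  linarith

theorem return_time_lower_bound
    (X : Type) [Fintype X] [DecidableEq X] [Nonempty X]
    (P : Matrix X X ℝ)
    (hP : IsStoch P) (hu : UnifStationary P) (hirr : Irred P) :
    ∀ x : X,
      (Fintype.card X : ℝ) / (2 * maxHit P) ≤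
        prReturnGE P x ((Fintype.card X : ℝ) / 2) := by
  intro x
  have hN : 0 < Fintype.card X := Fintype.card_pos
  have hN' : (0:ℝ) < Fintype.card X := by exact_mod_cast hN
  have hs : (0:ℝ) < (Fintype.card X : ℝ) / 2 := by positivity
  rw [ret_eq P hP x _ hs]
  set p := ∑ y, P x y * vv P x (⌈(Fintype.card X : ℝ) / 2⌉₊ - 1) y with hp
  have hp0 : 0 ≤ p := Finset.sum_nonneg fun y _ => mul_nonneg (hP.1 _ _) (vv_nonneg P hP x _ y)
  rcases le_or_gt (maxHit P) 0 with hH | hH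
  · exact (div_nonpos_of_nonneg_of_nonpos hN'.le (by linarith)).trans hp0
  rw [div_le_iff₀ (by linarith)]
  have hceil := Nat.ceil_lt_add_one hs.le
  rcases hm : ⌈(Fintype.card X : ℝ) / 2⌉₊ - 1 with _ | j
  · rw [hm] at hp
    have hp1 : p = 1 := by simp [hp, vv, hP.2 x]
    rw [hp1]
    have hc1 : ⌈(Fintype.card X : ℝ) / 2⌉₊ ≤ 1 := by omega
    have hN2 : (Fintype.card X : ℝ) ≤ 2 := by
      have := Nat.ceil_le.1 hc1
      push_cast at this; linarith
    have hmax1 : 1 ≤ maxHit P := by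
      by_cases hex : ∃ y, y ≠ x
      · obtain ⟨y, hy⟩ := hex
        have := (hit_tsum P hP hirr x y 1).trans (hit_le_max P y x)
        simpa [vv, hy, hP.2 y] using this
      · push Not at hex
        exfalso
        have hz : ∀ a b, hitExp P a b = 0 := by
          intro a b
          rw [hit_eq P hP, hex a, hex b]
          simp [vv]
        simp [maxHit, hz] at hH
    linarith
  · rw [hm] at hp
    have h := main_bound_s4 P hP hu hirr x j
    rw [← hp] at h
    have hj : ((j+1 : ℕ):ℝ) < (Fintype.card X : ℝ) / 2 := by
      rw [← Nat.lt_ceil]; omega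
    linarith

end Paper
end
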